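/- Let T be a scalar Calderón–Zygmund operator on ℝ^d with modulus of continuity ω satisfying the Dini condition, let ρ ∈ (2,∞), and assume V_ρ(T_*) is bounded on L^q(ℝ^d) for some q ∈ (1,∞). Define the (global) grand maximal truncated operator M_{V_ρ(T_*)} f(x) := sup over all cubes Q ⊂ ℝ^d containing x of esssup_{ξ∈Q} V_ρ(T_*(f χ_{ℝ^d∖3Q}))(ξ). Then M_{V_ρ(T_*)} is bounded on L^p(ℝ^d) for every p ∈ (1,q] and is of weak type (1,1). -/

import Mathlib

open MeasureTheory Set Filter Classical
open scoped ENNReal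
noncomputable section

abbrev Rd (d : ℕ) := EuclideanSpace ℝ (Fin d)

/-- An axis-parallel (half-open) cube in `ℝ^d`, given by its center and side length. -/
structure Cube (d : ℕ) where
  c : Fin d → ℝ
  l : ℝ
  hl : 0 < l

/-- The underlying (half-open) set of a cube. -/
def Cube.set {d : ℕ} (Q : Cube d) : Set (Rd d) :=
  {y | ∀ i, Q.c i - Q.l / 2 ≤ y i ∧ y i < Q.c i + Q.l / 2}

/-- The (half-open) set `tQ`, the cube concentric with `Q` of side length `t·ℓ(Q)`. -/
def Cube.dilate {d : ℕ} (Q : Cube d) (t : ℝ) : Set (Rd d) :=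
  {y | ∀ i, Q.c i - t * Q.l / 2 ≤ y i ∧ y i < Q.c i + t * Q.l / 2}

/-- The volume `|Q| = ℓ(Q)^d` of a cube, as an extended nonnegative real. -/
def Cube.vol {d : ℕ} (Q : Cube d) : ℝ≥0∞ := ENNReal.ofReal (Q.l ^ d)

/-- `Q` is one of the dyadic subcubes of `Q₀` obtained by repeated subdivision of `Q₀`
into `2^d` congruent subcubes. -/
def IsDyadicSubcube {d : ℕ} (Q₀ Q : Cube d) : Prop :=
  ∃ (k : ℕ) (m : Fin d → ℕ), (∀ i, m i < 2 ^ k) ∧ Q.l = Q₀.l / 2 ^ k ∧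
    ∀ i, Q.c i = Q₀.c i - Q₀.l / 2 + ((m i : ℝ) + 1 / 2) * (Q₀.l / 2 ^ k)
/-- A scalar Calderón–Zygmund operator on `ℝ^d` with Dini modulus of continuity:
a linear operator `T` bounded on `L²(ℝ^d)` associated with a kernel `K` satisfying the
size condition and the `ω`-smoothness condition, where `ω` is increasing, subadditive,
vanishes at `0`, and satisfies the Dini condition `∫₀¹ ω(t) dt/t < ∞`. -/
structure CZO (d : ℕ) where
  K : Rd d → Rd d → ℝ
  measK : Measurable (Function.uncurry K)
  ω : ℝ → ℝ
  Cst : ℝ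
  hCst : 0 < Cst
  ω_mono : MonotoneOn ω (Set.Ici 0)
  ω_zero : ω 0 = 0
  ω_subadd : ∀ s t : ℝ, 0 ≤ s → 0 ≤ t → ω (s + t) ≤ ω s + ω t
  dini : IntegrableOn (fun t => ω t / t) (Set.Ioo (0 : ℝ) 1)
  size : ∀ x y : Rd d, x ≠ y → |K x y| ≤ Cst / dist x y ^ d
  smooth : ∀ x x' y : Rd d, x ≠ y → dist x x' ≤ dist x y / 2 →
    |K x y - K x' y| + |K y x - K y x'| ≤ Cst * ω (dist x x' / dist x y) / dist x y ^ d
  T : Lp ℝ 2 (volume : Measure (Rd d)) →L[ℝ] Lp ℝ 2 (volume : Measure (Rd d))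
  assoc : ∀ f : Lp ℝ 2 (volume : Measure (Rd d)),
    ∀ᵐ x ∂(volume : Measure (Rd d)), x ∉ tsupport (f : Rd d → ℝ) →
      (T f : Rd d → ℝ) x = ∫ y, K x y * f y

/-- The truncated singular integral `T_ε f(x) = ∫_{|x-y|>ε} K(x,y) f(y) dy`. -/
def CZO.trunc {d : ℕ} (S : CZO d) (ε : ℝ) (f : Rd d → ℝ) (x : Rd d) : ℝ :=
  ∫ y in {y : Rd d | ε < dist x y}, S.K x y * f y

/-- The variation operator `V_ρ(T_* f)(x)`, with values in `[0,∞]`: the supremum over all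
strictly decreasing positive sequences `ε_i → 0` of `(Σ_i |T_{ε_{i+1}}f(x) - T_{ε_i}f(x)|^ρ)^{1/ρ}`. -/
def CZO.var {d : ℕ} (S : CZO d) (ρ : ℝ) (f : Rd d → ℝ) (x : Rd d) : ℝ≥0∞ :=
  ⨆ (ε : ℕ → ℝ) (_ : StrictAnti ε ∧ (∀ i, 0 < ε i) ∧ Tendsto ε atTop (nhds 0)),
    (∑' i : ℕ, ENNReal.ofReal |S.trunc (ε (i + 1)) f x - S.trunc (ε i) f x| ^ ρ) ^ (1 / ρ)

/-- `V_ρ(T_*)` is bounded on `L^q(ℝ^d)`. -/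
def CZO.VarBdd {d : ℕ} (S : CZO d) (ρ q : ℝ) : Prop :=
  ∃ A : ℝ, 0 < A ∧ ∀ f : Rd d → ℝ, Measurable f →
    ∫⁻ x, S.var ρ f x ^ q ∂volume ≤ ENNReal.ofReal A * ∫⁻ x, ENNReal.ofReal |f x| ^ q ∂volume

/-- The weak `(1,1)` operator (quasi-)norm `‖V_ρ(T_*)‖_{L¹ → L^{1,∞}}`. -/
def CZO.weak11Norm {d : ℕ} (S : CZO d) (ρ : ℝ) : ℝ≥0∞ :=
  sInf {A : ℝ≥0∞ | ∀ f : Rd d → ℝ, Measurable f → ∀ t : ℝ, 0 < t →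
    ENNReal.ofReal t * volume {x | ENNReal.ofReal t < S.var ρ f x} ≤
      A * ∫⁻ x, ENNReal.ofReal |f x| ∂volume}

/-- The local grand maximal truncated operator `M_{V_ρ(T_*),Q₀}`. -/
def CZO.grandMaxLoc {d : ℕ} (S : CZO d) (ρ : ℝ) (Q₀ : Cube d) (f : Rd d → ℝ) (x : Rd d) : ℝ≥0∞ :=
  if x ∈ Q₀.set then
    ⨆ (Q : Cube d) (_ : x ∈ Q.set ∧ Q.set ⊆ Q₀.set),
      essSup (fun ξ => S.var ρ ((Q₀.dilate 3 \ Q.dilate 3).indicator f) ξ)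
        (volume.restrict Q.set)
  else 0

/-- The (global) grand maximal truncated operator `M_{V_ρ(T_*)}`. -/
def CZO.grandMax {d : ℕ} (S : CZO d) (ρ : ℝ) (f : Rd d → ℝ) (x : Rd d) : ℝ≥0∞ :=
  ⨆ (Q : Cube d) (_ : x ∈ Q.set),
    essSup (fun ξ => S.var ρ (((Q.dilate 3)ᶜ).indicator f) ξ) (volume.restrict Q.set)

/-- The Hardy–Littlewood maximal operator over cubes, with values in `[0,∞]`. -/
def maxCube {d : ℕ} (f : Rd d → ℝ) (x : Rd d) : ℝ≥0∞ :=
  ⨆ (Q : Cube d) (_ : x ∈ Q.set), Q.vol⁻¹ * ∫⁻ y in Q.set, ENNReal.ofReal |f y|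

/-- The average `⟨|f|⟩_{3Q} = (1/|3Q|) ∫_{3Q} |f|`. -/
def avg3 {d : ℕ} (Q : Cube d) (f : Rd d → ℝ) : ℝ :=
  (∫ y in Q.dilate 3, |f y|) / (3 * Q.l) ^ d
/-- The Euclidean norm of a vector in `ℝ^n`. -/
def enorm' {n : ℕ} (v : Fin n → ℝ) : ℝ := Real.sqrt (∑ i, v i ^ 2)

/-- The operator norm (with respect to Euclidean norms) of an `n × n` real matrix. -/
def matOpNorm {n : ℕ} (A : Matrix (Fin n) (Fin n) ℝ) : ℝ :=
  sSup ((fun v => enorm' (A.mulVec v)) '' {v | enorm' v ≤ 1})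

/-- The spectral power `A^s` of a symmetric matrix `A = U D Uᵗ`, defined as `U D^s Uᵗ`
(junk value `A` if `A` is not symmetric). -/
def Matrix.rpowH {n : ℕ} (A : Matrix (Fin n) (Fin n) ℝ) (s : ℝ) : Matrix (Fin n) (Fin n) ℝ :=
  if h : A.IsHermitian then
    (h.eigenvectorUnitary : Matrix (Fin n) (Fin n) ℝ) *
      Matrix.diagonal (fun i => h.eigenvalues i ^ s) *
      star (h.eigenvectorUnitary : Matrix (Fin n) (Fin n) ℝ)
  else A

/-- A matrix weight on `ℝ^d`: a measurable function with a.e. symmetric positive definite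
values whose operator norm is locally integrable. -/
structure MatrixWeight (d n : ℕ) where
  W : Rd d → Matrix (Fin n) (Fin n) ℝ
  meas : ∀ i j, Measurable fun x => W x i j
  pd : ∀ᵐ x : Rd d, (W x).PosDef
  locInt : LocallyIntegrable (fun x => matOpNorm (W x)) (volume : Measure (Rd d))

/-- The matrix `A_p` characteristic `[W]_{A_p}`. -/
def MatrixWeight.apConst {d n : ℕ} (W : MatrixWeight d n) (p : ℝ) : ℝ≥0∞ :=
  ⨆ Q : Cube d, Q.vol⁻¹ * ∫⁻ x in Q.set,
    (Q.vol⁻¹ * ∫⁻ t in Q.set,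
        ENNReal.ofReal (matOpNorm ((W.W x).rpowH (1 / p) * (W.W t).rpowH (-(1 / p))))
          ^ (p / (p - 1))) ^ (p - 1)

/-- The norm of `f` in `L^p(W)`. -/
def MatrixWeight.wNorm {d n : ℕ} (W : MatrixWeight d n) (p : ℝ)
    (f : Rd d → Fin n → ℝ) : ℝ≥0∞ :=
  (∫⁻ x, ENNReal.ofReal (enorm' (((W.W x).rpowH (1 / p)).mulVec (f x))) ^ p) ^ (1 / p)

/-- The Euclidean length `|V_ρ(T_{n,*} f⃗)(x)|` of the componentwise variation vector
(with values in `[0,∞]`). -/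
def CZO.varVecNorm {d : ℕ} (n : ℕ) (S : CZO d) (ρ : ℝ) (f : Rd d → Fin n → ℝ)
    (x : Rd d) : ℝ≥0∞ :=
  (∑ j : Fin n, S.var ρ (fun y => f y j) x ^ (2 : ℝ)) ^ ((1 : ℝ) / 2)

/-- An `η`-sparse family of cubes. -/
def IsSparse {d : ℕ} (η : ℝ) (F : Set (Cube d)) : Prop :=
  ∃ E : Cube d → Set (Rd d),
    (∀ Q ∈ F, E Q ⊆ Q.set ∧ MeasurableSet (E Q) ∧ ENNReal.ofReal η * Q.vol ≤ volume (E Q)) ∧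
    F.PairwiseDisjoint E

/-- The convex body average `⟨⟨f⃗⟩⟩_{tQ}` of a vector-valued function over the cube `tQ`. -/
def convexBodyAvg {d n : ℕ} (f : Rd d → Fin n → ℝ) (Q : Cube d) (t : ℝ) :
    Set (Fin n → ℝ) :=
  {v | ∃ φ : Rd d → ℝ, Measurable φ ∧ (∀ y, |φ y| ≤ 1) ∧
    ∀ j, v j = (∫ y in Q.dilate t, φ y * f y j) / (t * Q.l) ^ d}

/-!
Replacing the essential supremum by a supremum only enlarges the operator. Let `|g| ≤ L`. For two
points of a cube `Q`, the variations of `g χ_{ℝ^d ∖ 3Q}` differ by `O(L)`: the kernels differ by a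
Dini-summable amount, and the points lying in the truncation shell of only one of the two centres
contribute a square-summable sequence, which is where `ρ ≥ 2` enters. As the variation of `g χ_{3Q}`
is `O(L)` on most of `Q` by the `L^q` bound, the grand maximal function of `g` exceeds `(C + κ) L`
only where the Hardy–Littlewood maximal function of the indicator of `{V_ρ g > κ L}` is large.

Split `f` at height `λ` by a Calderón–Zygmund decomposition. The cells of the bad part that lie in a
single shell are treated by cancellation. For those cut by the boundary of a shell, Cauchy–Schwarz
with the weights `√(|ξ - c_j| / r_j)` and `√(r_j / |ξ - c_j|)` gives an `ℓ²` bound, because the cut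
cells fill a thin shell. With the previous estimate for the good part this yields
`|{M f > C λ}| ≲ λ^{-q} ∫_{|f| ≤ λ} |f|^q + λ^{-1} ∫_{|f| > λ} |f|`, which contains the weak type
`(1,1)` bound and integrates in `λ` to the `L^p` bound for `1 < p < q`. For `p = q` that integral
diverges; there the first term is replaced by `|{V_ρ f > λ}|`, since the variations of `f` and of
its good part differ by `O(λ)` off the exceptional set.
-/

section SequenceNorm

/-- The `ℓ^ρ` norm of a sequence in `[0,∞]`. -/
def seqNorm (ρ : ℝ) (u : ℕ → ℝ≥0∞) : ℝ≥0∞ := (∑' i, u i ^ ρ) ^ (1 / ρ)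

variable {ρ : ℝ} {a u v w : ℕ → ℝ≥0∞}

theorem seqNorm_mono (hρ : 0 ≤ ρ) (h : ∀ i, u i ≤ v i) : seqNorm ρ u ≤ seqNorm ρ v := by
  unfold seqNorm
  gcongr with i
  exact h i

theorem seqNorm_add_le (hρ : 1 ≤ ρ) (u v : ℕ → ℝ≥0∞) :
    seqNorm ρ (fun i => u i + v i) ≤ seqNorm ρ u + seqNorm ρ v := by
  have minkowski := ENNReal.lintegral_Lp_add_le (μ := Measure.count)
    (measurable_of_countable u).aemeasurable (measurable_of_countable v).aemeasurable hρ
  simpa only [seqNorm, lintegral_count, Pi.add_apply] using minkowski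

theorem seqNorm_rpow (hρ : 0 < ρ) (u : ℕ → ℝ≥0∞) : seqNorm ρ u ^ ρ = ∑' i, u i ^ ρ := by
  rw [seqNorm, ← ENNReal.rpow_mul, one_div_mul_cancel hρ.ne', ENNReal.rpow_one]

theorem le_seqNorm (hρ : 0 < ρ) (u : ℕ → ℝ≥0∞) (i : ℕ) : u i ≤ seqNorm ρ u := by
  rw [← ENNReal.rpow_le_rpow_iff hρ, seqNorm_rpow hρ]
  exact ENNReal.le_tsum i

theorem seqNorm_anti {s : ℝ} (hs : 0 < s) (hsρ : s ≤ ρ) (u : ℕ → ℝ≥0∞) :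
    seqNorm ρ u ≤ seqNorm s u := by
  have hρ : 0 < ρ := hs.trans_le hsρ
  have hsub : 0 ≤ ρ - s := sub_nonneg.2 hsρ
  rw [← ENNReal.rpow_le_rpow_iff hρ, seqNorm_rpow hρ]
  calc ∑' i, u i ^ ρ = ∑' i, u i ^ s * u i ^ (ρ - s) := by
        simp only [← ENNReal.rpow_add_of_nonneg _ _ hs.le hsub, add_sub_cancel]
    _ ≤ ∑' i, u i ^ s * seqNorm s u ^ (ρ - s) := by
        gcongr with i
        exact le_seqNorm hs u i
    _ = seqNorm s u ^ ρ := by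
        rw [ENNReal.tsum_mul_right, ← seqNorm_rpow hs,
          ← ENNReal.rpow_add_of_nonneg _ _ hs.le hsub, add_sub_cancel]

theorem seqNorm_le_tsum (hρ : 1 ≤ ρ) (u : ℕ → ℝ≥0∞) : seqNorm ρ u ≤ ∑' i, u i := by
  simpa [seqNorm] using seqNorm_anti one_pos hρ u

theorem seqNorm_le_of_tsum_sq_le (hρ : 2 ≤ ρ) {Y : ℝ≥0∞} (h : ∑' i, u i ^ 2 ≤ Y ^ 2) :
    seqNorm ρ u ≤ Y := by
  refine (seqNorm_anti two_pos hρ u).trans ?_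
  rw [← ENNReal.rpow_le_rpow_iff two_pos, seqNorm_rpow two_pos]
  simpa only [ENNReal.rpow_two] using h

theorem seqNorm_le_of_le_add (hρ : 1 ≤ ρ) (h : ∀ i, u i ≤ v i + w i) :
    seqNorm ρ u ≤ seqNorm ρ v + seqNorm ρ w :=
  (seqNorm_mono (zero_le_one.trans hρ) h).trans (seqNorm_add_le hρ v w)

theorem seqNorm_le_of_le_add_add (hρ : 2 ≤ ρ) {X Y Z : ℝ≥0∞} (h : ∀ i, u i ≤ a i + (v i + w i))
    (ha : ∑' i, a i ≤ X) (hv : ∑' i, v i ^ 2 ≤ Y ^ 2) (hw : ∑' i, w i ^ 2 ≤ Z ^ 2) :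
    seqNorm ρ u ≤ X + (Y + Z) := by
  have hρ₁ : 1 ≤ ρ := one_le_two.trans hρ
  calc seqNorm ρ u ≤ seqNorm ρ a + seqNorm ρ (fun i => v i + w i) := seqNorm_le_of_le_add hρ₁ h
    _ ≤ seqNorm ρ a + (seqNorm ρ v + seqNorm ρ w) := by
        gcongr
        exact seqNorm_add_le hρ₁ v w
    _ ≤ X + (Y + Z) :=
        add_le_add ((seqNorm_le_tsum hρ₁ a).trans ha)
          (add_le_add (seqNorm_le_of_tsum_sq_le hρ hv) (seqNorm_le_of_tsum_sq_le hρ hw))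

end SequenceNorm

section CauchySchwarz

theorem sq_lintegral_le_of_sq_le_mul {α : Type*} [MeasurableSpace α] {μ : Measure α}
    {u a b : α → ℝ≥0∞} (ha : AEMeasurable a μ) (hb : AEMeasurable b μ)
    (h : ∀ᵐ x ∂μ, u x ^ 2 ≤ a x * b x) :
    (∫⁻ x, u x ∂μ) ^ 2 ≤ (∫⁻ x, a x ∂μ) * ∫⁻ x, b x ∂μ := by
  have hu : ∀ᵐ x ∂μ, u x ≤ a x ^ (2⁻¹ : ℝ) * b x ^ (2⁻¹ : ℝ) := by
    filter_upwards [h] with x hx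
    rwa [← ENNReal.mul_rpow_of_nonneg _ _ (by norm_num), ENNReal.le_rpow_inv_iff two_pos,
      ENNReal.rpow_two]
  have holder : ∫⁻ x, u x ∂μ ≤ ((∫⁻ x, a x ∂μ) * ∫⁻ x, b x ∂μ) ^ (2⁻¹ : ℝ) := by
    refine (lintegral_mono_ae hu).trans ((ENNReal.lintegral_mul_le_Lp_mul_Lq μ
      Real.HolderConjugate.two_two (ha.pow_const _) (hb.pow_const _)).trans_eq ?_)
    simp only [← ENNReal.rpow_mul, ENNReal.mul_rpow_of_nonneg _ _ (by norm_num : (0 : ℝ) ≤ 2⁻¹)]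
    norm_num
  rwa [ENNReal.le_rpow_inv_iff two_pos, ENNReal.rpow_two] at holder

theorem sq_tsum_le_of_sq_le_mul {ι : Type*} {u a b : ι → ℝ≥0∞} (h : ∀ i, u i ^ 2 ≤ a i * b i) :
    (∑' i, u i) ^ 2 ≤ (∑' i, a i) * ∑' i, b i := by
  let _ : MeasurableSpace ι := ⊤
  simpa only [lintegral_count] using sq_lintegral_le_of_sq_le_mul (μ := Measure.count)
    measurable_from_top.aemeasurable measurable_from_top.aemeasurable (Eventually.of_forall h)

end CauchySchwarz

section LayerCake

theorem lintegral_Ioi_zero_ofReal_rpow (s : ℝ) :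
    ∫⁻ t in Ioi (0 : ℝ), ENNReal.ofReal (t ^ s) = ∞ := by
  by_contra hfin
  refine not_integrableOn_Ioi_rpow s ⟨by fun_prop, ?_⟩
  rw [hasFiniteIntegral_iff_ofReal]
  · exact Ne.lt_top hfin
  · filter_upwards [ae_restrict_mem measurableSet_Ioi] with t ht
    exact Real.rpow_nonneg (le_of_lt ht) s

theorem setLIntegral_ofReal_lt_rpow {p : ℝ} (hp : 0 < p) (a : ℝ≥0∞) :
    ∫⁻ t in {t | ENNReal.ofReal t < a} ∩ Ioi 0, ENNReal.ofReal (t ^ (p - 1)) =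
      a ^ p / ENNReal.ofReal p := by
  rcases eq_or_ne a ∞ with rfl | ha
  · have hset : {t | ENNReal.ofReal t < ∞} ∩ Ioi 0 = Ioi 0 := by ext; simp
    rw [hset, lintegral_Ioi_zero_ofReal_rpow, ENNReal.top_rpow_of_pos hp,
      ENNReal.top_div_of_ne_top ENNReal.ofReal_ne_top]
  · have hset : {t | ENNReal.ofReal t < a} ∩ Ioi 0 = Ioo 0 a.toReal := by
      ext t
      rw [mem_inter_iff, and_comm]
      exact and_congr_right fun ht => ENNReal.ofReal_lt_iff_lt_toReal (le_of_lt ht) ha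
    have hintegral := integral_rpow (a := 0) (b := a.toReal) (r := p - 1) (Or.inl (by linarith))
    rw [intervalIntegral.integral_of_le ENNReal.toReal_nonneg, sub_add_cancel,
      Real.zero_rpow hp.ne', sub_zero] at hintegral
    have hint : IntegrableOn (fun t : ℝ => t ^ (p - 1)) (Ioc 0 a.toReal) :=
      (intervalIntegrable_iff_integrableOn_Ioc_of_le ENNReal.toReal_nonneg).1
        (intervalIntegral.intervalIntegrable_rpow' (by linarith))
    rw [hset, setLIntegral_congr Ioo_ae_eq_Ioc, ← ofReal_integral_eq_lintegral_ofReal hint,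
      hintegral, ENNReal.ofReal_div_of_pos hp, ← ENNReal.ofReal_rpow_of_nonneg (by simp) hp.le,
      ENNReal.ofReal_toReal ha]
    filter_upwards [ae_restrict_mem measurableSet_Ioc] with t ht using Real.rpow_nonneg ht.1.le _

theorem setLIntegral_le_ofReal_rpow {s : ℝ} (hs : 0 < s) (a : ℝ≥0∞) :
    ∫⁻ t in {t | a ≤ ENNReal.ofReal t} ∩ Ioi 0, ENNReal.ofReal (t ^ (-s - 1)) =
      a ^ (-s) / ENNReal.ofReal s := by
  rcases eq_or_ne a ∞ with rfl | ha
  · simp [hs, ENNReal.top_rpow_of_neg]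
  rcases eq_or_ne a 0 with rfl | ha₀
  · simp only [zero_le, ofPred_true, univ_inter, lintegral_Ioi_zero_ofReal_rpow,
      ENNReal.zero_rpow_of_neg (neg_lt_zero.2 hs), ENNReal.top_div_of_ne_top ENNReal.ofReal_ne_top]
  · have hpos : 0 < a.toReal := ENNReal.toReal_pos ha₀ ha
    have hset : {t | a ≤ ENNReal.ofReal t} ∩ Ioi 0 = Ici a.toReal := by
      ext t
      rw [mem_inter_iff, and_comm]
      refine ⟨fun ht => (ENNReal.le_ofReal_iff_toReal_le ha (le_of_lt ht.1)).1 ht.2, fun ht => ?_⟩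
      have ht₀ : 0 < t := hpos.trans_le ht
      exact ⟨ht₀, (ENNReal.le_ofReal_iff_toReal_le ha ht₀.le).2 ht⟩
    have hs' : -s - 1 < -1 := by linarith
    rw [hset, setLIntegral_congr Ioi_ae_eq_Ici.symm, ← ofReal_integral_eq_lintegral_ofReal
      (integrableOn_Ioi_rpow_of_lt hs' hpos), integral_Ioi_rpow_of_lt hs' hpos, sub_add_cancel,
      neg_div_neg_eq, ENNReal.ofReal_div_of_pos hs, ← ENNReal.ofReal_rpow_of_pos hpos,
      ENNReal.ofReal_toReal ha]
    filter_upwards [ae_restrict_mem measurableSet_Ioi] with t ht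
      using Real.rpow_nonneg (hpos.trans ht).le _

variable {α : Type*} [MeasurableSpace α] {μ : Measure α}

theorem lintegral_mul_setLIntegral_swap {β : Type*} [MeasurableSpace β] {ν : Measure β}
    [SFinite μ] [SFinite ν] {φ : β → ℝ≥0∞} {w : α → ℝ≥0∞} (hφ : Measurable φ) (hw : Measurable w)
    {E : Set (β × α)} (hE : MeasurableSet E) :
    ∫⁻ t, φ t * ∫⁻ x in Prod.mk t ⁻¹' E, w x ∂μ ∂ν =
      ∫⁻ x, w x * ∫⁻ t in (fun t => (t, x)) ⁻¹' E, φ t ∂ν ∂μ := by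
  have hleft (t : β) : φ t * ∫⁻ x in Prod.mk t ⁻¹' E, w x ∂μ =
      ∫⁻ x, E.indicator (fun z => φ z.1 * w z.2) (t, x) ∂μ := by
    rw [← lintegral_const_mul _ hw, ← lintegral_indicator (hE.preimage measurable_prodMk_left)]
    rfl
  have hright (x : α) : w x * ∫⁻ t in (fun t => (t, x)) ⁻¹' E, φ t ∂ν =
      ∫⁻ t, E.indicator (fun z => φ z.1 * w z.2) (t, x) ∂ν := by
    rw [← lintegral_const_mul _ hφ, ← lintegral_indicator (hE.preimage measurable_prodMk_right)]
    simp only [mul_comm (w x)]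
    rfl
  simp only [hleft, hright]
  exact lintegral_lintegral_swap
    (((hφ.comp measurable_fst).mul (hw.comp measurable_snd)).indicator hE).aemeasurable

theorem lintegral_rpow_mul_setLIntegral_lt [SFinite μ] {p : ℝ} (hp : 0 < p) {a w : α → ℝ≥0∞}
    (ha : Measurable a) (hw : Measurable w) :
    ∫⁻ t in Ioi (0 : ℝ), ENNReal.ofReal (t ^ (p - 1)) *
      ∫⁻ x in {x | ENNReal.ofReal t < a x}, w x ∂μ =
      (∫⁻ x, w x * a x ^ p ∂μ) / ENNReal.ofReal p := by
  have hE : MeasurableSet {z : ℝ × α | ENNReal.ofReal z.1 < a z.2} :=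
    measurableSet_lt (by fun_prop) (by fun_prop)
  have hslice (x : α) : MeasurableSet {t : ℝ | ENNReal.ofReal t < a x} :=
    measurableSet_lt (by fun_prop) measurable_const
  refine (lintegral_mul_setLIntegral_swap (by fun_prop) hw hE).trans ?_
  simp only [preimage_ofPred_eq, Measure.restrict_restrict (hslice _),
    setLIntegral_ofReal_lt_rpow hp, div_eq_mul_inv, ← mul_assoc]
  exact lintegral_mul_const _ (by fun_prop)

theorem lintegral_rpow_mul_setLIntegral_le [SFinite μ] {s : ℝ} (hs : 0 < s) {a w : α → ℝ≥0∞}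
    (ha : Measurable a) (hw : Measurable w) :
    ∫⁻ t in Ioi (0 : ℝ), ENNReal.ofReal (t ^ (-s - 1)) *
      ∫⁻ x in {x | a x ≤ ENNReal.ofReal t}, w x ∂μ =
      (∫⁻ x, w x * a x ^ (-s) ∂μ) / ENNReal.ofReal s := by
  have hE : MeasurableSet {z : ℝ × α | a z.2 ≤ ENNReal.ofReal z.1} :=
    measurableSet_le (by fun_prop) (by fun_prop)
  have hslice (x : α) : MeasurableSet {t : ℝ | a x ≤ ENNReal.ofReal t} :=
    measurableSet_le measurable_const (by fun_prop)
  refine (lintegral_mul_setLIntegral_swap (by fun_prop) hw hE).trans ?_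
  simp only [preimage_ofPred_eq, Measure.restrict_restrict (hslice _),
    setLIntegral_le_ofReal_rpow hs, div_eq_mul_inv, ← mul_assoc]
  exact lintegral_mul_const _ (by fun_prop)

theorem lintegral_rpow_le_lintegral_meas_lt [SFinite μ] {p : ℝ} (hp : 0 < p) {C : ℝ≥0∞}
    (hC₀ : C ≠ 0) (hC : C ≠ ∞) (F : α → ℝ≥0∞) :
    ∫⁻ x, F x ^ p ∂μ ≤ C ^ p * ENNReal.ofReal p *
      ∫⁻ t in Ioi (0 : ℝ), ENNReal.ofReal (t ^ (p - 1)) * μ {x | C * ENNReal.ofReal t < F x} := by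
  obtain ⟨g, hg, hgF, hgint⟩ := exists_measurable_le_lintegral_eq μ fun x => (C⁻¹ * F x) ^ p
  have hgp (x : α) : (g x ^ p⁻¹) ^ p = g x := ENNReal.rpow_inv_rpow hp.ne' _
  have hcake := lintegral_rpow_mul_setLIntegral_lt (μ := μ) (w := 1) hp (hg.pow_const p⁻¹)
    measurable_one
  simp only [hgp, Pi.one_apply, one_mul, setLIntegral_one] at hcake
  rw [ENNReal.eq_div_iff (by simpa using hp) ENNReal.ofReal_ne_top] at hcake
  have hscale (x : α) : F x ^ p = C ^ p * (C⁻¹ * F x) ^ p := by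
    rw [← ENNReal.mul_rpow_of_nonneg _ _ hp.le, ← mul_assoc, ENNReal.mul_inv_cancel hC₀ hC, one_mul]
  calc ∫⁻ x, F x ^ p ∂μ = C ^ p * ∫⁻ x, g x ∂μ := by
        simp only [hscale, ← hgint]
        exact lintegral_const_mul' _ _ (ENNReal.rpow_ne_top_of_nonneg hp.le hC)
    _ ≤ _ := by
        rw [← hcake, ← mul_assoc]
        gcongr _ * ∫⁻ t in _, _ * μ ?_ with t
        intro x hx
        have hx' := hx.trans_le ((ENNReal.rpow_inv_le_iff hp).2 (hgF x))
        rw [← ENNReal.div_eq_inv_mul,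
          ENNReal.lt_div_iff_mul_lt (Or.inl hC₀) (Or.inl hC), mul_comm] at hx'
        exact hx'

end LayerCake

section Radial

open Module

variable {E : Type*} [NormedAddCommGroup E] [NormedSpace ℝ E] [FiniteDimensional ℝ E]
  [MeasurableSpace E] [BorelSpace E] [Nontrivial E] (μ : Measure E) [μ.IsAddHaarMeasure]

theorem lintegral_fun_norm {F : ℝ → ℝ≥0∞} (hF : Measurable F) :
    ∫⁻ z, F ‖z‖ ∂μ = μ.toSphere univ *
      ∫⁻ r in Ioi (0 : ℝ), ENNReal.ofReal (r ^ (finrank ℝ E - 1)) * F r := by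
  calc ∫⁻ z, F ‖z‖ ∂μ
      = ∫⁻ z : ({0}ᶜ : Set E), F ‖z.1‖ ∂(μ.comap Subtype.val) := by
        rw [lintegral_subtype_comap (measurableSet_singleton _).compl (fun z : E => F ‖z‖),
          restrict_compl_singleton]
    _ = ∫⁻ z, F z.2 ∂μ.toSphere.prod (.volumeIoiPow (finrank ℝ E - 1)) := by
        simpa using μ.measurePreserving_homeomorphUnitSphereProd.lintegral_comp_emb
          (Homeomorph.measurableEmbedding _) (F ∘ Subtype.val ∘ Prod.snd)
    _ = μ.toSphere univ * ∫⁻ r, F r ∂(.volumeIoiPow (finrank ℝ E - 1)) := by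
        rw [lintegral_prod _ (by fun_prop)]
        simp only [lintegral_const, mul_comm]
    _ = _ := by
        rw [Measure.volumeIoiPow,
          lintegral_withDensity_eq_lintegral_mul _ (by fun_prop) (by fun_prop)]
        simp only [Pi.mul_apply]
        rw [lintegral_subtype_comap measurableSet_Ioi
          (fun r : ℝ => ENNReal.ofReal (r ^ (finrank ℝ E - 1)) * F r)]

theorem setLIntegral_fun_dist {F : ℝ → ℝ≥0∞} (hF : Measurable F) {I : Set ℝ}
    (hI : MeasurableSet I) (c : E) :
    ∫⁻ z in {z | dist c z ∈ I}, F (dist c z) ∂μ = μ.toSphere univ *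
      ∫⁻ r in I ∩ Ioi 0, ENNReal.ofReal (r ^ (finrank ℝ E - 1)) * F r := by
  have hset : MeasurableSet {z : E | dist c z ∈ I} := measurable_const.dist measurable_id hI
  calc ∫⁻ z in {z | dist c z ∈ I}, F (dist c z) ∂μ
      = ∫⁻ z, I.indicator F ‖z - c‖ ∂μ := by
        rw [← lintegral_indicator hset]
        refine lintegral_congr fun z => ?_
        rw [← dist_eq_norm, dist_comm z]
        rfl
    _ = μ.toSphere univ * ∫⁻ r in Ioi (0 : ℝ),
          I.indicator (fun r => ENNReal.ofReal (r ^ (finrank ℝ E - 1)) * F r) r := by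
        rw [lintegral_sub_right_eq_self (fun z => I.indicator F ‖z‖) c,
          lintegral_fun_norm μ (hF.indicator hI)]
        simp only [indicator_mul_right]
    _ = _ := by rw [setLIntegral_indicator hI]

theorem setLIntegral_abs_sub_rpow (R : ℝ) :
    ∫⁻ r in Ioo 0 (2 * R), ENNReal.ofReal |r - R| ^ (-(1 / 2) : ℝ) =
      4 * ENNReal.ofReal R ^ (1 / 2 : ℝ) := by
  have hset : Ioo 0 (2 * R) = {r : ℝ | dist R r ∈ Iio R} := by
    ext r
    rw [mem_ofPred_eq, mem_Iio, Real.dist_eq, abs_lt]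
    constructor <;> rintro ⟨h₁, h₂⟩ <;> constructor <;> linarith
  have hint : ∫⁻ r in Iio R ∩ Ioi 0, ENNReal.ofReal r ^ (-(1 / 2) : ℝ) =
      ENNReal.ofReal R ^ (1 / 2 : ℝ) / ENNReal.ofReal (1 / 2) := by
    have hset' : Iio R ∩ Ioi 0 = {t | ENNReal.ofReal t < ENNReal.ofReal R} ∩ Ioi 0 := by
      ext t
      exact and_congr_left fun ht => (ENNReal.ofReal_lt_ofReal_iff_of_nonneg (le_of_lt ht)).symm
    rw [← setLIntegral_ofReal_lt_rpow (by norm_num), hset']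
    refine setLIntegral_congr_fun (by measurability) fun r hr => ?_
    norm_num [ENNReal.ofReal_rpow_of_pos hr.2]
  simp_rw [hset, abs_sub_comm _ R, ← Real.dist_eq]
  rw [setLIntegral_fun_dist volume (F := fun r => ENNReal.ofReal r ^ (-(1 / 2) : ℝ))
    (by fun_prop) measurableSet_Iio]
  simp only [Module.finrank_self, Nat.sub_self, pow_zero, ENNReal.ofReal_one, one_mul, hint,
    Measure.toSphere_apply_univ, Nat.cast_one, Real.volume_ball]
  rw [ENNReal.div_eq_inv_mul, ← ENNReal.ofReal_inv_of_pos (by norm_num), ← mul_assoc,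
    ← ENNReal.ofReal_mul (by norm_num)]
  norm_num

theorem setLIntegral_abs_dist_sub_rpow_le {R : ℝ} (hR : 0 < R) (c : E) :
    ∫⁻ y in {y | dist c y < 2 * R}, ENNReal.ofReal |dist c y - R| ^ (-(1 / 2) : ℝ) ∂μ ≤
      μ.toSphere univ * 2 ^ (finrank ℝ E + 1) * ENNReal.ofReal R ^ (finrank ℝ E - 1 / 2 : ℝ) := by
  have hdim : finrank ℝ E - 1 + 1 = finrank ℝ E := Nat.sub_add_cancel finrank_pos
  have hR' : ENNReal.ofReal R ≠ 0 := by simpa using hR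
  calc ∫⁻ y in {y | dist c y < 2 * R}, ENNReal.ofReal |dist c y - R| ^ (-(1 / 2) : ℝ) ∂μ
      = μ.toSphere univ * ∫⁻ r in Iio (2 * R) ∩ Ioi 0, ENNReal.ofReal (r ^ (finrank ℝ E - 1)) *
          ENNReal.ofReal |r - R| ^ (-(1 / 2) : ℝ) :=
        setLIntegral_fun_dist μ (F := fun r => ENNReal.ofReal |r - R| ^ (-(1 / 2) : ℝ))
          (by fun_prop) measurableSet_Iio c
    _ ≤ μ.toSphere univ * ∫⁻ r in Ioo 0 (2 * R), ENNReal.ofReal (2 * R) ^ (finrank ℝ E - 1) *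
          ENNReal.ofReal |r - R| ^ (-(1 / 2) : ℝ) := by
        rw [inter_comm, Ioi_inter_Iio]
        refine mul_le_mul_right (setLIntegral_mono' measurableSet_Ioo fun r hr => ?_) _
        rw [ENNReal.ofReal_pow hr.1.le]
        gcongr
        exact hr.2.le
    _ = _ := by
        rw [lintegral_const_mul _ (by fun_prop), setLIntegral_abs_sub_rpow R,
          ENNReal.ofReal_mul zero_le_two, mul_pow, ENNReal.ofReal_ofNat,
          show (finrank ℝ E - 1 / 2 : ℝ) = (finrank ℝ E - 1 : ℕ) + 1 / 2 by
            rw [← hdim]; push_cast; ring,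
          ENNReal.rpow_add _ _ hR' ENNReal.ofReal_ne_top, ENNReal.rpow_natCast, ← hdim]
        simp only [Nat.add_sub_cancel]
        ring

theorem setLIntegral_dini_eq {φ : ℝ → ℝ} (hφ : Measurable φ) {r : ℝ} (hr : 0 < r) (c : E) :
    ∫⁻ y in {y | r < dist c y}, ENNReal.ofReal (φ (r / dist c y) / dist c y ^ finrank ℝ E) ∂μ =
      μ.toSphere univ * ∫⁻ t in Ioo 0 1, ENNReal.ofReal (φ t / t) := by
  have himage : (fun s => r / s) '' Ioi r = Ioo 0 1 := by
    ext t
    constructor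
    · rintro ⟨s, hs, rfl⟩
      exact ⟨div_pos hr (hr.trans hs), (div_lt_one (hr.trans hs)).2 hs⟩
    · rintro ⟨ht₀, ht₁⟩
      exact ⟨r / t, (lt_div_iff₀ ht₀).2 (mul_lt_of_lt_one_right hr ht₁), div_div_cancel₀ hr.ne'⟩
  have hderiv : ∀ s ∈ Ioi r, HasDerivWithinAt (fun s => r / s) (r * -(s ^ 2)⁻¹) (Ioi r) s :=
    fun s hs => ((hasDerivAt_inv (hr.trans hs).ne').const_mul r).hasDerivWithinAt
  have hinj : InjOn (fun s => r / s) (Ioi r) := fun s _ t _ hst => by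
    simpa [div_eq_mul_inv, hr.ne'] using hst
  calc ∫⁻ y in {y | r < dist c y}, ENNReal.ofReal (φ (r / dist c y) / dist c y ^ finrank ℝ E) ∂μ
      = μ.toSphere univ * ∫⁻ s in Ioi r ∩ Ioi 0, ENNReal.ofReal (s ^ (finrank ℝ E - 1)) *
          ENNReal.ofReal (φ (r / s) / s ^ finrank ℝ E) :=
        setLIntegral_fun_dist μ (F := fun s => ENNReal.ofReal (φ (r / s) / s ^ finrank ℝ E))
          (by fun_prop) measurableSet_Ioi c
    _ = _ := by
        rw [← himage, lintegral_image_eq_lintegral_abs_deriv_mul measurableSet_Ioi hderiv hinj,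
          inter_eq_left.2 (Ioi_subset_Ioi hr.le)]
        congr 1
        refine setLIntegral_congr_fun measurableSet_Ioi fun s hs => ?_
        have hs₀ : 0 < s := hr.trans hs
        rw [mul_neg, abs_neg, abs_of_pos (by positivity), ← ENNReal.ofReal_mul (by positivity),
          ← ENNReal.ofReal_mul (by positivity),
          ← Nat.sub_add_cancel (finrank_pos (R := ℝ) (M := E))]
        simp only [Nat.add_sub_cancel]
        congr 1
        field_simp
        ring

end Radial

section Shell

open Module

theorem rpow_le_mul_rpow_of_le_mul {κ s t a : ℝ} (hκ : 0 < κ) (hs : 0 < s) (ht : 0 < t)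
    (ha : 0 ≤ a) (h : s ≤ κ * t) : t ^ (-a) ≤ κ ^ a * s ^ (-a) := by
  calc t ^ (-a) = κ ^ a * (κ * t) ^ (-a) := by
        rw [Real.mul_rpow hκ.le ht.le, ← mul_assoc, ← Real.rpow_add hκ]; simp
    _ ≤ κ ^ a * s ^ (-a) :=
        mul_le_mul_of_nonneg_left (Real.rpow_le_rpow_of_nonpos hs h (neg_nonpos.2 ha))
          (by positivity)

theorem sqrt_div_div_pow_le {D : ℕ} (hD : 0 < D) {κ t s R : ℝ} (hκ : 0 < κ) (ht : 0 < t)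
    (hs : 0 < s) (hR : 0 < R) (hsub : |t - R| ≤ κ * s) (hRt : R ≤ κ * t) :
    ENNReal.ofReal (√(t / s) / t ^ D) ≤ ENNReal.ofReal (κ ^ D * R ^ (-(D - 1 / 2) : ℝ)) *
      ENNReal.ofReal |t - R| ^ (-(1 / 2) : ℝ) := by
  rcases (abs_nonneg (t - R)).eq_or_lt with hzero | hpos
  · rw [← hzero, ENNReal.ofReal_zero, ENNReal.zero_rpow_of_neg (by norm_num), ENNReal.mul_top]
    · exact le_top
    · simp only [ne_eq, ENNReal.ofReal_eq_zero, not_le]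
      positivity
  rw [ENNReal.ofReal_rpow_of_pos hpos, ← ENNReal.ofReal_mul (by positivity)]
  refine ENNReal.ofReal_le_ofReal ?_
  have hD' : (1 : ℝ) ≤ D := by exact_mod_cast hD
  calc √(t / s) / t ^ D = t ^ (-(D - 1 / 2) : ℝ) * s ^ (-(1 / 2) : ℝ) := by
        rw [neg_sub, Real.rpow_sub ht, Real.rpow_natCast, Real.rpow_neg hs.le, Real.sqrt_eq_rpow,
          Real.div_rpow ht.le hs.le]
        field_simp
    _ ≤ κ ^ (D - 1 / 2 : ℝ) * R ^ (-(D - 1 / 2) : ℝ) *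
          (κ ^ (1 / 2 : ℝ) * |t - R| ^ (-(1 / 2) : ℝ)) := by
        gcongr
        · exact rpow_le_mul_rpow_of_le_mul hκ hR ht (by linarith) hRt
        · exact rpow_le_mul_rpow_of_le_mul hκ hpos hs (by norm_num) hsub
    _ = κ ^ (D - 1 / 2 + 1 / 2 : ℝ) * R ^ (-(D - 1 / 2) : ℝ) * |t - R| ^ (-(1 / 2) : ℝ) := by
        rw [Real.rpow_add hκ]; ring
    _ = _ := by rw [sub_add_cancel, Real.rpow_natCast]

variable {E : Type*} [NormedAddCommGroup E] [NormedSpace ℝ E] [FiniteDimensional ℝ E]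
  [MeasurableSpace E] [BorelSpace E] (μ : Measure E) [μ.IsAddHaarMeasure]

/-- The constant in `tsum_setLIntegral_sqrt_div_le`. -/
def shellConst (κ : ℝ) : ℝ≥0∞ :=
  ENNReal.ofReal (κ ^ finrank ℝ E) * (μ.toSphere univ * 2 ^ (finrank ℝ E + 1))

theorem shellConst_ne_top (κ : ℝ) : shellConst μ κ ≠ ∞ := by
  unfold shellConst
  finiteness

theorem tsum_setLIntegral_sqrt_div_le [Nontrivial E] {ι : Type*} [Countable ι] {A : ι → Set E}
    {s : ι → ℝ} {κ R : ℝ} (hκ : 0 < κ) (hR : 0 < R) (z : E) (hA : ∀ j, MeasurableSet (A j))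
    (hdisj : Pairwise (Function.onFun Disjoint A)) (hs : ∀ j, 0 < s j)
    (hdist : ∀ j, ∀ y ∈ A j,
      dist z y < 2 * R ∧ |dist z y - R| ≤ κ * s j ∧ R ≤ κ * dist z y) :
    ∑' j, ∫⁻ y in A j, ENNReal.ofReal (√(dist z y / s j) / dist z y ^ finrank ℝ E) ∂μ ≤
      shellConst μ κ := by
  set M := ENNReal.ofReal (κ ^ finrank ℝ E * R ^ (-(finrank ℝ E - 1 / 2) : ℝ))
  calc ∑' j, ∫⁻ y in A j, ENNReal.ofReal (√(dist z y / s j) / dist z y ^ finrank ℝ E) ∂μ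
      ≤ ∑' j, ∫⁻ y in A j, M * ENNReal.ofReal |dist z y - R| ^ (-(1 / 2) : ℝ) ∂μ := by
        refine ENNReal.tsum_le_tsum fun j => setLIntegral_mono' (hA j) fun y hy => ?_
        obtain ⟨-, hsub, hRy⟩ := hdist j y hy
        exact sqrt_div_div_pow_le finrank_pos hκ (pos_of_mul_pos_right (hR.trans_le hRy) hκ.le)
          (hs j) hR hsub hRy
    _ = ∫⁻ y in ⋃ j, A j, M * ENNReal.ofReal |dist z y - R| ^ (-(1 / 2) : ℝ) ∂μ :=
        (lintegral_iUnion hA hdisj _).symm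
    _ ≤ ∫⁻ y in {y | dist z y < 2 * R}, M * ENNReal.ofReal |dist z y - R| ^ (-(1 / 2) : ℝ) ∂μ :=
        lintegral_mono_set (iUnion_subset fun j y hy => (hdist j y hy).1)
    _ ≤ M * (μ.toSphere univ * 2 ^ (finrank ℝ E + 1) *
          ENNReal.ofReal R ^ (finrank ℝ E - 1 / 2 : ℝ)) := by
        rw [lintegral_const_mul _ (by fun_prop)]
        exact mul_le_mul_right (setLIntegral_abs_dist_sub_rpow_le μ hR z) M
    _ = shellConst μ κ := by
        have hcancel : ENNReal.ofReal (R ^ (-(finrank ℝ E - 1 / 2) : ℝ)) *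
            ENNReal.ofReal R ^ (finrank ℝ E - 1 / 2 : ℝ) = 1 := by
          rw [ENNReal.ofReal_rpow_of_pos hR, ← ENNReal.ofReal_mul (by positivity),
            ← Real.rpow_add hR]
          simp
        rw [shellConst, ← mul_one (ENNReal.ofReal (κ ^ _)), ← hcancel,
          show M = _ from ENNReal.ofReal_mul (by positivity)]
        ring

end Shell

section StoppingBalls

open Module Metric

variable {E : Type*} [NormedAddCommGroup E] [NormedSpace ℝ E] [FiniteDimensional ℝ E]
  [MeasurableSpace E]

/-- A Vitali selection of closed balls on which the mean density of `ν` with respect to `μ`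
exceeds `lam`, recorded as pairs (center, radius). Each selected radius is almost maximal for its
center, and the fivefold enlargements cover all points where the maximal function exceeds `lam`. -/
structure IsStoppingFamily (μ ν : Measure E) (lam : ℝ≥0∞) (u : Set (E × ℝ)) : Prop where
  radius_pos : ∀ b ∈ u, 0 < b.2
  pairwiseDisjoint : u.PairwiseDisjoint fun b => closedBall b.1 b.2
  lt_measure : ∀ b ∈ u, lam * μ (closedBall b.1 b.2) < ν (closedBall b.1 b.2)
  measure_le : ∀ b ∈ u, ∀ r, 2 * b.2 ≤ r → ν (closedBall b.1 r) ≤ lam * μ (closedBall b.1 r)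
  measure_le_of_notMem : ∀ x ∉ ⋃ b ∈ u, closedBall b.1 (5 * b.2),
    ∀ r, 0 < r → ν (closedBall x r) ≤ lam * μ (closedBall x r)

variable {μ ν : Measure E} {lam : ℝ≥0∞} {u : Set (E × ℝ)}

protected theorem IsStoppingFamily.countable (h : IsStoppingFamily μ ν lam u) : u.Countable :=
  h.pairwiseDisjoint.countable_of_nonempty_interior fun b hb =>
    (nonempty_ball.2 (h.radius_pos b hb)).mono ball_subset_interior_closedBall

variable [BorelSpace E] [μ.IsAddHaarMeasure]

theorem exists_radius_bound_of_lt_measure [Nontrivial E] [IsFiniteMeasure ν] (hlam : lam ≠ 0) :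
    ∃ R : ℝ, ∀ (x : E) (r : ℝ), 0 < r →
      lam * μ (closedBall x r) < ν (closedBall x r) → r ≤ R := by
  have hunit : lam * μ (ball 0 1) ≠ 0 := mul_ne_zero hlam (measure_ball_pos μ 0 one_pos).ne'
  refine ⟨max 1 (ν univ / (lam * μ (ball 0 1))).toReal, fun x r hr hlt => ?_⟩
  rcases le_total r 1 with hr₁ | hr₁
  · exact le_max_of_le_left hr₁
  refine le_max_of_le_right ?_
  have hvol : ENNReal.ofReal (r ^ finrank ℝ E) * (lam * μ (ball 0 1)) ≤ ν univ := by
    rw [mul_left_comm, ← Measure.addHaar_closedBall μ x hr.le]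
    exact hlt.le.trans (measure_mono (subset_univ _))
  rw [← ENNReal.le_div_iff_mul_le (Or.inl hunit) (Or.inr (measure_ne_top ν _))] at hvol
  exact (le_self_pow₀ hr₁ finrank_pos.ne').trans
    ((ENNReal.ofReal_le_iff_le_toReal (ENNReal.div_ne_top (measure_ne_top ν _) hunit)).1 hvol)

theorem exists_almost_maximal_radius [Nontrivial E] [IsFiniteMeasure ν] (hlam : lam ≠ 0) {x : E}
    {r : ℝ} (hr : 0 < r) (hlt : lam * μ (closedBall x r) < ν (closedBall x r)) :
    ∃ s, 0 < s ∧ lam * μ (closedBall x s) < ν (closedBall x s) ∧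
      ∀ t, 2 * s ≤ t → ν (closedBall x t) ≤ lam * μ (closedBall x t) := by
  obtain ⟨R, hR⟩ := exists_radius_bound_of_lt_measure (μ := μ) (ν := ν) hlam
  set radii := {s | 0 < s ∧ lam * μ (closedBall x s) < ν (closedBall x s)}
  have hbdd : BddAbove radii := ⟨R, fun s hs => hR x s hs.1 hs.2⟩
  have hpos : 0 < sSup radii := hr.trans_le (le_csSup hbdd ⟨hr, hlt⟩)
  obtain ⟨s, hs, hsup⟩ := exists_lt_of_lt_csSup (⟨r, hr, hlt⟩ : radii.Nonempty) (half_lt_self hpos)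
  refine ⟨s, hs.1, hs.2, fun t ht => le_of_not_gt fun hbad => ?_⟩
  linarith [le_csSup hbdd (show t ∈ radii from ⟨by linarith [hs.1], hbad⟩)]

theorem exists_isStoppingFamily [Nontrivial E] (μ ν : Measure E) [μ.IsAddHaarMeasure]
    [IsFiniteMeasure ν] (hlam : lam ≠ 0) : ∃ u, IsStoppingFamily μ ν lam u := by
  obtain ⟨R, hR⟩ := exists_radius_bound_of_lt_measure (μ := μ) (ν := ν) hlam
  set t : Set (E × ℝ) := {b | 0 < b.2 ∧ lam * μ (closedBall b.1 b.2) < ν (closedBall b.1 b.2) ∧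
    ∀ r, 2 * b.2 ≤ r → ν (closedBall b.1 r) ≤ lam * μ (closedBall b.1 r)}
  obtain ⟨u, hut, hdisj, hcover⟩ := Vitali.exists_disjoint_subfamily_covering_enlargement_closedBall
    t Prod.fst Prod.snd R (fun b hb => hR b.1 b.2 hb.1 hb.2.1) 5 (by norm_num)
  refine ⟨u, fun b hb => (hut hb).1, hdisj, fun b hb => (hut hb).2.1, fun b hb => (hut hb).2.2,
    fun x hx r hr => le_of_not_gt fun hbad => hx ?_⟩
  obtain ⟨s, hs⟩ := exists_almost_maximal_radius hlam hr hbad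
  obtain ⟨b, hb, hsub⟩ := hcover (x, s) hs
  exact mem_biUnion hb (hsub (mem_closedBall_self hs.1.le))

namespace IsStoppingFamily

theorem tsum_measure_closedBall_le [IsFiniteMeasure ν] (h : IsStoppingFamily μ ν lam u)
    (hlam : lam ≠ 0) {N : ℝ} (hN : 0 ≤ N) : ∑' b : u, μ (closedBall b.1.1 (N * b.1.2)) ≤
      ENNReal.ofReal (N ^ finrank ℝ E) * (lam⁻¹ * ν univ) := by
  calc ∑' b : u, μ (closedBall b.1.1 (N * b.1.2))
      ≤ ∑' b : u, ENNReal.ofReal (N ^ finrank ℝ E) * (lam⁻¹ * ν (closedBall b.1.1 b.1.2)) := by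
        refine ENNReal.tsum_le_tsum fun b => ?_
        rw [Measure.addHaar_closedBall_mul μ _ hN (h.radius_pos b b.2).le]
        refine mul_le_mul_right ?_ _
        rw [← ENNReal.div_eq_inv_mul, ENNReal.le_div_iff_mul_le (Or.inl hlam)
          (Or.inr (measure_ne_top ν _)), mul_comm,
          ← Measure.addHaar_closedBall_center μ b.1.1]
        exact (h.lt_measure b b.2).le
    _ = ENNReal.ofReal (N ^ finrank ℝ E) * (lam⁻¹ * ∑' b : u, ν (closedBall b.1.1 b.1.2)) := by
        rw [ENNReal.tsum_mul_left, ENNReal.tsum_mul_left]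
    _ ≤ _ := by
        gcongr
        exact tsum_measure_le_measure_univ
          (fun b => measurableSet_closedBall.nullMeasurableSet)
          (h.pairwiseDisjoint.subtype _ _).aedisjoint

theorem measure_enlargement_le (h : IsStoppingFamily μ ν lam u) {b : E × ℝ} (hb : b ∈ u) :
    ν (closedBall b.1 (5 * b.2)) ≤ 5 ^ finrank ℝ E * lam * μ (closedBall b.1 b.2) := by
  have hr := h.radius_pos b hb
  calc ν (closedBall b.1 (5 * b.2)) ≤ lam * μ (closedBall b.1 (5 * b.2)) :=
        h.measure_le b hb _ (by linarith)
    _ = _ := by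
        rw [Measure.addHaar_closedBall_mul μ _ (by norm_num) hr.le,
          Measure.addHaar_closedBall_center μ b.1, ENNReal.ofReal_pow (by norm_num),
          ENNReal.ofReal_ofNat]
        ring

end IsStoppingFamily

end StoppingBalls

section Averaging

variable {α ι : Type*} [MeasurableSpace α] {μ : Measure α} {f g : α → ℝ} {Q : ι → Set α}

/-- `g` arises from `f` by replacing `f` on each cell of the disjoint family `Q` by its average. -/
structure IsAveragedOn (μ : Measure α) (Q : ι → Set α) (f g : α → ℝ) : Prop where
  measurable : Measurable g
  eq_average : ∀ j, ∀ y ∈ Q j, g y = ⨍ x in Q j, f x ∂μ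
  eq_of_notMem : ∀ y ∉ ⋃ j, Q j, g y = f y

theorem exists_isAveragedOn [Countable ι] (μ : Measure α) (hQ : ∀ j, MeasurableSet (Q j))
    (hdisj : Pairwise (Function.onFun Disjoint Q)) (hf : Measurable f) :
    ∃ g, IsAveragedOn μ Q f g := by
  set cell : Option ι → Set α := fun o => o.elim (⋃ j, Q j)ᶜ Q
  set value : Option ι → α → ℝ := fun o => o.elim f fun j _ => ⨍ x in Q j, f x ∂μ
  have hcell : ∀ o, MeasurableSet (cell o) := by
    rintro (_ | j)
    exacts [(MeasurableSet.iUnion hQ).compl, hQ j]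
  have hvalue : ∀ o, Measurable (value o) := by
    rintro (_ | j)
    exacts [hf, measurable_const]
  have hcompl : ∀ j, Disjoint (⋃ j, Q j)ᶜ (Q j) := fun j =>
    disjoint_compl_left.mono_right (subset_iUnion Q j)
  have hdisj' : Pairwise (Function.onFun Disjoint cell) := by
    rintro (_ | i) (_ | j) hij
    exacts [absurd rfl hij, hcompl j, (hcompl i).symm, hdisj (by simpa using hij)]
  obtain ⟨g, hg, hgeq⟩ := exists_measurable_piecewise cell hcell value hvalue fun i j hij y hy =>
    absurd hy (disjoint_iff_inter_eq_empty.1 (hdisj' hij) ▸ notMem_empty y)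
  exact ⟨g, hg, fun j y hy => hgeq (some j) hy, fun y hy => hgeq none hy⟩

theorem enorm_setAverage_mul_le {s : Set α} (hs : μ s ≠ ∞) :
    ‖⨍ x in s, f x ∂μ‖ₑ * μ s ≤ ∫⁻ x in s, ‖f x‖ₑ ∂μ := by
  have : IsFiniteMeasure (μ.restrict s) := ⟨by simpa using hs.lt_top⟩
  calc ‖⨍ x in s, f x ∂μ‖ₑ * μ s = ‖∫ x in s, f x ∂μ‖ₑ := by
        rw [← measure_smul_setAverage f hs, enorm_smul, mul_comm,
          Real.enorm_of_nonneg measureReal_nonneg, ofReal_measureReal hs]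
    _ ≤ _ := enorm_integral_le_lintegral_enorm _

namespace IsAveragedOn

theorem setLIntegral_enorm_le (h : IsAveragedOn μ Q f g) {j : ι} (hQ : MeasurableSet (Q j))
    (hfin : μ (Q j) ≠ ∞) : ∫⁻ y in Q j, ‖g y‖ₑ ∂μ ≤ ∫⁻ y in Q j, ‖f y‖ₑ ∂μ := by
  calc ∫⁻ y in Q j, ‖g y‖ₑ ∂μ = ∫⁻ _ in Q j, ‖⨍ x in Q j, f x ∂μ‖ₑ ∂μ :=
        setLIntegral_congr_fun hQ fun y hy => by rw [h.eq_average j y hy]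
    _ ≤ _ := by
        rw [setLIntegral_const]
        exact enorm_setAverage_mul_le hfin

theorem lintegral_enorm_le [Countable ι] (h : IsAveragedOn μ Q f g)
    (hQ : ∀ j, MeasurableSet (Q j)) (hdisj : Pairwise (Function.onFun Disjoint Q))
    (hfin : ∀ j, μ (Q j) ≠ ∞) : ∫⁻ y, ‖g y‖ₑ ∂μ ≤ ∫⁻ y, ‖f y‖ₑ ∂μ := by
  have hunion : MeasurableSet (⋃ j, Q j) := MeasurableSet.iUnion hQ
  rw [← lintegral_add_compl _ hunion, ← lintegral_add_compl (fun y => ‖f y‖ₑ) hunion,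
    lintegral_iUnion hQ hdisj, lintegral_iUnion hQ hdisj]
  refine add_le_add (ENNReal.tsum_le_tsum fun j => h.setLIntegral_enorm_le (hQ j) (hfin j))
    (setLIntegral_mono' hunion.compl fun y hy => ?_)
  rw [h.eq_of_notMem y hy]

theorem setIntegral_sub_eq_zero (h : IsAveragedOn μ Q f g) (hf : Integrable f μ)
    (hg : Integrable g μ) {j : ι} (hQ : MeasurableSet (Q j)) (hfin : μ (Q j) ≠ ∞) :
    ∫ y in Q j, (f y - g y) ∂μ = 0 := by
  have hg_eq : ∫ y in Q j, g y ∂μ = ∫ y in Q j, f y ∂μ := by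
    calc ∫ y in Q j, g y ∂μ = ∫ _ in Q j, (⨍ x in Q j, f x ∂μ) ∂μ :=
          setIntegral_congr_fun hQ (h.eq_average j)
      _ = ∫ y in Q j, f y ∂μ := by
          rw [setIntegral_const, measure_smul_setAverage f hfin]
  rw [integral_sub hf.integrableOn hg.integrableOn, hg_eq, sub_self]

end IsAveragedOn

end Averaging

section CalderonZygmundDecomposition

open Module Metric

theorem exists_pairwise_disjoint_between {α ι : Type*} [MeasurableSpace α] [Countable ι]
    {B A : ι → Set α} (hB : ∀ j, MeasurableSet (B j)) (hA : ∀ j, MeasurableSet (A j))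
    (hBA : ∀ j, B j ⊆ A j) (hdisj : Pairwise (Function.onFun Disjoint B)) :
    ∃ Q : ι → Set α, (∀ j, MeasurableSet (Q j)) ∧ (∀ j, B j ⊆ Q j) ∧ (∀ j, Q j ⊆ A j) ∧
      Pairwise (Function.onFun Disjoint Q) ∧ ⋃ j, Q j = ⋃ j, A j := by
  obtain ⟨e, he⟩ := Countable.exists_injective_nat ι
  set Q : ι → Set α := fun j => B j ∪ (A j \ ((⋃ i, B i) ∪ ⋃ i, ⋃ (_ : e i < e j), A i))
  have hQ : ∀ i j, e i < e j → Disjoint (Q i) (Q j) := fun i j hij => by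
    refine disjoint_left.2 fun y hyi hyj => ?_
    rcases hyj with hyBj | ⟨-, hyj⟩
    · rcases hyi with hyBi | ⟨-, hyi⟩
      · exact disjoint_left.1 (hdisj fun h => hij.ne (congrArg e h)) hyBi hyBj
      · exact hyi (Or.inl (mem_iUnion_of_mem j hyBj))
    · have hyA : y ∈ A i := hyi.elim (fun h => hBA i h) fun h => h.1
      exact hyj (Or.inr (mem_iUnion₂_of_mem hij hyA))
  have hsub : ∀ j, Q j ⊆ A j := fun j => union_subset (hBA j) sdiff_subset
  refine ⟨Q, fun j => (hB j).union ((hA j).diff ((MeasurableSet.iUnion hB).union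
    (.iUnion fun i => .iUnion fun _ => hA i))), fun j => subset_union_left, hsub,
    fun i j hij => ?_, (iUnion_mono hsub).antisymm fun y hy => ?_⟩
  · rcases lt_or_gt_of_ne (he.ne hij) with hlt | hlt
    exacts [hQ i j hlt, (hQ j i hlt).symm]
  by_cases hyB : y ∈ ⋃ i, B i
  · exact iUnion_mono (fun _ => subset_union_left) hyB
  have hmem : ∃ n j, e j = n ∧ y ∈ A j := by
    obtain ⟨j, hj⟩ := mem_iUnion.1 hy
    exact ⟨e j, j, rfl, hj⟩
  obtain ⟨j, hj, hyj⟩ := Nat.find_spec hmem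
  refine mem_iUnion_of_mem j (Or.inr ⟨hyj, ?_⟩)
  rintro (h | h)
  · exact hyB h
  · obtain ⟨i, hij, hyi⟩ := mem_iUnion₂.1 h
    exact Nat.find_min hmem (hj ▸ hij) ⟨i, rfl, hyi⟩

variable {E : Type*} [NormedAddCommGroup E] [MeasurableSpace E]

/-- The bad part of a Calderón–Zygmund decomposition: an integrable function living on disjoint
cells `Q j ⊆ closedBall (c j) (r j)`, with mean zero and mean size at most `L` on each of them. -/
structure IsBadPart {ι : Type*} (μ : Measure E) (L : ℝ≥0∞) (Q : ι → Set E) (c : ι → E) (r : ι → ℝ)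
    (b : E → ℝ) : Prop where
  radius_pos : ∀ j, 0 < r j
  measurableSet : ∀ j, MeasurableSet (Q j)
  disjoint : Pairwise (Function.onFun Disjoint Q)
  subset_closedBall : ∀ j, Q j ⊆ closedBall (c j) (r j)
  measurable : Measurable b
  integrable : Integrable b μ
  eq_zero_of_notMem : ∀ y ∉ ⋃ j, Q j, b y = 0
  setIntegral_eq_zero : ∀ j, ∫ y in Q j, b y ∂μ = 0
  setLIntegral_le : ∀ j, ∫⁻ y in Q j, ‖b y‖ₑ ∂μ ≤ L * μ (Q j)

variable {μ : Measure E} {f g : E → ℝ} {lam : ℝ≥0∞} {u : Set (E × ℝ)} {Q : u → Set E}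

/-- Cells of a Calderón–Zygmund decomposition of `f` at height `lam`: a disjoint partition of the
union of the fivefold enlargements of stopping balls. -/
structure IsStoppingPartition (μ : Measure E) (f : E → ℝ) (lam : ℝ≥0∞) (u : Set (E × ℝ))
    (Q : u → Set E) : Prop where
  isStoppingFamily : IsStoppingFamily μ (μ.withDensity fun x => ‖f x‖ₑ) lam u
  measurableSet : ∀ b, MeasurableSet (Q b)
  disjoint : Pairwise (Function.onFun Disjoint Q)
  closedBall_subset : ∀ b, closedBall b.1.1 b.1.2 ⊆ Q b
  subset_closedBall : ∀ b, Q b ⊆ closedBall b.1.1 (5 * b.1.2)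
  iUnion_eq : ⋃ b, Q b = ⋃ b ∈ u, closedBall b.1 (5 * b.2)

theorem IsStoppingPartition.measure_ne_zero [μ.IsOpenPosMeasure]
    (h : IsStoppingPartition μ f lam u Q) (b : u) : μ (Q b) ≠ 0 :=
  ((measure_closedBall_pos μ _ (h.isStoppingFamily.radius_pos b b.2)).trans_le
    (measure_mono (h.closedBall_subset b))).ne'

theorem IsStoppingPartition.measure_ne_top [ProperSpace E] [IsFiniteMeasureOnCompacts μ]
    (h : IsStoppingPartition μ f lam u Q) (b : u) : μ (Q b) ≠ ∞ :=
  measure_ne_top_of_subset (h.subset_closedBall b) measure_closedBall_lt_top.ne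

theorem IsStoppingPartition.setLIntegral_enorm_sub_le [ProperSpace E]
    [IsFiniteMeasureOnCompacts μ] (h : IsStoppingPartition μ f lam u Q)
    (hg : IsAveragedOn μ Q f g) (hf : Measurable f) (b : u) :
    ∫⁻ y in Q b, ‖f y - g y‖ₑ ∂μ ≤ 2 * ∫⁻ y in Q b, ‖f y‖ₑ ∂μ := by
  calc ∫⁻ y in Q b, ‖f y - g y‖ₑ ∂μ ≤ ∫⁻ y in Q b, ‖f y‖ₑ + ‖g y‖ₑ ∂μ :=
        lintegral_mono fun y => enorm_sub_le
    _ ≤ ∫⁻ y in Q b, ‖f y‖ₑ ∂μ + ∫⁻ y in Q b, ‖f y‖ₑ ∂μ := by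
        rw [lintegral_add_left hf.enorm]
        exact add_le_add le_rfl (hg.setLIntegral_enorm_le (h.measurableSet b) (h.measure_ne_top b))
    _ = _ := (two_mul _).symm

variable [NormedSpace ℝ E] [FiniteDimensional ℝ E] [BorelSpace E] [μ.IsAddHaarMeasure]

theorem ae_le_of_setLIntegral_closedBall_le {w : E → ℝ≥0∞} (hw : Measurable w)
    (hint : ∫⁻ x, w x ∂μ ≠ ∞) (lam : ℝ≥0∞) :
    ∀ᵐ x ∂μ, (∀ r, 0 < r → ∫⁻ y in closedBall x r, w y ∂μ ≤ lam * μ (closedBall x r)) →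
      w x ≤ lam := by
  filter_upwards [(Besicovitch.vitaliFamily μ).ae_tendsto_lintegral_div hw.aemeasurable hint]
    with x hlim hle
  refine le_of_tendsto (hlim.comp (Besicovitch.tendsto_filterAt μ x)) ?_
  filter_upwards [self_mem_nhdsWithin] with r hr
  exact ENNReal.div_le_of_le_mul (hle r hr)

theorem exists_isStoppingPartition [Nontrivial E] (hf : ∫⁻ x, ‖f x‖ₑ ∂μ ≠ ∞)
    (hlam : lam ≠ 0) : ∃ u Q, IsStoppingPartition μ f lam u Q := by
  have : IsFiniteMeasure (μ.withDensity fun x => ‖f x‖ₑ) := isFiniteMeasure_withDensity hf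
  obtain ⟨u, hu⟩ := exists_isStoppingFamily μ (μ.withDensity fun x => ‖f x‖ₑ) hlam
  have : Countable u := hu.countable
  obtain ⟨Q, hQ, hBQ, hQA, hdisj, hunion⟩ := exists_pairwise_disjoint_between
    (fun b : u => measurableSet_closedBall (x := b.1.1) (ε := b.1.2))
    (fun b : u => measurableSet_closedBall (x := b.1.1) (ε := 5 * b.1.2))
    (fun b => closedBall_subset_closedBall (by linarith [hu.radius_pos b b.2]))
    (hu.pairwiseDisjoint.subtype _ _)
  exact ⟨u, Q, hu, hQ, hdisj, hBQ, hQA, hunion.trans (iUnion_subtype _ _)⟩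

namespace IsStoppingPartition

theorem setLIntegral_le (h : IsStoppingPartition μ f lam u Q) (b : u) :
    ∫⁻ y in Q b, ‖f y‖ₑ ∂μ ≤ 5 ^ finrank ℝ E * lam * μ (Q b) := by
  calc ∫⁻ y in Q b, ‖f y‖ₑ ∂μ ≤ ∫⁻ y in closedBall b.1.1 (5 * b.1.2), ‖f y‖ₑ ∂μ :=
        lintegral_mono_set (h.subset_closedBall b)
    _ ≤ 5 ^ finrank ℝ E * lam * μ (closedBall b.1.1 b.1.2) := by
        rw [← withDensity_apply _ measurableSet_closedBall]
        exact h.isStoppingFamily.measure_enlargement_le b.2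
    _ ≤ _ := by
        gcongr
        exact h.closedBall_subset b

theorem ae_enorm_le (h : IsStoppingPartition μ f lam u Q) (hg : IsAveragedOn μ Q f g)
    (hf : Measurable f) (hint : ∫⁻ x, ‖f x‖ₑ ∂μ ≠ ∞) :
    ∀ᵐ y ∂μ, ‖g y‖ₑ ≤ 5 ^ finrank ℝ E * lam := by
  filter_upwards [ae_le_of_setLIntegral_closedBall_le (μ := μ) hf.enorm hint lam] with y hy
  by_cases hmem : y ∈ ⋃ b, Q b
  · obtain ⟨b, hb⟩ := mem_iUnion.1 hmem
    rw [hg.eq_average b y hb,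
      ← ENNReal.mul_le_mul_iff_left (h.measure_ne_zero b) (h.measure_ne_top b)]
    exact (enorm_setAverage_mul_le (h.measure_ne_top b)).trans (h.setLIntegral_le b)
  · rw [hg.eq_of_notMem y hmem]
    refine (hy fun r hr => ?_).trans (le_mul_of_one_le_left' (one_le_pow₀ (by norm_num)))
    rw [← withDensity_apply _ measurableSet_closedBall]
    exact h.isStoppingFamily.measure_le_of_notMem y (h.iUnion_eq ▸ hmem) r hr

theorem isBadPart_sub (h : IsStoppingPartition μ f lam u Q) (hg : IsAveragedOn μ Q f g)
    (hf : Measurable f) (hint : ∫⁻ x, ‖f x‖ₑ ∂μ ≠ ∞) :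
    IsBadPart μ (2 * 5 ^ finrank ℝ E * lam) Q (fun b => b.1.1) (fun b => 5 * b.1.2)
      (fun y => f y - g y) := by
  have : Countable u := h.isStoppingFamily.countable
  have hfi : Integrable f μ := ⟨hf.aestronglyMeasurable, hint.lt_top⟩
  have hgi : Integrable g μ := ⟨hg.measurable.aestronglyMeasurable,
    (hg.lintegral_enorm_le h.measurableSet h.disjoint h.measure_ne_top).trans_lt hint.lt_top⟩
  exact {
    radius_pos := fun b => by linarith [h.isStoppingFamily.radius_pos b b.2]
    measurableSet := h.measurableSet
    disjoint := h.disjoint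
    subset_closedBall := h.subset_closedBall
    measurable := hf.sub hg.measurable
    integrable := hfi.sub hgi
    eq_zero_of_notMem := fun y hy => by rw [hg.eq_of_notMem y hy, sub_self]
    setIntegral_eq_zero := fun b =>
      hg.setIntegral_sub_eq_zero hfi hgi (h.measurableSet b) (h.measure_ne_top b)
    setLIntegral_le := fun b => by
      rw [mul_assoc 2, mul_assoc 2]
      exact (h.setLIntegral_enorm_sub_le hg hf b).trans (mul_le_mul_right (h.setLIntegral_le b) 2) }

end IsStoppingPartition

theorem exists_calderonZygmund_decomposition [Nontrivial E] (hf : Measurable f)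
    (hint : ∫⁻ x, ‖f x‖ₑ ∂μ ≠ ∞) (hlam : lam ≠ 0) :
    ∃ (u : Set (E × ℝ)) (Q : u → Set E) (c : u → E) (r : u → ℝ) (b : E → ℝ), Countable u ∧
      IsBadPart μ (2 * 5 ^ finrank ℝ E * lam) Q c r b ∧
      (∀ᵐ y ∂μ, ‖f y - b y‖ₑ ≤ 5 ^ finrank ℝ E * lam) ∧
      ∫⁻ y, ‖f y - b y‖ₑ ∂μ ≤ ∫⁻ y, ‖f y‖ₑ ∂μ ∧
      ∑' j, ∫⁻ y in Q j, ‖b y‖ₑ ∂μ ≤ 2 * ∫⁻ y, ‖f y‖ₑ ∂μ ∧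
      ∀ N : ℝ, 0 ≤ N → ∑' j, μ (closedBall (c j) (N * r j)) ≤
        ENNReal.ofReal ((N * 5) ^ finrank ℝ E) * (lam⁻¹ * ∫⁻ y, ‖f y‖ₑ ∂μ) := by
  have : IsFiniteMeasure (μ.withDensity fun x => ‖f x‖ₑ) := isFiniteMeasure_withDensity hint
  obtain ⟨u, Q, h⟩ := exists_isStoppingPartition hint hlam
  have : Countable u := h.isStoppingFamily.countable
  obtain ⟨g, hg⟩ := exists_isAveragedOn μ h.measurableSet h.disjoint hf
  refine ⟨u, Q, _, _, _, h.isStoppingFamily.countable, h.isBadPart_sub hg hf hint, ?_, ?_, ?_,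
    fun N hN => ?_⟩
  · simpa only [sub_sub_cancel] using h.ae_enorm_le hg hf hint
  · simpa only [sub_sub_cancel] using
      hg.lintegral_enorm_le h.measurableSet h.disjoint h.measure_ne_top
  · calc ∑' j, ∫⁻ y in Q j, ‖f y - g y‖ₑ ∂μ ≤ ∑' j, 2 * ∫⁻ y in Q j, ‖f y‖ₑ ∂μ :=
          ENNReal.tsum_le_tsum (h.setLIntegral_enorm_sub_le hg hf)
      _ = 2 * ∫⁻ y in ⋃ j, Q j, ‖f y‖ₑ ∂μ := by
          rw [ENNReal.tsum_mul_left, lintegral_iUnion h.measurableSet h.disjoint]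
      _ ≤ _ := mul_le_mul_right (setLIntegral_le_lintegral _ _) 2
  · have := h.isStoppingFamily.tsum_measure_closedBall_le hlam (N := N * 5) (by positivity)
    rw [withDensity_apply _ MeasurableSet.univ, Measure.restrict_univ] at this
    simpa only [mul_assoc] using this

end CalderonZygmundDecomposition

section CubeGeometry

open Metric

variable {d : ℕ}

theorem measurableSet_box (a b : Fin d → ℝ) :
    MeasurableSet {y : Rd d | ∀ i, a i ≤ y i ∧ y i < b i} := by
  simp only [ofPred_forall]
  refine MeasurableSet.iInter fun i => ?_
  have hi : Measurable fun y : Rd d => y i := by fun_prop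
  exact (measurableSet_le measurable_const hi).inter (measurableSet_lt hi measurable_const)

theorem volume_box (a : Fin d → ℝ) {s : ℝ} (hs : 0 ≤ s) :
    volume {y : Rd d | ∀ i, a i ≤ y i ∧ y i < a i + s} = ENNReal.ofReal (s ^ d) := by
  have hpre : {y : Rd d | ∀ i, a i ≤ y i ∧ y i < a i + s} =
      (MeasurableEquiv.toLp 2 (Fin d → ℝ)).symm ⁻¹'
        (Set.pi univ fun i => Ico (a i) (a i + s)) := by
    ext y
    simp [Set.mem_pi]
  rw [hpre, (EuclideanSpace.volume_preserving_symm_measurableEquiv_toLp (Fin d)).measure_preimage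
    (MeasurableSet.univ_pi fun i => measurableSet_Ico).nullMeasurableSet, volume_pi_pi]
  simp [Real.volume_Ico, ENNReal.ofReal_pow hs]

theorem dist_le_sqrt_mul_of_forall_abs_sub_le {x y : Rd d} {s : ℝ} (hs : 0 ≤ s)
    (h : ∀ i, |x i - y i| ≤ s) : dist x y ≤ √d * s := by
  rw [EuclideanSpace.dist_eq]
  calc √(∑ i, dist (x i) (y i) ^ 2) ≤ √(∑ _i : Fin d, s ^ 2) := by
        gcongr with i
        exact h i
    _ = √d * s := by simp [Real.sqrt_sq hs]

namespace Cube

variable (Q : Cube d) {x y : Rd d}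

theorem measurableSet_set : MeasurableSet Q.set := measurableSet_box _ _

theorem measurableSet_dilate (t : ℝ) : MeasurableSet (Q.dilate t) := measurableSet_box _ _

theorem volume_dilate {t : ℝ} (ht : 0 ≤ t) :
    volume (Q.dilate t) = ENNReal.ofReal ((t * Q.l) ^ d) := by
  rw [← volume_box (fun i => Q.c i - t * Q.l / 2) (mul_nonneg ht Q.hl.le)]
  congr 1
  ext y
  simp only [Cube.dilate, mem_ofPred_eq]
  refine forall_congr' fun i => ?_
  rw [show Q.c i - t * Q.l / 2 + t * Q.l = Q.c i + t * Q.l / 2 by ring]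

theorem dilate_one : Q.dilate 1 = Q.set := by
  simp only [Cube.dilate, Cube.set, one_mul]

theorem volume_set : volume Q.set = ENNReal.ofReal (Q.l ^ d) := by
  rw [← dilate_one, volume_dilate Q zero_le_one, one_mul]

variable {Q}

theorem dist_le (hx : x ∈ Q.set) (hy : y ∈ Q.set) : dist x y ≤ √d * Q.l := by
  refine dist_le_sqrt_mul_of_forall_abs_sub_le Q.hl.le fun i => abs_le.2 ?_
  constructor <;> linarith [hx i, hy i]

theorem dist_le_of_mem_dilate_three (hx : x ∈ Q.set) (hy : y ∈ Q.dilate 3) :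
    dist x y ≤ √d * (2 * Q.l) := by
  refine dist_le_sqrt_mul_of_forall_abs_sub_le (by linarith [Q.hl]) fun i => abs_le.2 ?_
  constructor <;> linarith [hx i, hy i]

theorem le_dist_of_notMem_dilate_three (hx : x ∈ Q.set) (hy : y ∉ Q.dilate 3) :
    Q.l ≤ dist x y := by
  simp only [Cube.dilate, mem_ofPred_eq, not_forall, not_and_or, not_le, not_lt] at hy
  obtain ⟨i, hi⟩ := hy
  have hcoord : |x i - y i| ≤ dist x y := by
    simpa [dist_eq_norm] using PiLp.norm_apply_le (x - y) i
  refine le_trans (le_abs.2 ?_) hcoord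
  rcases hi with h | h
  · left; linarith [hx i]
  · right; linarith [hx i]

end Cube

theorem exists_four_mul_volume_inter_cube_le (d : ℕ) [NeZero d] :
    ∃ C : ℝ≥0∞, C ≠ ∞ ∧ ∀ E : Set (Rd d), volume E ≠ ∞ → ∃ U : Set (Rd d),
      volume U ≤ C * volume E ∧
      ∀ x ∉ U, ∀ Q : Cube d, x ∈ Q.set → 4 * volume (E ∩ Q.set) ≤ volume Q.set := by
  have hd : 0 < √d := Real.sqrt_pos.2 (Nat.cast_pos.2 (NeZero.pos d))
  set κ : ℝ≥0∞ := 4 * (ENNReal.ofReal (√d ^ d) * volume (ball (0 : Rd d) 1))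
  have hκ0 : κ ≠ 0 := mul_ne_zero (by norm_num) (mul_ne_zero (by positivity)
    (measure_ball_pos volume _ one_pos).ne')
  have hκtop : κ ≠ ∞ := by finiteness
  refine ⟨ENNReal.ofReal (5 ^ d) * κ, by finiteness, fun E hE => ?_⟩
  have : IsFiniteMeasure (volume.restrict E) := ⟨by simpa using hE.lt_top⟩
  obtain ⟨u, hu⟩ := exists_isStoppingFamily volume (volume.restrict E) (ENNReal.inv_ne_zero.2 hκtop)
  have : Countable u := hu.countable
  refine ⟨⋃ b ∈ u, closedBall b.1 (5 * b.2), ?_, fun x hx Q hxQ => ?_⟩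
  · rw [biUnion_eq_iUnion]
    refine (measure_iUnion_le _).trans ((hu.tsum_measure_closedBall_le
      (ENNReal.inv_ne_zero.2 hκtop) (by norm_num)).trans_eq ?_)
    rw [inv_inv, Measure.restrict_apply_univ, finrank_euclideanSpace_fin, ← mul_assoc]
  · calc 4 * volume (E ∩ Q.set)
        = 4 * volume.restrict E Q.set := by
          rw [Measure.restrict_apply Q.measurableSet_set, inter_comm]
      _ ≤ 4 * volume.restrict E (closedBall x (√d * Q.l)) := by
          gcongr
          exact fun y hy => Q.dist_le hy hxQ
      _ ≤ 4 * (κ⁻¹ * volume (closedBall x (√d * Q.l))) := by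
          gcongr
          exact hu.measure_le_of_notMem x hx _ (mul_pos hd Q.hl)
      _ = κ⁻¹ * κ * ENNReal.ofReal (Q.l ^ d) := by
          rw [Measure.addHaar_closedBall volume x (mul_pos hd Q.hl).le, finrank_euclideanSpace_fin,
            mul_pow, ENNReal.ofReal_mul (by positivity)]
          ring
      _ = volume Q.set := by rw [ENNReal.inv_mul_cancel hκ0 hκtop, one_mul, Q.volume_set]

end CubeGeometry

section Kernel

open Metric Topology

variable {d : ℕ} (S : CZO d)

namespace CZO

/-- A monotone majorant of `ω` on the whole real line. The term `√t` keeps the Dini condition and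
makes the modulus dominate the square-root decay coming from the shells that a pair of nearby
truncation spheres bounds. -/
def modulus (t : ℝ) : ℝ := S.ω (max t 0) + √t

theorem omega_nonneg {t : ℝ} (ht : 0 ≤ t) : 0 ≤ S.ω t :=
  S.ω_zero.symm.trans_le (S.ω_mono (mem_Ici.2 le_rfl) (mem_Ici.2 ht) ht)

theorem modulus_mono : Monotone S.modulus := fun _ _ h =>
  add_le_add (S.ω_mono (mem_Ici.2 (le_max_right _ _)) (mem_Ici.2 (le_max_right _ _))
    (max_le_max_right 0 h)) (Real.sqrt_le_sqrt h)

theorem modulus_nonneg (t : ℝ) : 0 ≤ S.modulus t :=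
  add_nonneg (S.omega_nonneg (le_max_right _ _)) (Real.sqrt_nonneg _)

theorem omega_le_modulus {t : ℝ} (ht : 0 ≤ t) : S.ω t ≤ S.modulus t := by
  rw [modulus, max_eq_left ht]
  exact le_add_of_nonneg_right (Real.sqrt_nonneg t)

theorem sqrt_le_modulus (t : ℝ) : √t ≤ S.modulus t :=
  le_add_of_nonneg_left (S.omega_nonneg (le_max_right t 0))

theorem omega_natCast_mul_le (n : ℕ) {t : ℝ} (ht : 0 ≤ t) : S.ω (n * t) ≤ n * S.ω t := by
  induction n with
  | zero => simp [S.ω_zero]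
  | succ n ih =>
    push_cast
    rw [add_one_mul, add_one_mul]
    exact (S.ω_subadd _ _ (by positivity) ht).trans (add_le_add_left ih _)

theorem modulus_natCast_mul_le (n : ℕ) {t : ℝ} (ht : 0 ≤ t) :
    S.modulus (n * t) ≤ n * S.modulus t := by
  have hsqrt : √(n * t) ≤ n * √t := by
    rw [Real.sqrt_mul n.cast_nonneg]
    gcongr
    rw [Real.sqrt_le_left n.cast_nonneg]
    exact_mod_cast Nat.le_self_pow two_ne_zero n
  rw [modulus, modulus, max_eq_left ht, max_eq_left (by positivity), mul_add]
  exact add_le_add (S.omega_natCast_mul_le n ht) hsqrt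

theorem modulus_mul_le (D : ℝ) {t : ℝ} (ht : 0 ≤ t) :
    S.modulus (D * t) ≤ ⌈D⌉₊ * S.modulus t :=
  (S.modulus_mono (by gcongr; exact Nat.le_ceil D)).trans (S.modulus_natCast_mul_le _ ht)

theorem lintegral_modulus_div_ne_top :
    ∫⁻ t in Ioo (0 : ℝ) 1, ENNReal.ofReal (S.modulus t / t) ≠ ∞ := by
  have hsqrt : IntegrableOn (fun t : ℝ => t ^ (-(1 / 2) : ℝ)) (Ioo 0 1) :=
    (intervalIntegral.integrableOn_Ioo_rpow_iff one_pos).2 (by norm_num)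
  have hint : IntegrableOn (fun t : ℝ => S.modulus t / t) (Ioo 0 1) := by
    refine (S.dini.add hsqrt).congr_fun (fun t ht => ?_) measurableSet_Ioo
    have hdiv : √t / t = t ^ (-(1 / 2) : ℝ) := by
      rw [Real.sqrt_eq_rpow, ← Real.rpow_sub_one ht.1.ne']
      norm_num
    simp only [Pi.add_apply, modulus]
    rw [max_eq_left ht.1.le, add_div, hdiv]
  exact ne_top_of_le_ne_top hint.2.ne (lintegral_mono fun t => Real.ofReal_le_enorm _)

/-- The constant bounding all Dini integrals of the modulus over exteriors of balls. -/
def diniConst : ℝ≥0∞ := (volume : Measure (Rd d)).toSphere univ *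
  ∫⁻ t in Ioo (0 : ℝ) 1, ENNReal.ofReal (S.modulus t / t)

theorem diniConst_ne_top : S.diniConst ≠ ∞ :=
  ENNReal.mul_ne_top (measure_ne_top _ _) S.lintegral_modulus_div_ne_top

theorem setLIntegral_modulus_div_le [NeZero d] (z : Rd d) {r : ℝ} (hr : 0 < r) :
    ∫⁻ y in {y | r < dist z y}, ENNReal.ofReal (S.modulus (r / dist z y) / dist z y ^ d) ≤
      S.diniConst := by
  have h := setLIntegral_dini_eq (volume : Measure (Rd d)) S.modulus_mono.measurable hr z
  rw [finrank_euclideanSpace_fin] at h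
  exact h.le

theorem exists_forall_omega_le {δ : ℝ} (hδ : 0 < δ) : ∃ η > 0, ∀ t, 0 ≤ t → t < η → S.ω t ≤ δ := by
  by_contra! hlarge
  have hge : ∀ t, 0 < t → δ ≤ S.ω t := fun t ht => by
    obtain ⟨s, hs₀, hst, hs⟩ := hlarge t ht
    exact hs.le.trans (S.ω_mono hs₀ ht.le hst.le)
  have hinv : IntegrableOn (fun t : ℝ => t ^ (-1 : ℝ)) (Ioo 0 1) := by
    refine Integrable.mono' (S.dini.div_const δ) (by fun_prop) ?_
    filter_upwards [ae_restrict_mem measurableSet_Ioo] with t ht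
    have ht₀ := ht.1
    rw [Real.rpow_neg_one, Real.norm_of_nonneg (by positivity), div_div, inv_eq_one_div,
      div_le_div_iff₀ ht₀ (by positivity)]
    nlinarith [hge t ht₀]
  rw [intervalIntegral.integrableOn_Ioo_rpow_iff one_pos] at hinv
  norm_num at hinv

theorem abs_kernel_sub_left_le {x x' y : Rd d} (h : x ≠ y) (h' : dist x x' ≤ dist x y / 2) :
    |S.K x y - S.K x' y| ≤ S.Cst * S.modulus (dist x x' / dist x y) / dist x y ^ d := by
  have hC := S.hCst
  calc |S.K x y - S.K x' y| ≤ S.Cst * S.ω (dist x x' / dist x y) / dist x y ^ d :=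
        (le_add_of_nonneg_right (abs_nonneg _)).trans (S.smooth x x' y h h')
    _ ≤ _ := by gcongr; exact S.omega_le_modulus (by positivity)

theorem abs_kernel_sub_right_le {x x' y : Rd d} (h : x ≠ y) (h' : dist x x' ≤ dist x y / 2) :
    |S.K y x - S.K y x'| ≤ S.Cst * S.modulus (dist x x' / dist x y) / dist x y ^ d := by
  have hC := S.hCst
  calc |S.K y x - S.K y x'| ≤ S.Cst * S.ω (dist x x' / dist x y) / dist x y ^ d :=
        (le_add_of_nonneg_left (abs_nonneg _)).trans (S.smooth x x' y h h')
    _ ≤ _ := by gcongr; exact S.omega_le_modulus (by positivity)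

theorem measurable_kernel (x : Rd d) : Measurable (S.K x) := S.measK.of_uncurry_left

theorem enorm_kernel_le {x y : Rd d} (h : x ≠ y) :
    ‖S.K x y‖ₑ ≤ ENNReal.ofReal (S.Cst / dist x y ^ d) := by
  rw [Real.enorm_eq_ofReal_abs]
  exact ENNReal.ofReal_le_ofReal (S.size x y h)

theorem continuousAt_kernel_left {x₀ y : Rd d} (h : x₀ ≠ y) :
    ContinuousAt (fun x => S.K x y) x₀ := by
  rw [Metric.continuousAt_iff]
  intro e he
  have hdist : 0 < dist x₀ y := dist_pos.2 h
  have hC := S.hCst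
  obtain ⟨η, hη, hω⟩ := S.exists_forall_omega_le (δ := e / 2 * dist x₀ y ^ d / S.Cst)
    (by positivity)
  refine ⟨min (dist x₀ y / 2) (η * dist x₀ y), by positivity, fun x hx => ?_⟩
  rw [dist_comm, lt_min_iff] at hx
  have hsmall : S.Cst * S.ω (dist x₀ x / dist x₀ y) / dist x₀ y ^ d ≤ e / 2 := by
    rw [div_le_iff₀ (by positivity), ← le_div_iff₀' hC]
    exact hω _ (by positivity) ((div_lt_iff₀ hdist).2 hx.2)
  rw [dist_comm, Real.dist_eq]
  linarith [S.smooth x₀ x y h hx.1.le, abs_nonneg (S.K y x₀ - S.K y x)]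

end CZO

theorem measurableSet_lt_dist (x : Rd d) (ε : ℝ) : MeasurableSet {y | ε < dist x y} :=
  measurableSet_lt measurable_const (by fun_prop)

theorem setLIntegral_rpow_inv_dist_pow_ne_top [NeZero d] {q : ℝ} (hq : 1 < q) (x : Rd d) {ε : ℝ}
    (hε : 0 < ε) :
    ∫⁻ y in {y | ε < dist x y}, ENNReal.ofReal ((dist x y ^ d)⁻¹) ^ q ≠ ∞ := by
  have hd : (0 : ℝ) < d := Nat.cast_pos.2 (NeZero.pos d)
  have hint : Integrable fun y : Rd d =>
      (ε / (1 + ε)) ^ (-(d * q)) * (1 + dist x y) ^ (-(d * q)) := by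
    have := integrable_one_add_norm (E := Rd d) (μ := volume) (r := d * q)
      (by rw [finrank_euclideanSpace_fin]; nlinarith)
    simpa only [dist_eq_norm] using (this.comp_sub_left x).const_mul _
  refine ne_top_of_le_ne_top hint.2.ne (le_trans (setLIntegral_mono' (measurableSet_lt_dist x ε)
    fun y hy => ?_) (setLIntegral_le_lintegral _ _))
  have hy : ε < dist x y := hy
  have hpos : 0 < dist x y := hε.trans hy
  rw [ENNReal.ofReal_rpow_of_pos (by positivity)]
  refine (ENNReal.ofReal_le_ofReal ?_).trans (Real.ofReal_le_enorm _)
  beta_reduce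
  rw [← Real.mul_rpow (by positivity) (by positivity), ← Real.rpow_natCast, ← Real.rpow_neg hpos.le,
    ← Real.rpow_mul hpos.le, neg_mul]
  refine Real.rpow_le_rpow_of_nonpos (by positivity) ?_ (by nlinarith)
  rw [div_mul_eq_mul_div, div_le_iff₀ (by positivity)]
  nlinarith

/-- Measurable functions for which every truncation of a singular integral converges absolutely. -/
structure TailIntegrable (h : Rd d → ℝ) : Prop where
  measurable : Measurable h
  setLIntegral_ne_top : ∀ (x : Rd d) (ε : ℝ), 0 < ε →
    ∫⁻ y in {y | ε < dist x y}, ‖h y‖ₑ * ENNReal.ofReal ((dist x y ^ d)⁻¹) ≠ ∞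

namespace TailIntegrable

variable {g h : Rd d → ℝ}

theorem mono (hh : TailIntegrable h) (hg : Measurable g) (hle : ∀ y, ‖g y‖ₑ ≤ ‖h y‖ₑ) :
    TailIntegrable g :=
  ⟨hg, fun x ε hε => ne_top_of_le_ne_top (hh.setLIntegral_ne_top x ε hε)
    (lintegral_mono fun y => mul_le_mul' (hle y) le_rfl)⟩

theorem indicator (hh : TailIntegrable h) {A : Set (Rd d)} (hA : MeasurableSet A) :
    TailIntegrable (A.indicator h) :=
  hh.mono (hh.measurable.indicator hA) fun _ => enorm_indicator_le_enorm_self _ _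

theorem neg (hh : TailIntegrable h) : TailIntegrable fun y => -h y :=
  hh.mono hh.measurable.neg fun y => (enorm_neg (h y)).le

theorem add (hh : TailIntegrable h) (hg : TailIntegrable g) :
    TailIntegrable fun y => h y + g y := by
  refine ⟨hh.measurable.add hg.measurable, fun x ε hε => ?_⟩
  refine ne_top_of_le_ne_top (ENNReal.add_ne_top.2
    ⟨hh.setLIntegral_ne_top x ε hε, hg.setLIntegral_ne_top x ε hε⟩) ?_
  have hm := hh.measurable
  rw [← lintegral_add_left (by fun_prop)]
  refine lintegral_mono fun y => ?_
  rw [← add_mul]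
  exact mul_le_mul' (enorm_add_le _ _) le_rfl

theorem sub (hh : TailIntegrable h) (hg : TailIntegrable g) :
    TailIntegrable fun y => h y - g y := by
  simpa only [sub_eq_add_neg] using hh.add hg.neg

theorem of_integrable (hm : Measurable h) (hint : ∫⁻ y, ‖h y‖ₑ ≠ ∞) : TailIntegrable h := by
  refine ⟨hm, fun x ε hε => ?_⟩
  refine ne_top_of_le_ne_top (ENNReal.mul_ne_top hint (ENNReal.ofReal_ne_top (r := (ε ^ d)⁻¹))) ?_
  rw [← lintegral_mul_const _ hm.enorm]
  refine (setLIntegral_mono' (measurableSet_lt_dist x ε) fun y hy => ?_).trans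
    (setLIntegral_le_lintegral _ _)
  have : ε < dist x y := hy
  gcongr

theorem of_lintegral_rpow_ne_top [NeZero d] {p : ℝ} (hp : 1 < p) (hm : Measurable h)
    (hint : ∫⁻ y, ‖h y‖ₑ ^ p ≠ ∞) : TailIntegrable h := by
  refine ⟨hm, fun x ε hε => ?_⟩
  obtain ⟨q, hpq⟩ : ∃ q, p.HolderConjugate q := ⟨_, Real.HolderConjugate.conjExponent hp⟩
  refine ne_top_of_le_ne_top ?_ (ENNReal.lintegral_mul_le_Lp_mul_Lq _ hpq
    hm.enorm.aemeasurable (by fun_prop))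
  exact ENNReal.mul_ne_top
    (ENNReal.rpow_ne_top_of_nonneg hpq.one_div_nonneg
      (ne_top_of_le_ne_top hint (setLIntegral_le_lintegral _ _)))
    (ENNReal.rpow_ne_top_of_nonneg hpq.symm.one_div_nonneg
      (setLIntegral_rpow_inv_dist_pow_ne_top hpq.symm.lt x hε))

theorem integrableOn_kernel_mul (hh : TailIntegrable h) (x : Rd d) {ε : ℝ} (hε : 0 < ε) :
    IntegrableOn (fun y => S.K x y * h y) {y | ε < dist x y} := by
  refine ⟨((S.measurable_kernel x).mul hh.measurable).aestronglyMeasurable, ?_⟩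
  refine lt_of_le_of_lt ?_ (ENNReal.mul_ne_top (a := ENNReal.ofReal S.Cst) ENNReal.ofReal_ne_top
    (hh.setLIntegral_ne_top x ε hε)).lt_top
  have hm := hh.measurable
  rw [← lintegral_const_mul _ (by fun_prop)]
  refine setLIntegral_mono' (measurableSet_lt_dist x ε) fun y hy => ?_
  rw [enorm_mul, mul_left_comm, ← ENNReal.ofReal_mul S.hCst.le, ← div_eq_mul_inv, mul_comm]
  gcongr
  exact S.enorm_kernel_le (dist_pos.1 (hε.trans hy))

end TailIntegrable

end Kernel

section Truncations

open Metric Topology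

variable {d : ℕ}

/-- The `i`-th spherical shell cut out around `x` by a sequence `ε` of truncation radii. -/
def annulus (x : Rd d) (ε : ℕ → ℝ) (i : ℕ) : Set (Rd d) :=
  {y | ε (i + 1) < dist x y} \ {y | ε i < dist x y}

theorem measurableSet_annulus (x : Rd d) (ε : ℕ → ℝ) (i : ℕ) : MeasurableSet (annulus x ε i) :=
  (measurableSet_lt_dist _ _).diff (measurableSet_lt_dist _ _)

theorem mem_annulus {x y : Rd d} {ε : ℕ → ℝ} {i : ℕ} :
    y ∈ annulus x ε i ↔ ε (i + 1) < dist x y ∧ dist x y ≤ ε i := by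
  simp only [annulus, Set.mem_sdiff, mem_ofPred_eq, not_lt]

theorem pairwise_disjoint_annulus (x : Rd d) {ε : ℕ → ℝ} (hε : Antitone ε) :
    Pairwise (Function.onFun Disjoint (annulus x ε)) := by
  refine (pairwise_disjoint_on _).2 fun i j hij => Set.disjoint_left.2 fun y hyi hyj => ?_
  exact absurd ((mem_annulus.1 hyj).2.trans (hε (Nat.succ_le_of_lt hij)))
    (not_le.2 (mem_annulus.1 hyi).1)

theorem tsum_setLIntegral_annulus_inter_le (x : Rd d) {ε : ℕ → ℝ} (hε : Antitone ε)
    {F : Set (Rd d)} (hF : MeasurableSet F) (w : Rd d → ℝ≥0∞) :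
    ∑' i, ∫⁻ y in annulus x ε i ∩ F, w y ≤ ∫⁻ y in F, w y := by
  rw [← lintegral_iUnion fun i => (measurableSet_annulus x ε i).inter hF]
  · exact lintegral_mono_set (iUnion_subset fun i => inter_subset_right)
  · exact fun i j hij =>
      (pairwise_disjoint_annulus x hε hij).mono inter_subset_left inter_subset_left

/-- The sequences of truncation radii admitted in the definition of `CZO.var`. -/
def IsTruncSeq (ε : ℕ → ℝ) : Prop := StrictAnti ε ∧ (∀ i, 0 < ε i) ∧ Tendsto ε atTop (𝓝 0)

namespace CZO

variable (S : CZO d) {ρ : ℝ} {g h : Rd d → ℝ} {x : Rd d} {ε : ℕ → ℝ}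

/-- The sizes of the increments of the truncations along a sequence of radii. -/
def increment (h : Rd d → ℝ) (x : Rd d) (ε : ℕ → ℝ) (i : ℕ) : ℝ≥0∞ :=
  ‖S.trunc (ε (i + 1)) h x - S.trunc (ε i) h x‖ₑ

theorem var_eq_iSup_seqNorm (ρ : ℝ) (h : Rd d → ℝ) (x : Rd d) :
    S.var ρ h x = ⨆ (ε : ℕ → ℝ) (_ : IsTruncSeq ε), seqNorm ρ (S.increment h x ε) := by
  simp only [CZO.var, seqNorm, increment, Real.enorm_eq_ofReal_abs, IsTruncSeq]

theorem seqNorm_increment_le_var (hε : IsTruncSeq ε) :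
    seqNorm ρ (S.increment h x ε) ≤ S.var ρ h x := by
  rw [var_eq_iSup_seqNorm]
  exact le_iSup₂ (f := fun ε (_ : IsTruncSeq ε) => seqNorm ρ (S.increment h x ε)) ε hε

theorem var_le {B : ℝ≥0∞} (hB : ∀ ε, IsTruncSeq ε → seqNorm ρ (S.increment h x ε) ≤ B) :
    S.var ρ h x ≤ B := by
  rw [var_eq_iSup_seqNorm]
  exact iSup₂_le hB

theorem trunc_sub_trunc_eq (hh : TailIntegrable h) (x : Rd d) (hε : IsTruncSeq ε) (i : ℕ) :
    S.trunc (ε (i + 1)) h x - S.trunc (ε i) h x = ∫ y in annulus x ε i, S.K x y * h y :=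
  (setIntegral_sdiff (measurableSet_lt_dist x (ε i))
    (hh.integrableOn_kernel_mul S x (hε.2.1 (i + 1)))
    fun _ hy => lt_of_le_of_lt (hε.1.antitone i.le_succ) hy).symm

theorem trunc_sub (hh : TailIntegrable h) (hg : TailIntegrable g) (x : Rd d) {r : ℝ} (hr : 0 < r) :
    S.trunc r (fun y => h y - g y) x = S.trunc r h x - S.trunc r g x := by
  simp only [CZO.trunc, mul_sub]
  exact integral_sub (hh.integrableOn_kernel_mul S x hr) (hg.integrableOn_kernel_mul S x hr)

theorem trunc_neg (h : Rd d → ℝ) (x : Rd d) (r : ℝ) :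
    S.trunc r (fun y => -h y) x = -S.trunc r h x := by
  simp only [CZO.trunc, mul_neg, integral_neg]

theorem var_neg (ρ : ℝ) (h : Rd d → ℝ) (x : Rd d) :
    S.var ρ (fun y => -h y) x = S.var ρ h x := by
  have hincr : ∀ ε, S.increment (fun y => -h y) x ε = S.increment h x ε := fun ε => by
    funext i
    rw [increment, trunc_neg, trunc_neg, neg_sub_neg, enorm_sub_rev, increment]
  simp only [var_eq_iSup_seqNorm, hincr]

theorem var_sub_le (hρ : 1 ≤ ρ) (hh : TailIntegrable h) (hg : TailIntegrable g) (x : Rd d) :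
    S.var ρ (fun y => h y - g y) x ≤ S.var ρ h x + S.var ρ g x := by
  refine S.var_le fun ε hε => ?_
  have hle : ∀ i, S.increment (fun y => h y - g y) x ε i ≤
      S.increment h x ε i + S.increment g x ε i := fun i => by
    simp only [increment]
    rw [S.trunc_sub hh hg x (hε.2.1 _), S.trunc_sub hh hg x (hε.2.1 _), sub_sub_sub_comm]
    exact enorm_sub_le
  exact (seqNorm_mono (zero_le_one.trans hρ) hle).trans ((seqNorm_add_le hρ _ _).trans
    (add_le_add (S.seqNorm_increment_le_var hε) (S.seqNorm_increment_le_var hε)))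

theorem var_add_le (hρ : 1 ≤ ρ) (hh : TailIntegrable h) (hg : TailIntegrable g) (x : Rd d) :
    S.var ρ (fun y => h y + g y) x ≤ S.var ρ h x + S.var ρ g x := by
  simpa only [sub_neg_eq_add, var_neg] using S.var_sub_le hρ hh hg.neg x

theorem continuousAt_indicator_kernel_mul {x₀ y : Rd d} {r : ℝ} (hr : 0 < r)
    (hy : dist x₀ y ≠ r) (h : Rd d → ℝ) :
    ContinuousAt (fun x => {y | r < dist x y}.indicator (fun y => S.K x y * h y) y) x₀ := by
  have hdist : ContinuousAt (fun x : Rd d => dist x y) x₀ := by fun_prop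
  rcases lt_or_gt_of_ne hy with hlt | hgt
  · refine (continuousAt_const (y := (0 : ℝ))).congr ?_
    filter_upwards [hdist.eventually_lt continuousAt_const hlt] with x hx
    exact (indicator_of_notMem (s := {y | r < dist x y}) (not_lt.2 hx.le) _).symm
  · refine ((S.continuousAt_kernel_left (dist_pos.1 (hr.trans hgt))).mul
      (continuousAt_const (y := h y))).congr ?_
    filter_upwards [continuousAt_const.eventually_lt hdist hgt] with x hx
    exact (indicator_of_mem (s := {y | r < dist x y}) hx fun y => S.K x y * h y).symm

theorem norm_indicator_kernel_mul_le {x₀ : Rd d} {r : ℝ} (hr : 0 < r)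
    (hx : dist x x₀ < r / 2) (h : Rd d → ℝ) (y : Rd d) :
    ‖{y | r < dist x y}.indicator (fun y => S.K x y * h y) y‖ ≤
      {y | r / 2 < dist x₀ y}.indicator
        (fun y => S.Cst * 2 ^ d * ‖h y * (dist x₀ y ^ d)⁻¹‖) y := by
  have hC := S.hCst
  by_cases hy : r < dist x y
  swap
  · rw [indicator_of_notMem (show y ∉ {y | r < dist x y} from hy), norm_zero]
    exact indicator_nonneg (fun y _ => by positivity) y
  have htri := dist_triangle x x₀ y
  have htri' := dist_triangle_left x₀ y x
  have hy₀ : r / 2 < dist x₀ y := by linarith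
  rw [indicator_of_mem (show y ∈ {y | r < dist x y} from hy),
    indicator_of_mem (show y ∈ {y | r / 2 < dist x₀ y} from hy₀), norm_mul, norm_mul,
    Real.norm_of_nonneg (r := (dist x₀ y ^ d)⁻¹) (by positivity), mul_comm ‖h y‖, ← mul_assoc]
  gcongr
  have hpos : 0 < dist x₀ y := by linarith
  calc ‖S.K x y‖ ≤ S.Cst / dist x y ^ d := S.size x y (dist_pos.1 (by linarith))
    _ ≤ S.Cst / (dist x₀ y / 2) ^ d := by gcongr; linarith
    _ = S.Cst * 2 ^ d * (dist x₀ y ^ d)⁻¹ := by rw [div_pow]; field_simp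

theorem continuous_trunc [NeZero d] (hh : TailIntegrable h) {r : ℝ} (hr : 0 < r) :
    Continuous (S.trunc r h) := by
  refine continuous_iff_continuousAt.2 fun x₀ => ?_
  have htrunc : S.trunc r h =
      fun x => ∫ y, {y | r < dist x y}.indicator (fun y => S.K x y * h y) y := by
    funext x
    rw [integral_indicator (measurableSet_lt_dist x r), CZO.trunc]
  have hm := hh.measurable
  have htail : IntegrableOn (fun y => h y * (dist x₀ y ^ d)⁻¹) {y | r / 2 < dist x₀ y} := by
    refine ⟨by fun_prop, (le_of_eq ?_).trans_lt (hh.setLIntegral_ne_top x₀ _ (half_pos hr)).lt_top⟩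
    refine lintegral_congr fun y => ?_
    rw [enorm_mul, Real.enorm_of_nonneg (r := (dist x₀ y ^ d)⁻¹) (by positivity)]
  have hsphere : ∀ᵐ y : Rd d, dist x₀ y ≠ r := by
    rw [ae_iff]
    convert Measure.addHaar_sphere volume x₀ r using 2
    ext y
    simp only [mem_ofPred_eq, not_not, mem_sphere, dist_comm x₀]
  rw [htrunc]
  refine continuousAt_of_dominated (Eventually.of_forall fun x =>
      (((S.measurable_kernel x).mul hm).indicator
        (measurableSet_lt_dist x r)).aestronglyMeasurable) ?_
    ((integrable_indicator_iff (measurableSet_lt_dist x₀ _)).2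
      (htail.norm.const_mul (S.Cst * 2 ^ d))) ?_
  · filter_upwards [ball_mem_nhds x₀ (half_pos hr)] with x hx
    exact Eventually.of_forall (S.norm_indicator_kernel_mul_le hr hx h)
  · filter_upwards [hsphere] with y hy
    exact S.continuousAt_indicator_kernel_mul hr hy h

theorem measurable_var [NeZero d] (hρ : 0 ≤ ρ) (hh : TailIntegrable h) :
    Measurable (S.var ρ h) := by
  suffices LowerSemicontinuous (S.var ρ h) from this.measurable
  rw [funext (S.var_eq_iSup_seqNorm ρ h)]
  refine lowerSemicontinuous_biSup fun ε hε => ?_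
  refine Continuous.comp_lowerSemicontinuous (g := fun t : ℝ≥0∞ => t ^ (1 / ρ))
    ENNReal.continuous_rpow_const (lowerSemicontinuous_tsum fun i => ?_)
    (fun a b hab => ENNReal.rpow_le_rpow hab (by positivity))
  refine Continuous.lowerSemicontinuous (ENNReal.continuous_rpow_const.comp ?_)
  exact ((S.continuous_trunc hh (hε.2.1 _)).sub (S.continuous_trunc hh (hε.2.1 _))).enorm

end CZO

end Truncations

section Transport

open Metric

theorem one_le_sqrt_natCast (d : ℕ) [NeZero d] : 1 ≤ √(d : ℝ) :=
  Real.one_le_sqrt.2 (mod_cast NeZero.one_le)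

theorem enorm_indicator_sub_indicator_le {α : Type*} (A B : Set α) (u v : α → ℝ) (y : α) :
    ‖A.indicator u y - B.indicator v y‖ₑ ≤
      A.indicator (fun y => ‖u y - v y‖ₑ) y + (symmDiff A B).indicator (fun y => ‖v y‖ₑ) y := by
  by_cases hA : y ∈ A <;> by_cases hB : y ∈ B <;>
    simp only [indicator, Set.mem_symmDiff, hA, hB, not_true, not_false_iff, and_true, and_false,
      or_false, or_true, if_true, if_false, sub_zero, zero_sub, enorm_neg, enorm_zero, add_zero,
      zero_add, le_refl]
  calc ‖u y‖ₑ = ‖(u y - v y) + v y‖ₑ := by rw [sub_add_cancel]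
    _ ≤ ‖u y - v y‖ₑ + ‖v y‖ₑ := enorm_add_le _ _

theorem enorm_setIntegral_le_add {α : Type*} [MeasurableSpace α] {μ : Measure α} {A B : Set α}
    {u v : α → ℝ} (hA : MeasurableSet A) (hB : MeasurableSet B) (hu : IntegrableOn u A μ)
    (hv : IntegrableOn v B μ) (hum : Measurable u) (hvm : Measurable v) :
    ‖∫ y in A, u y ∂μ‖ₑ ≤ ‖∫ y in B, v y ∂μ‖ₑ +
      (∫⁻ y in A, ‖u y - v y‖ₑ ∂μ + ∫⁻ y in symmDiff A B, ‖v y‖ₑ ∂μ) := by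
  rw [← sub_add_cancel (∫ y in A, u y ∂μ) (∫ y in B, v y ∂μ), add_comm ‖∫ y in B, v y ∂μ‖ₑ]
  refine (enorm_add_le _ _).trans (add_le_add ?_ le_rfl)
  rw [← integral_indicator hA, ← integral_indicator hB, ← integral_sub
    ((integrable_indicator_iff hA).2 hu) ((integrable_indicator_iff hB).2 hv),
    ← lintegral_indicator hA, ← lintegral_indicator (hA.symmDiff hB),
    ← lintegral_add_left (Measurable.indicator (by fun_prop) hA)]
  exact (enorm_integral_le_lintegral_enorm _).trans
    (lintegral_mono (enorm_indicator_sub_indicator_le A B u v))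

theorem setLIntegral_enorm_mul_le {α : Type*} [MeasurableSpace α] {μ : Measure α} {A F : Set α}
    {k h : α → ℝ} {L : ℝ≥0∞} (hF : MeasurableSet F) (hk : Measurable k)
    (hL : ∀ᵐ y ∂μ, ‖h y‖ₑ ≤ L) (h0 : ∀ y ∉ F, h y = 0) :
    ∫⁻ y in A, ‖k y * h y‖ₑ ∂μ ≤ L * ∫⁻ y in A ∩ F, ‖k y‖ₑ ∂μ := by
  rw [← lintegral_const_mul _ hk.enorm, inter_comm, ← Measure.restrict_restrict hF,
    ← lintegral_indicator hF]
  refine lintegral_mono_ae ((ae_restrict_of_ae hL).mono fun y hy => ?_)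
  by_cases hyF : y ∈ F
  · rw [indicator_of_mem hyF, enorm_mul, mul_comm]
    gcongr
  · simp only [h0 y hyF, mul_zero, enorm_zero, zero_le]

variable {d : ℕ}

/-- The points lying inside exactly one of the two balls of radius `R` around `ξ` and `x`. -/
def crossing (ξ x : Rd d) (R : ℝ) : Set (Rd d) :=
  symmDiff {y | R < dist ξ y} {y | R < dist x y}

theorem measurableSet_crossing (ξ x : Rd d) (R : ℝ) : MeasurableSet (crossing ξ x R) :=
  (measurableSet_lt_dist ξ R).symmDiff (measurableSet_lt_dist x R)

theorem abs_dist_sub_le_of_mem_crossing {ξ x y : Rd d} {R : ℝ} (hy : y ∈ crossing ξ x R) :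
    |dist x y - R| ≤ dist x ξ := by
  have h₁ := dist_triangle x ξ y
  have h₂ := dist_triangle_left ξ y x
  rw [abs_le]
  rcases hy with ⟨hξ, hx⟩ | ⟨hx, hξ⟩ <;> simp only [mem_ofPred_eq, not_lt] at hξ hx <;>
    constructor <;> linarith

theorem symmDiff_annulus_subset (ξ x : Rd d) (ε : ℕ → ℝ) (i : ℕ) :
    symmDiff (annulus ξ ε i) (annulus x ε i) ⊆
      (crossing ξ x (ε i) ∪ crossing ξ x (ε (i + 1))) ∩ (annulus ξ ε i ∪ annulus x ε i) := by
  intro y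
  simp only [annulus, crossing, Set.mem_symmDiff, Set.mem_sdiff, mem_inter_iff, mem_union,
    mem_ofPred_eq]
  tauto

/-- The mass, for the weight `|x - y|^{-d}`, of the part of the two `i`-th shells outside `3Q` that
lies between the spheres of radius `R` around `ξ` and `x`. -/
def crossingMass (Q : Cube d) (ξ x : Rd d) (ε : ℕ → ℝ) (i : ℕ) (R : ℝ) : ℝ≥0∞ :=
  ∫⁻ y in crossing ξ x R ∩ (annulus ξ ε i ∪ annulus x ε i) ∩ (Q.dilate 3)ᶜ,
    ENNReal.ofReal ((dist x y ^ d)⁻¹)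

theorem setLIntegral_sqrt_div_crossing_le [NeZero d] {Q : Cube d} {ξ x : Rd d} (hξ : ξ ∈ Q.set)
    (hx : x ∈ Q.set) {R : ℝ} (hR : 0 < R) :
    ∫⁻ y in crossing ξ x R ∩ (Q.dilate 3)ᶜ, ENNReal.ofReal (√(dist x y / Q.l) / dist x y ^ d) ≤
      shellConst (volume : Measure (Rd d)) (1 + 2 * √d) := by
  have hl := Q.hl
  have hd := one_le_sqrt_natCast d
  have hδ : 0 < √d * Q.l := by positivity
  have hsum := tsum_setLIntegral_sqrt_div_le (volume : Measure (Rd d))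
    (ι := Unit) (A := fun _ => crossing ξ x R ∩ (Q.dilate 3)ᶜ) (s := fun _ => Q.l)
    (κ := 1 + 2 * √d) (R := R + √d * Q.l) (by positivity) (by positivity) x
    (fun _ => (measurableSet_crossing ξ x R).inter (Q.measurableSet_dilate 3).compl)
    (fun i j hij => absurd (Subsingleton.elim i j) hij) (fun _ => hl) fun _ y hy => by
      have habs := abs_le.1 ((abs_dist_sub_le_of_mem_crossing hy.1).trans (Cube.dist_le hx hξ))
      have hfar := Cube.le_dist_of_notMem_dilate_three hx hy.2
      have hmul : √d * Q.l ≤ √d * dist x y := by gcongr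
      refine ⟨by linarith, abs_le.2 ⟨?_, ?_⟩, ?_⟩ <;> nlinarith
  simpa only [tsum_fintype, Finset.univ_unique, Finset.sum_singleton, finrank_euclideanSpace_fin]
    using hsum

namespace CZO

variable (S : CZO d) {ξ x : Rd d} {Q : Cube d}

theorem setLIntegral_kernel_sub_far_le [NeZero d] {δ : ℝ} (hδ : 0 < δ) (hξ : dist x ξ ≤ δ) :
    ∫⁻ y in {y | 2 * δ < dist x y}, ‖S.K ξ y - S.K x y‖ₑ ≤
      ENNReal.ofReal S.Cst * S.diniConst := by
  have hC := S.hCst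
  have hm := S.modulus_mono.measurable
  refine le_trans (setLIntegral_mono' (measurableSet_lt_dist x _) fun y hy => ?_)
    ((lintegral_const_mul (ENNReal.ofReal S.Cst) (by fun_prop)).trans_le
      (mul_le_mul_right (S.setLIntegral_modulus_div_le x (r := 2 * δ) (by positivity)) _))
  have hy : 2 * δ < dist x y := hy
  have hpos : 0 < dist x y := by linarith
  rw [Real.enorm_eq_ofReal_abs, ← ENNReal.ofReal_mul hC.le, abs_sub_comm]
  refine ENNReal.ofReal_le_ofReal
    ((S.abs_kernel_sub_left_le (dist_pos.1 hpos) (by linarith)).trans ?_)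
  have hmono : S.modulus (dist x ξ / dist x y) ≤ S.modulus (2 * δ / dist x y) :=
    S.modulus_mono (by gcongr; linarith)
  rw [mul_div_assoc]
  gcongr

theorem enorm_kernel_sub_le_of_notMem_dilate_three (hξ : ξ ∈ Q.set) (hx : x ∈ Q.set) {y : Rd d}
    (hy : y ∉ Q.dilate 3) : ‖S.K ξ y - S.K x y‖ₑ ≤ ENNReal.ofReal (2 * S.Cst / Q.l ^ d) := by
  have hl := Q.hl
  have hC := S.hCst
  have hle : ∀ z ∈ Q.set, ‖S.K z y‖ₑ ≤ ENNReal.ofReal (S.Cst / Q.l ^ d) := fun z hz => by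
    have hfar := Cube.le_dist_of_notMem_dilate_three hz hy
    refine (S.enorm_kernel_le (dist_pos.1 (hl.trans_le hfar))).trans ?_
    gcongr
  refine enorm_sub_le.trans ((add_le_add (hle ξ hξ) (hle x hx)).trans_eq ?_)
  rw [← ENNReal.ofReal_add (by positivity) (by positivity)]
  congr 1
  ring

theorem exists_setLIntegral_kernel_sub_le [NeZero d] : ∃ C ≠ ∞, ∀ (Q : Cube d), ∀ ξ ∈ Q.set,
    ∀ x ∈ Q.set, ∫⁻ y in (Q.dilate 3)ᶜ, ‖S.K ξ y - S.K x y‖ₑ ≤ C := by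
  have hdini := S.diniConst_ne_top
  refine ⟨ENNReal.ofReal S.Cst * S.diniConst +
    ENNReal.ofReal (2 * S.Cst * (2 * √d) ^ d) * volume (ball (0 : Rd d) 1), ?_,
    fun Q ξ hξ x hx => ?_⟩
  · have := (measure_ball_lt_top (μ := volume) (x := (0 : Rd d)) (r := 1)).ne
    finiteness
  have hl := Q.hl
  have hC := S.hCst
  have hd := one_le_sqrt_natCast d
  have hsub : (Q.dilate 3)ᶜ ⊆ {y | 2 * (√d * Q.l) < dist x y} ∪
      ((Q.dilate 3)ᶜ ∩ closedBall x (2 * (√d * Q.l))) := fun y hy => by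
    by_cases h : 2 * (√d * Q.l) < dist x y
    exacts [Or.inl h, Or.inr ⟨hy, mem_closedBall'.2 (not_lt.1 h)⟩]
  refine (lintegral_mono_set hsub).trans ((lintegral_union_le _ _ _).trans (add_le_add
    (S.setLIntegral_kernel_sub_far_le (by positivity) (Cube.dist_le hx hξ)) ?_))
  calc ∫⁻ y in (Q.dilate 3)ᶜ ∩ closedBall x (2 * (√d * Q.l)), ‖S.K ξ y - S.K x y‖ₑ
      ≤ ∫⁻ _ in (Q.dilate 3)ᶜ ∩ closedBall x (2 * (√d * Q.l)),
          ENNReal.ofReal (2 * S.Cst / Q.l ^ d) :=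
        setLIntegral_mono' ((Q.measurableSet_dilate 3).compl.inter measurableSet_closedBall)
          fun y hy => S.enorm_kernel_sub_le_of_notMem_dilate_three hξ hx hy.1
    _ ≤ ENNReal.ofReal (2 * S.Cst / Q.l ^ d) * volume (closedBall x (2 * (√d * Q.l))) := by
        rw [setLIntegral_const]
        gcongr
        exact inter_subset_right
    _ = ENNReal.ofReal (2 * S.Cst * (2 * √d) ^ d) * volume (ball (0 : Rd d) 1) := by
        rw [Measure.addHaar_closedBall _ _ (by positivity), finrank_euclideanSpace_fin, ← mul_assoc,
          ← ENNReal.ofReal_mul (by positivity), ← mul_assoc, mul_pow _ Q.l]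
        congr 2
        field_simp

theorem setLIntegral_sqrt_div_compl_dilate_le [NeZero d] (hx : x ∈ Q.set) :
    ∫⁻ y in (Q.dilate 3)ᶜ, ENNReal.ofReal (√(Q.l / dist x y) / dist x y ^ d) ≤
      2 * S.diniConst := by
  have hl := Q.hl
  have hm := S.modulus_mono.measurable
  have hsub : (Q.dilate 3)ᶜ ⊆ {y | Q.l / 2 < dist x y} := fun y hy =>
    (half_lt_self hl).trans_le (Cube.le_dist_of_notMem_dilate_three hx hy)
  refine (lintegral_mono_set hsub).trans (le_trans
    (setLIntegral_mono' (measurableSet_lt_dist x _) fun y hy => ?_)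
    ((lintegral_const_mul 2 (by fun_prop)).trans_le
      (mul_le_mul_right (S.setLIntegral_modulus_div_le x (r := Q.l / 2) (by positivity)) _)))
  have hpos : 0 < dist x y := (half_pos hl).trans hy
  have hdouble := S.modulus_natCast_mul_le 2 (t := Q.l / 2 / dist x y) (by positivity)
  rw [show ((2 : ℕ) : ℝ) * (Q.l / 2 / dist x y) = Q.l / dist x y by push_cast; ring,
    Nat.cast_ofNat] at hdouble
  calc ENNReal.ofReal (√(Q.l / dist x y) / dist x y ^ d)
      ≤ ENNReal.ofReal (2 * (S.modulus (Q.l / 2 / dist x y) / dist x y ^ d)) := by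
        rw [← mul_div_assoc]
        gcongr
        exact (S.sqrt_le_modulus _).trans hdouble
    _ = 2 * ENNReal.ofReal (S.modulus (Q.l / 2 / dist x y) / dist x y ^ d) := by
        rw [ENNReal.ofReal_mul zero_le_two, ENNReal.ofReal_ofNat]

theorem tsum_sq_crossingMass_le [NeZero d] (hξ : ξ ∈ Q.set) (hx : x ∈ Q.set)
    {ε : ℕ → ℝ} (hε : Antitone ε) {R : ℕ → ℝ} (hR : ∀ i, 0 < R i) :
    ∑' i, crossingMass Q ξ x ε i (R i) ^ 2 ≤
      shellConst (volume : Measure (Rd d)) (1 + 2 * √d) * (2 * (2 * S.diniConst)) := by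
  set F := (Q.dilate 3)ᶜ
  have hF : MeasurableSet F := (Q.measurableSet_dilate 3).compl
  set b : Rd d → ℝ≥0∞ := fun y => ENNReal.ofReal (√(Q.l / dist x y) / dist x y ^ d)
  have hterm : ∀ i, crossingMass Q ξ x ε i (R i) ^ 2 ≤
      shellConst (volume : Measure (Rd d)) (1 + 2 * √d) *
        ((∫⁻ y in annulus ξ ε i ∩ F, b y) + ∫⁻ y in annulus x ε i ∩ F, b y) := fun i => by
    have hm : MeasurableSet (crossing ξ x (R i) ∩ (annulus ξ ε i ∪ annulus x ε i) ∩ F) :=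
      ((measurableSet_crossing _ _ _).inter
        ((measurableSet_annulus _ _ _).union (measurableSet_annulus _ _ _))).inter hF
    refine (sq_lintegral_le_of_sq_le_mul
      (a := fun y => ENNReal.ofReal (√(dist x y / Q.l) / dist x y ^ d)) (b := b) (by fun_prop)
      (by fun_prop) ((ae_restrict_mem hm).mono fun y hy => ?_)).trans (mul_le_mul' ?_ ?_)
    · have hl := Q.hl
      have hpos : 0 < dist x y := hl.trans_le (Cube.le_dist_of_notMem_dilate_three hx hy.2)
      have hsqrt : √(dist x y / Q.l) * √(Q.l / dist x y) = 1 := by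
        rw [← Real.sqrt_mul (by positivity), div_mul_div_cancel₀ hl.ne', div_self hpos.ne',
          Real.sqrt_one]
      rw [← ENNReal.ofReal_mul (by positivity), ← ENNReal.ofReal_pow (by positivity),
        div_mul_div_comm, hsqrt, inv_pow, sq, one_div]
    · exact (lintegral_mono_set (inter_subset_inter_left _ inter_subset_left)).trans
        (setLIntegral_sqrt_div_crossing_le hξ hx (hR i))
    · refine (lintegral_mono_set ?_).trans (lintegral_union_le _ _ _)
      rw [← union_inter_distrib_right]
      exact inter_subset_inter_left _ inter_subset_right
  refine (ENNReal.tsum_le_tsum hterm).trans ?_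
  rw [ENNReal.tsum_mul_left, ENNReal.tsum_add, two_mul (2 * S.diniConst)]
  have hb := S.setLIntegral_sqrt_div_compl_dilate_le hx
  gcongr
  exacts [(tsum_setLIntegral_annulus_inter_le ξ hε hF b).trans hb,
    (tsum_setLIntegral_annulus_inter_le x hε hF b).trans hb]

theorem setLIntegral_symmDiff_annulus_kernel_mul_le {h : Rd d → ℝ} {L : ℝ≥0∞}
    (hL : ∀ᵐ y, ‖h y‖ₑ ≤ L) (h0 : ∀ y ∈ Q.dilate 3, h y = 0) (hx : x ∈ Q.set) (ε : ℕ → ℝ)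
    (i : ℕ) :
    ∫⁻ y in symmDiff (annulus ξ ε i) (annulus x ε i), ‖S.K x y * h y‖ₑ ≤
      L * (ENNReal.ofReal S.Cst *
        (crossingMass Q ξ x ε i (ε i) + crossingMass Q ξ x ε i (ε (i + 1)))) := by
  have hF : MeasurableSet (Q.dilate 3)ᶜ := (Q.measurableSet_dilate 3).compl
  refine (setLIntegral_enorm_mul_le hF (S.measurable_kernel x) hL fun y hy =>
    h0 y (notMem_compl_iff.1 hy)).trans (mul_le_mul_right ?_ L)
  have hm : MeasurableSet (symmDiff (annulus ξ ε i) (annulus x ε i) ∩ (Q.dilate 3)ᶜ) :=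
    ((measurableSet_annulus _ _ _).symmDiff (measurableSet_annulus _ _ _)).inter hF
  calc ∫⁻ y in symmDiff (annulus ξ ε i) (annulus x ε i) ∩ (Q.dilate 3)ᶜ, ‖S.K x y‖ₑ
      ≤ ∫⁻ y in symmDiff (annulus ξ ε i) (annulus x ε i) ∩ (Q.dilate 3)ᶜ,
          ENNReal.ofReal S.Cst * ENNReal.ofReal ((dist x y ^ d)⁻¹) := by
        refine setLIntegral_mono' hm fun y hy => ?_
        have hpos := Q.hl.trans_le (Cube.le_dist_of_notMem_dilate_three hx hy.2)
        rw [← ENNReal.ofReal_mul S.hCst.le, ← div_eq_mul_inv]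
        exact S.enorm_kernel_le (dist_pos.1 hpos)
    _ = ENNReal.ofReal S.Cst * ∫⁻ y in symmDiff (annulus ξ ε i) (annulus x ε i) ∩ (Q.dilate 3)ᶜ,
          ENNReal.ofReal ((dist x y ^ d)⁻¹) := lintegral_const_mul _ (by fun_prop)
    _ ≤ _ := by
        refine mul_le_mul_right ((lintegral_mono_set ?_).trans (lintegral_union_le _ _ _)) _
        rw [← union_inter_distrib_right, ← union_inter_distrib_right]
        exact inter_subset_inter_left _ (symmDiff_annulus_subset ξ x ε i)

theorem increment_le_increment_add {h : Rd d → ℝ} {L : ℝ≥0∞} (hh : TailIntegrable h)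
    (hL : ∀ᵐ y, ‖h y‖ₑ ≤ L) (h0 : ∀ y ∈ Q.dilate 3, h y = 0) (hx : x ∈ Q.set) (ξ : Rd d)
    {ε : ℕ → ℝ} (hε : IsTruncSeq ε) (i : ℕ) :
    S.increment h ξ ε i ≤ S.increment h x ε i +
      ((L * ∫⁻ y in annulus ξ ε i ∩ (Q.dilate 3)ᶜ, ‖S.K ξ y - S.K x y‖ₑ) +
        (L * (ENNReal.ofReal S.Cst * crossingMass Q ξ x ε i (ε i)) +
          L * (ENNReal.ofReal S.Cst * crossingMass Q ξ x ε i (ε (i + 1))))) := by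
  have hmeas := fun z => (S.measurable_kernel z).mul hh.measurable
  have hint : ∀ z, IntegrableOn (fun y => S.K z y * h y) (annulus z ε i) := fun z =>
    (hh.integrableOn_kernel_mul S z (hε.2.1 (i + 1))).mono_set sdiff_subset
  simp only [increment, S.trunc_sub_trunc_eq hh _ hε]
  refine (enorm_setIntegral_le_add (measurableSet_annulus _ _ _) (measurableSet_annulus _ _ _)
    (hint ξ) (hint x) (hmeas ξ) (hmeas x)).trans (add_le_add le_rfl (add_le_add ?_ ?_))
  · simp only [← sub_mul]
    exact setLIntegral_enorm_mul_le (Q.measurableSet_dilate 3).compl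
      ((S.measurable_kernel ξ).sub (S.measurable_kernel x)) hL fun y hy =>
        h0 y (notMem_compl_iff.1 hy)
  · rw [← mul_add, ← mul_add]
    exact S.setLIntegral_symmDiff_annulus_kernel_mul_le hL h0 hx ε i

theorem exists_var_le_var_add [NeZero d] {ρ : ℝ} (hρ : 2 ≤ ρ) : ∃ C ≠ ∞, ∀ (Q : Cube d)
    (h : Rd d → ℝ) (L : ℝ≥0∞), TailIntegrable h → (∀ᵐ y, ‖h y‖ₑ ≤ L) →
    (∀ y ∈ Q.dilate 3, h y = 0) → ∀ ξ ∈ Q.set, ∀ x ∈ Q.set,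
    S.var ρ h ξ ≤ S.var ρ h x + C * L := by
  obtain ⟨C₁, hC₁, hker⟩ := S.exists_setLIntegral_kernel_sub_le
  set C₂ := shellConst (volume : Measure (Rd d)) (1 + 2 * √d) * (2 * (2 * S.diniConst))
  set c := ENNReal.ofReal S.Cst
  have hC₂_ne_top : C₂ ≠ ∞ := by
    have := shellConst_ne_top (volume : Measure (Rd d)) (1 + 2 * √d)
    have := S.diniConst_ne_top
    finiteness
  have hsq : C₂ ≤ (1 + C₂) ^ 2 :=
    le_add_self.trans (le_self_pow₀ (le_add_right le_rfl) two_ne_zero)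
  refine ⟨C₁ + (c * (1 + C₂) + c * (1 + C₂)), by finiteness,
    fun Q h L hh hL h0 ξ hξ x hx => S.var_le fun ε hε => ?_⟩
  have hcross : ∀ R : ℕ → ℝ, (∀ i, 0 < R i) →
      ∑' i, (L * (c * crossingMass Q ξ x ε i (R i))) ^ 2 ≤ (L * (c * (1 + C₂))) ^ 2 :=
    fun R hR => by
    simp only [mul_pow, ENNReal.tsum_mul_left]
    gcongr
    exact (S.tsum_sq_crossingMass_le hξ hx hε.1.antitone hR).trans hsq
  have hsmooth : ∑' i, L * ∫⁻ y in annulus ξ ε i ∩ (Q.dilate 3)ᶜ, ‖S.K ξ y - S.K x y‖ₑ ≤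
      L * C₁ := by
    rw [ENNReal.tsum_mul_left]
    gcongr
    exact (tsum_setLIntegral_annulus_inter_le ξ hε.1.antitone
      (Q.measurableSet_dilate 3).compl _).trans (hker Q ξ hξ x hx)
  calc seqNorm ρ (S.increment h ξ ε)
      ≤ seqNorm ρ (S.increment h x ε) + (L * C₁ + (L * (c * (1 + C₂)) + L * (c * (1 + C₂)))) :=
        (seqNorm_le_of_le_add (one_le_two.trans hρ)
          (S.increment_le_increment_add hh hL h0 hx ξ hε)).trans <| by
          gcongr
          exact seqNorm_le_of_le_add_add hρ (fun _ => le_rfl) hsmooth (hcross ε hε.2.1)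
            (hcross _ fun i => hε.2.1 (i + 1))
    _ ≤ S.var ρ h x + (C₁ + (c * (1 + C₂) + c * (1 + C₂))) * L := by
        rw [mul_comm _ L, mul_add L, mul_add L]
        gcongr
        exact S.seqNorm_increment_le_var hε

end CZO

end Transport

section GrandSup

theorem seqNorm_le_of_forall_exists_eq {ρ : ℝ} (hρ : 0 < ρ) {u : ℕ → ℝ≥0∞} {B : ℝ≥0∞}
    (h : ∀ n, ∃ v, (∀ i < n, u i = v i) ∧ seqNorm ρ v ≤ B) : seqNorm ρ u ≤ B := by
  rw [← ENNReal.rpow_le_rpow_iff hρ, seqNorm_rpow hρ, ENNReal.tsum_eq_iSup_nat]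
  refine iSup_le fun n => ?_
  obtain ⟨v, huv, hv⟩ := h n
  calc ∑ i ∈ Finset.range n, u i ^ ρ = ∑ i ∈ Finset.range n, v i ^ ρ :=
        Finset.sum_congr rfl fun i hi => by rw [huv i (Finset.mem_range.1 hi)]
    _ ≤ ∑' i, v i ^ ρ := ENNReal.sum_le_tsum _
    _ = seqNorm ρ v ^ ρ := (seqNorm_rpow hρ v).symm
    _ ≤ B ^ ρ := by gcongr

variable {d : ℕ} (S : CZO d) {ρ : ℝ} {f g : Rd d → ℝ} {x : Rd d}

theorem Cube.exists_mem_forall_notMem_dilate_three (x : Rd d) {δ : ℝ} (hδ : 0 < δ) :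
    ∃ Q : Cube d, x ∈ Q.set ∧ ∀ y, δ < dist x y → y ∉ Q.dilate 3 := by
  have hpos : 0 < 2 * (√d + 1) := by positivity
  set Q : Cube d := ⟨fun i => x i, δ / (2 * (√d + 1)), div_pos hδ hpos⟩
  have hx : x ∈ Q.set := fun i => by constructor <;> linarith [Q.hl]
  refine ⟨Q, hx, fun y hy hyQ => absurd hy (not_lt.2 ?_)⟩
  have hl : Q.l * (2 * (√d + 1)) = δ := div_mul_cancel₀ δ hpos.ne'
  linarith [Cube.dist_le_of_mem_dilate_three hx hyQ, Q.hl]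

/-- The grand maximal operator of `V_ρ(T_*)` with a supremum in place of the essential supremum.
Unlike `CZO.grandMax` it dominates `CZO.var` at every point. -/
def CZO.grandSup (ρ : ℝ) (f : Rd d → ℝ) (x : Rd d) : ℝ≥0∞ :=
  ⨆ (Q : Cube d) (_ : x ∈ Q.set) (ξ : Rd d) (_ : ξ ∈ Q.set), S.var ρ ((Q.dilate 3)ᶜ.indicator f) ξ

namespace CZO

theorem grandSup_le {B : ℝ≥0∞} (hB : ∀ Q : Cube d, x ∈ Q.set → ∀ ξ ∈ Q.set,
    S.var ρ ((Q.dilate 3)ᶜ.indicator f) ξ ≤ B) : S.grandSup ρ f x ≤ B :=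
  iSup₂_le fun Q hx => iSup₂_le (hB Q hx)

theorem var_indicator_compl_le_grandSup {Q : Cube d} {ξ : Rd d} (hx : x ∈ Q.set)
    (hξ : ξ ∈ Q.set) : S.var ρ ((Q.dilate 3)ᶜ.indicator f) ξ ≤ S.grandSup ρ f x :=
  le_iSup₂_of_le Q hx (le_iSup₂_of_le ξ hξ le_rfl)

theorem grandMax_le_grandSup (ρ : ℝ) (f : Rd d → ℝ) (x : Rd d) :
    S.grandMax ρ f x ≤ S.grandSup ρ f x :=
  iSup₂_le fun Q hx => essSup_le_of_ae_le _ <|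
    (ae_restrict_mem Q.measurableSet_set).mono fun _ hξ =>
      S.var_indicator_compl_le_grandSup hx hξ

theorem grandSup_add_le (hρ : 1 ≤ ρ) (hf : TailIntegrable f) (hg : TailIntegrable g) (x : Rd d) :
    S.grandSup ρ (fun y => f y + g y) x ≤ S.grandSup ρ f x + S.grandSup ρ g x := by
  refine S.grandSup_le fun Q hx ξ hξ => ?_
  have hQ := (Q.measurableSet_dilate 3).compl
  calc S.var ρ ((Q.dilate 3)ᶜ.indicator fun y => f y + g y) ξ
      = S.var ρ (fun y => (Q.dilate 3)ᶜ.indicator f y + (Q.dilate 3)ᶜ.indicator g y) ξ := by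
        rw [indicator_add]
    _ ≤ _ := S.var_add_le hρ (hf.indicator hQ) (hg.indicator hQ) ξ
    _ ≤ _ := add_le_add (S.var_indicator_compl_le_grandSup hx hξ)
        (S.var_indicator_compl_le_grandSup hx hξ)

-- Finitely many truncations at `x` do not see a sufficiently small cube around `x`.
theorem var_le_grandSup (hρ : 0 < ρ) (f : Rd d → ℝ) (x : Rd d) :
    S.var ρ f x ≤ S.grandSup ρ f x := by
  refine S.var_le fun ε hε => seqNorm_le_of_forall_exists_eq hρ fun n => ?_
  obtain ⟨Q, hx, hQ⟩ := Cube.exists_mem_forall_notMem_dilate_three x (hε.2.1 n)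
  have htrunc : ∀ i ≤ n, S.trunc (ε i) f x = S.trunc (ε i) ((Q.dilate 3)ᶜ.indicator f) x :=
    fun i hi => setIntegral_congr_fun (measurableSet_lt_dist x (ε i)) fun y hy => by
      rw [indicator_of_mem (hQ y ((hε.1.antitone hi).trans_lt hy))]
  refine ⟨S.increment ((Q.dilate 3)ᶜ.indicator f) x ε, fun i hi => ?_,
    (S.seqNorm_increment_le_var hε).trans (S.var_indicator_compl_le_grandSup hx hx)⟩
  rw [increment, increment, htrunc i hi.le, htrunc (i + 1) hi]

end CZO

end GrandSup

section BoundedPart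

theorem exists_mem_notMem_notMem_of_four_mul_measure_le {α : Type*} [MeasurableSpace α]
    {μ : Measure α} {Q E B : Set α} (hQ₀ : μ Q ≠ 0) (hQ : μ Q ≠ ∞) (hE : 4 * μ (E ∩ Q) ≤ μ Q)
    (hB : 4 * μ B ≤ μ Q) : ∃ x ∈ Q, x ∉ E ∧ x ∉ B := by
  by_contra! hcov
  have hsub : Q ⊆ (E ∩ Q) ∪ B := fun y hy => by
    by_cases hyE : y ∈ E
    exacts [Or.inl ⟨hyE, hy⟩, Or.inr (hcov y hy hyE)]
  have hle : 4 * μ Q ≤ 2 * μ Q := calc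
    4 * μ Q ≤ 4 * (μ (E ∩ Q) + μ B) := by
      gcongr
      exact (measure_mono hsub).trans (measure_union_le _ _)
    _ ≤ μ Q + μ Q := by
      rw [mul_add]
      exact add_le_add hE hB
    _ = 2 * μ Q := (two_mul _).symm
  exact absurd ((ENNReal.mul_le_mul_iff_left hQ₀ hQ).1 hle) (by norm_num)

variable {d : ℕ} {S : CZO d} {ρ q : ℝ}

theorem CZO.VarBdd.exists_lintegral_var_rpow_le (hb : S.VarBdd ρ q) :
    ∃ A ≠ ∞, ∀ f : Rd d → ℝ, Measurable f →
      ∫⁻ x, S.var ρ f x ^ q ≤ A * ∫⁻ x, ‖f x‖ₑ ^ q := by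
  obtain ⟨A, -, hA⟩ := hb
  simp only [← Real.enorm_eq_ofReal_abs] at hA
  exact ⟨ENNReal.ofReal A, ENNReal.ofReal_ne_top, hA⟩

theorem lintegral_enorm_indicator_rpow {α : Type*} [MeasurableSpace α] {μ : Measure α}
    {A : Set α} (hA : MeasurableSet A) (hq : 0 < q) (g : α → ℝ) :
    ∫⁻ y, ‖A.indicator g y‖ₑ ^ q ∂μ = ∫⁻ y in A, ‖g y‖ₑ ^ q ∂μ := by
  rw [← lintegral_indicator hA]
  refine lintegral_congr fun y => ?_
  by_cases hy : y ∈ A <;> simp [hy, hq]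

theorem lintegral_enorm_indicator_rpow_le {α : Type*} [MeasurableSpace α] {μ : Measure α}
    {A : Set α} (hA : MeasurableSet A) (hq : 0 < q) {g : α → ℝ} {L : ℝ≥0∞}
    (hgL : ∀ᵐ y ∂μ, ‖g y‖ₑ ≤ L) : ∫⁻ y, ‖A.indicator g y‖ₑ ^ q ∂μ ≤ L ^ q * μ A := by
  rw [lintegral_enorm_indicator_rpow hA hq, ← setLIntegral_const]
  exact lintegral_mono_ae (ae_restrict_of_ae (hgL.mono fun y hy => by gcongr))

variable [NeZero d]

theorem CZO.VarBdd.exists_four_mul_volume_var_indicator_le (hb : S.VarBdd ρ q) (hρ : 0 ≤ ρ)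
    (hq : 1 ≤ q) : ∃ N ≠ ∞, ∀ (Q : Cube d) (g : Rd d → ℝ) (L : ℝ≥0∞), TailIntegrable g →
      L ≠ 0 → L ≠ ∞ → (∀ᵐ y, ‖g y‖ₑ ≤ L) →
      4 * volume {x | N * L ≤ S.var ρ ((Q.dilate 3).indicator g) x} ≤ volume Q.set := by
  obtain ⟨A, hA, hvar⟩ := hb.exists_lintegral_var_rpow_le
  have hq₀ : 0 < q := zero_lt_one.trans_le hq
  set N : ℝ≥0∞ := 4 * (A * ENNReal.ofReal (3 ^ d)) + 1
  refine ⟨N, by finiteness, fun Q g L hg hL₀ hL hgL => ?_⟩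
  have hQ := Q.measurableSet_dilate 3
  set B := {x | N * L ≤ S.var ρ ((Q.dilate 3).indicator g) x}
  have hN : 4 * (A * ENNReal.ofReal (3 ^ d)) ≤ N ^ q :=
    le_self_add.trans (ENNReal.le_rpow_self_of_one_le le_add_self hq)
  have hchebyshev : N ^ q * L ^ q * volume B ≤ A * (L ^ q * volume (Q.dilate 3)) := calc
    N ^ q * L ^ q * volume B
      = (N * L) ^ q * volume B := by rw [ENNReal.mul_rpow_of_nonneg _ _ hq₀.le]
    _ ≤ (N * L) ^ q * volume {x | (N * L) ^ q ≤ S.var ρ ((Q.dilate 3).indicator g) x ^ q} := by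
      gcongr
      exact fun x hx => ENNReal.rpow_le_rpow hx hq₀.le
    _ ≤ ∫⁻ x, S.var ρ ((Q.dilate 3).indicator g) x ^ q :=
      mul_meas_ge_le_lintegral ((S.measurable_var hρ (hg.indicator hQ)).pow_const q) _
    _ ≤ A * ∫⁻ x, ‖(Q.dilate 3).indicator g x‖ₑ ^ q := hvar _ (hg.measurable.indicator hQ)
    _ ≤ A * (L ^ q * volume (Q.dilate 3)) := by
      gcongr
      exact lintegral_enorm_indicator_rpow_le hQ hq₀ hgL
  have hdilate : volume (Q.dilate 3) = ENNReal.ofReal (3 ^ d) * volume Q.set := by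
    rw [Q.volume_dilate zero_le_three, Q.volume_set, mul_pow, ENNReal.ofReal_mul (by positivity)]
  have hN₀ : N ^ q * L ^ q ≠ 0 := by simp [N, ENNReal.rpow_eq_zero_iff, hL₀, hL, hq₀.le]
  refine (ENNReal.mul_le_mul_iff_right hN₀ (by finiteness)).1 ?_
  calc N ^ q * L ^ q * (4 * volume B)
      = 4 * (N ^ q * L ^ q * volume B) := by ring
    _ ≤ 4 * (A * (L ^ q * (ENNReal.ofReal (3 ^ d) * volume Q.set))) := by
      rw [← hdilate]
      gcongr
    _ = 4 * (A * ENNReal.ofReal (3 ^ d)) * L ^ q * volume Q.set := by ring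
    _ ≤ N ^ q * L ^ q * volume Q.set := by gcongr

theorem CZO.VarBdd.exists_grandSup_le_of_ae_le (hb : S.VarBdd ρ q) (hρ : 2 ≤ ρ) (hq : 1 ≤ q) :
    ∃ C ≠ ∞, ∀ (κ L : ℝ≥0∞) (g : Rd d → ℝ), TailIntegrable g → L ≠ 0 → L ≠ ∞ →
      (∀ᵐ y, ‖g y‖ₑ ≤ L) → volume {x | κ * L < S.var ρ g x} ≠ ∞ →
      ∃ U : Set (Rd d), volume U ≤ C * volume {x | κ * L < S.var ρ g x} ∧
        ∀ x ∉ U, S.grandSup ρ g x ≤ (C + κ) * L := by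
  obtain ⟨C₁, hC₁, htransport⟩ := S.exists_var_le_var_add hρ
  obtain ⟨C₂, hC₂, hcover⟩ := exists_four_mul_volume_inter_cube_le d
  obtain ⟨N, hN, hlocal⟩ := hb.exists_four_mul_volume_var_indicator_le (by linarith) hq
  refine ⟨C₂ + (N + C₁), by finiteness, fun κ L g hg hL₀ hL hgL hfin => ?_⟩
  obtain ⟨U, hU, hdensity⟩ := hcover _ hfin
  refine ⟨U, hU.trans (by gcongr; exact le_self_add),
    fun x hx => S.grandSup_le fun Q hxQ ξ hξ => ?_⟩
  have hQ := Q.measurableSet_dilate 3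
  have hvol := Q.volume_set
  obtain ⟨z, hz, hzE, hzB⟩ := exists_mem_notMem_notMem_of_four_mul_measure_le
    (by simpa [hvol] using pow_pos Q.hl d) (by simp [hvol])
    (hdensity x hx Q hxQ) (hlocal Q g L hg hL₀ hL hgL)
  have hsplit : (Q.dilate 3)ᶜ.indicator g = fun y => g y - (Q.dilate 3).indicator g y :=
    indicator_compl _ _
  calc S.var ρ ((Q.dilate 3)ᶜ.indicator g) ξ
      ≤ S.var ρ ((Q.dilate 3)ᶜ.indicator g) z + C₁ * L :=
        htransport Q _ L (hg.indicator hQ.compl)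
          (hgL.mono fun y hy => (enorm_indicator_le_enorm_self _ _).trans hy)
          (fun y hy => indicator_of_notMem (notMem_compl_iff.2 hy) g) ξ hξ z hz
    _ ≤ (κ * L + N * L) + C₁ * L := by
        rw [hsplit]
        gcongr
        exact (S.var_sub_le (by linarith) hg (hg.indicator hQ) z).trans
          (add_le_add (not_lt.1 hzE) (not_le.1 hzB).le)
    _ = (N + C₁ + κ) * L := by ring
    _ ≤ (C₂ + (N + C₁) + κ) * L := mul_le_mul' (add_le_add le_add_self le_rfl) le_rfl

end BoundedPart

section SingleCell

open Metric

variable {d : ℕ}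

theorem abs_dist_sub_dist_le_of_mem_closedBall {X : Type*} [PseudoMetricSpace X] {c y : X} {r : ℝ}
    (hy : y ∈ closedBall c r) (z : X) : |dist z y - dist z c| ≤ r := by
  rw [dist_comm z y, dist_comm z c]
  exact (abs_dist_sub_le _ _ _).trans hy

/-- The size, up to a constant, of a Calderón–Zygmund kernel `K x y` for `y` in a ball centred at
`c` that is far from `x`. -/
def kernelSize (x c : Rd d) : ℝ≥0∞ := ENNReal.ofReal (2 ^ d / dist x c ^ d)

/-- The oscillation, up to a constant, of the kernel `K x y` as `y` ranges over
`closedBall c r`, when this ball is far from `x`. -/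
def CZO.kernelOsc (S : CZO d) (r : ℝ) (x c : Rd d) : ℝ≥0∞ :=
  ENNReal.ofReal (S.modulus (r / dist x c) / dist x c ^ d)

namespace CZO

variable (S : CZO d) {r : ℝ} {x ξ c : Rd d}

theorem measurable_kernelOsc (r : ℝ) (c : Rd d) : Measurable fun x => S.kernelOsc r x c := by
  have hm := S.modulus_mono.measurable
  unfold kernelOsc
  fun_prop

theorem setLIntegral_kernelOsc_le [NeZero d] (hr : 0 < r) (c : Rd d) :
    ∫⁻ x in {x | r < dist x c}, S.kernelOsc r x c ≤ S.diniConst := by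
  simpa only [kernelOsc, dist_comm c] using S.setLIntegral_modulus_div_le c hr

theorem kernelOsc_le_mul_kernelOsc {D : ℝ} (hr : 0 ≤ r) (hx : 0 < dist x c) (hξ : 0 < dist ξ c)
    (h : dist x c ≤ D * dist ξ c) :
    S.kernelOsc r ξ c ≤ ENNReal.ofReal (⌈D⌉₊ * D ^ d) * S.kernelOsc r x c := by
  have hD : 0 < D := pos_of_mul_pos_left (hx.trans_le h) hξ.le
  have hmodulus : S.modulus (r / dist ξ c) ≤ ⌈D⌉₊ * S.modulus (r / dist x c) := by
    refine (S.modulus_mono ?_).trans (S.modulus_mul_le D (by positivity))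
    rw [← mul_div_assoc, div_le_div_iff₀ hξ hx]
    calc r * dist x c ≤ r * (D * dist ξ c) := by gcongr
      _ = D * r * dist ξ c := by ring
  have hnonneg := S.modulus_nonneg (r / dist x c)
  unfold kernelOsc
  rw [← ENNReal.ofReal_mul (by positivity)]
  refine ENNReal.ofReal_le_ofReal ?_
  calc S.modulus (r / dist ξ c) / dist ξ c ^ d
      ≤ ⌈D⌉₊ * S.modulus (r / dist x c) / (dist x c / D) ^ d := by
        gcongr
        exact (div_le_iff₀' hD).2 h
    _ = ⌈D⌉₊ * D ^ d * (S.modulus (r / dist x c) / dist x c ^ d) := by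
        rw [div_pow]
        field_simp

theorem ofReal_sqrt_div_mul_kernelSize_le (r : ℝ) (x c : Rd d) :
    ENNReal.ofReal √(r / dist x c) * kernelSize x c ≤
      ENNReal.ofReal (2 ^ d) * S.kernelOsc r x c := by
  unfold kernelSize kernelOsc
  rw [← ENNReal.ofReal_mul (by positivity), ← ENNReal.ofReal_mul (by positivity)]
  refine ENNReal.ofReal_le_ofReal ?_
  calc √(r / dist x c) * (2 ^ d / dist x c ^ d)
      ≤ S.modulus (r / dist x c) * (2 ^ d / dist x c ^ d) := by
        gcongr
        exact S.sqrt_le_modulus _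
    _ = 2 ^ d * (S.modulus (r / dist x c) / dist x c ^ d) := by ring

theorem enorm_kernel_le_kernelSize {y : Rd d} (hr : 0 < r) (hfar : 4 * r < dist ξ c)
    (hy : y ∈ closedBall c r) : ‖S.K ξ y‖ₑ ≤ ENNReal.ofReal S.Cst * kernelSize ξ c := by
  have hdist := abs_le.1 (abs_dist_sub_dist_le_of_mem_closedBall hy ξ)
  have hC := S.hCst
  have hc : 0 < dist ξ c := by linarith
  have hpos : 0 < dist ξ y := by linarith
  rw [kernelSize, ← ENNReal.ofReal_mul hC.le, ← div_pow]
  refine (S.enorm_kernel_le (dist_pos.1 hpos)).trans (ENNReal.ofReal_le_ofReal ?_)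
  calc S.Cst / dist ξ y ^ d ≤ S.Cst / (dist ξ c / 2) ^ d := by
        gcongr
        linarith
    _ = S.Cst * (2 / dist ξ c) ^ d := by rw [div_eq_mul_inv, ← inv_pow, inv_div]

theorem enorm_kernel_sub_le_kernelOsc {y : Rd d} (hr : 0 < r) (hfar : 4 * r < dist ξ c)
    (hy : y ∈ closedBall c r) :
    ‖S.K ξ y - S.K ξ c‖ₑ ≤ ENNReal.ofReal S.Cst * S.kernelOsc r ξ c := by
  have hC := S.hCst
  have hpos : 0 < dist ξ c := by linarith
  have hcy : dist c y ≤ r := by rwa [dist_comm]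
  rw [enorm_sub_rev, Real.enorm_eq_ofReal_abs, kernelOsc, ← ENNReal.ofReal_mul hC.le,
    ← mul_div_assoc]
  refine ENNReal.ofReal_le_ofReal ((S.abs_kernel_sub_right_le (dist_pos.1 hpos).symm
    (by rw [dist_comm c ξ]; linarith)).trans ?_)
  rw [dist_comm c ξ]
  gcongr
  exact S.modulus_mono (by gcongr)

variable {A : Set (Rd d)} {b : Rd d → ℝ}

theorem enorm_setIntegral_kernel_mul_indicator_le (hr : 0 < r) (hfar : 4 * r < dist ξ c)
    (hA : MeasurableSet A) (hAr : A ⊆ closedBall c r) (hb : Measurable b) (F : Set (Rd d)) :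
    ‖∫ y in A, S.K ξ y * F.indicator b y‖ₑ ≤
      ENNReal.ofReal S.Cst * (kernelSize ξ c * ∫⁻ y in A, ‖b y‖ₑ) := by
  rw [← mul_assoc, ← lintegral_const_mul _ hb.enorm]
  refine (enorm_integral_le_lintegral_enorm _).trans (setLIntegral_mono' hA fun y hy => ?_)
  rw [enorm_mul]
  exact mul_le_mul' (S.enorm_kernel_le_kernelSize hr hfar (hAr hy))
    (enorm_indicator_le_enorm_self _ _)

theorem enorm_setIntegral_kernel_mul_le_of_setIntegral_eq_zero (hr : 0 < r)
    (hfar : 4 * r < dist ξ c) (hA : MeasurableSet A) (hAr : A ⊆ closedBall c r) (hb : Measurable b)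
    (hint : IntegrableOn b A) (hzero : ∫ y in A, b y = 0) :
    ‖∫ y in A, S.K ξ y * b y‖ₑ ≤
      ENNReal.ofReal S.Cst * (S.kernelOsc r ξ c * ∫⁻ y in A, ‖b y‖ₑ) := by
  have hosc : ∫⁻ y in A, ‖(S.K ξ y - S.K ξ c) * b y‖ₑ ≤
      ENNReal.ofReal S.Cst * (S.kernelOsc r ξ c * ∫⁻ y in A, ‖b y‖ₑ) := by
    rw [← mul_assoc, ← lintegral_const_mul _ hb.enorm]
    refine setLIntegral_mono' hA fun y hy => ?_
    rw [enorm_mul]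
    exact mul_le_mul_left (S.enorm_kernel_sub_le_kernelOsc hr hfar (hAr hy)) _
  have hosc_int : IntegrableOn (fun y => (S.K ξ y - S.K ξ c) * b y) A := by
    refine ⟨(((S.measurable_kernel ξ).sub_const _).mul hb).aestronglyMeasurable,
      hosc.trans_lt (ENNReal.mul_lt_top ENNReal.ofReal_lt_top
        (ENNReal.mul_lt_top ENNReal.ofReal_lt_top hint.2))⟩
  have hsubtract : ∫ y in A, S.K ξ y * b y = ∫ y in A, (S.K ξ y - S.K ξ c) * b y := calc
    ∫ y in A, S.K ξ y * b y = ∫ y in A, ((S.K ξ y - S.K ξ c) * b y + S.K ξ c * b y) := by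
      simp only [sub_mul, sub_add_cancel]
    _ = ∫ y in A, (S.K ξ y - S.K ξ c) * b y := by
      rw [integral_add hosc_int (hint.const_mul _), integral_const_mul, hzero, mul_zero, add_zero]
  rw [hsubtract]
  exact (enorm_integral_le_lintegral_enorm _).trans hosc

end CZO

end SingleCell

section CellFamily

open Metric

variable {d : ℕ} {ι : Type*}

/-- The indices of the cells that the sphere of radius `R` around `ξ` cuts. -/
def straddling (P : ι → Set (Rd d)) (ξ : Rd d) (R : ℝ) : Set ι :=
  {j | ∃ y ∈ P j, ∃ y' ∈ P j, dist ξ y ≤ R ∧ R < dist ξ y'}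

/-- The function `x ↦ ∑ j, ω̃(r j / |x - c j|) |x - c j|⁻ᵈ ∫_{P j} |b|`, which dominates the
contribution to `T b x` of the mean-zero pieces of `b`. -/
def CZO.badTail (S : CZO d) (P : ι → Set (Rd d)) (c : ι → Rd d) (r : ι → ℝ) (b : Rd d → ℝ)
    (x : Rd d) : ℝ≥0∞ :=
  ∑' j, S.kernelOsc (r j) x (c j) * ∫⁻ y in P j, ‖b y‖ₑ

theorem tsum_tsum_mul_setLIntegral_annulus_inter_le {P : ι → Set (Rd d)}
    (hP : ∀ j, MeasurableSet (P j)) (ξ : Rd d) {ε : ℕ → ℝ} (hε : Antitone ε) (w : ι → ℝ≥0∞)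
    (f : Rd d → ℝ≥0∞) :
    ∑' i, ∑' j, w j * ∫⁻ y in annulus ξ ε i ∩ P j, f y ≤ ∑' j, w j * ∫⁻ y in P j, f y := by
  rw [ENNReal.tsum_comm]
  simp only [ENNReal.tsum_mul_left]
  gcongr with j
  exact tsum_setLIntegral_annulus_inter_le ξ hε (hP j) f

namespace IsBadPart

variable {L : ℝ≥0∞} {P : ι → Set (Rd d)} {c : ι → Rd d} {r : ι → ℝ} {b : Rd d → ℝ} {ξ : Rd d}

theorem tailIntegrable (hb : IsBadPart volume L P c r b) : TailIntegrable b :=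
  .of_integrable hb.measurable hb.integrable.2.ne

theorem abs_dist_sub_dist_le (hb : IsBadPart volume L P c r b) {j : ι} {y : Rd d} (hy : y ∈ P j)
    (z : Rd d) : |dist z y - dist z (c j)| ≤ r j :=
  abs_dist_sub_dist_le_of_mem_closedBall (hb.subset_closedBall j hy) z

theorem lintegral_badTail_le [Countable ι] [NeZero d] (hb : IsBadPart volume L P c r b) (S : CZO d)
    {A : Set (Rd d)} (hA : ∀ x ∈ A, ∀ j, r j < dist x (c j)) :
    ∫⁻ x in A, S.badTail P c r b x ≤ S.diniConst * ∑' j, ∫⁻ y in P j, ‖b y‖ₑ := by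
  have hm := fun j => S.measurable_kernelOsc (r j) (c j)
  unfold CZO.badTail
  rw [lintegral_tsum fun j => ((hm j).mul_const _).aemeasurable, ← ENNReal.tsum_mul_left]
  gcongr with j
  rw [lintegral_mul_const _ (hm j)]
  gcongr
  exact (lintegral_mono_set fun x hx => hA x hx j).trans
    (S.setLIntegral_kernelOsc_le (hb.radius_pos j) (c j))

theorem sqrt_mul_kernelSize_mul_setLIntegral_le (hb : IsBadPart volume L P c r b) {j : ι}
    (hfar : 4 * r j < dist ξ (c j)) :
    ENNReal.ofReal √(dist ξ (c j) / r j) * kernelSize ξ (c j) * ∫⁻ y in P j, ‖b y‖ₑ ≤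
      ENNReal.ofReal (2 * (2 ^ d * 2 ^ d)) * L *
        ∫⁻ y in P j, ENNReal.ofReal (√(dist ξ y / r j) / dist ξ y ^ d) := by
  set X := dist ξ (c j)
  have hr := hb.radius_pos j
  have hX : 0 < X := by linarith
  have hpoint : ∀ y ∈ P j, ENNReal.ofReal √(X / r j) * kernelSize ξ (c j) ≤
      ENNReal.ofReal (2 * (2 ^ d * 2 ^ d)) *
        ENNReal.ofReal (√(dist ξ y / r j) / dist ξ y ^ d) := fun y hy => by
    have hdist := abs_le.1 (hb.abs_dist_sub_dist_le hy ξ)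
    have hpos : 0 < dist ξ y := by linarith
    have hsqrt : √(X / r j) ≤ 2 * √(dist ξ y / r j) := by
      rw [Real.sqrt_le_left (by positivity), mul_pow, Real.sq_sqrt (by positivity),
        ← mul_div_assoc]
      gcongr
      linarith
    unfold kernelSize
    rw [← ENNReal.ofReal_mul (by positivity), ← ENNReal.ofReal_mul (by positivity)]
    refine ENNReal.ofReal_le_ofReal ?_
    calc √(X / r j) * (2 ^ d / X ^ d)
        ≤ (2 * √(dist ξ y / r j)) * (2 ^ d / (dist ξ y / 2) ^ d) := by
          gcongr
          linarith
      _ = 2 * (2 ^ d * 2 ^ d) * (√(dist ξ y / r j) / dist ξ y ^ d) := by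
          rw [div_pow]
          field_simp
  calc ENNReal.ofReal √(X / r j) * kernelSize ξ (c j) * ∫⁻ y in P j, ‖b y‖ₑ
      ≤ ENNReal.ofReal √(X / r j) * kernelSize ξ (c j) * (L * volume (P j)) := by
        gcongr
        exact hb.setLIntegral_le j
    _ = L * ∫⁻ _ in P j, ENNReal.ofReal √(X / r j) * kernelSize ξ (c j) := by
        rw [setLIntegral_const]
        ring
    _ ≤ L * ∫⁻ y in P j, ENNReal.ofReal (2 * (2 ^ d * 2 ^ d)) *
          ENNReal.ofReal (√(dist ξ y / r j) / dist ξ y ^ d) :=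
        mul_le_mul_right (setLIntegral_mono' (hb.measurableSet j) hpoint) L
    _ = _ := by
        rw [lintegral_const_mul _ (by fun_prop), mul_left_comm, mul_assoc]

theorem tsum_straddling_le [Countable ι] [NeZero d] (hb : IsBadPart volume L P c r b)
    (hfar : ∀ j, 4 * r j < dist ξ (c j)) {R : ℝ} (hR : 0 < R) :
    ∑' j, (straddling P ξ R).indicator (fun j => ENNReal.ofReal √(dist ξ (c j) / r j) *
      kernelSize ξ (c j) * ∫⁻ y in P j, ‖b y‖ₑ) j ≤
      ENNReal.ofReal (2 * (2 ^ d * 2 ^ d)) * shellConst (volume : Measure (Rd d)) 2 * L := by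
  set M := ENNReal.ofReal (2 * (2 ^ d * 2 ^ d))
  have hshell := tsum_setLIntegral_sqrt_div_le (volume : Measure (Rd d)) (κ := 2)
    (A := fun j : straddling P ξ R => P j) (s := fun j => r j) two_pos hR ξ
    (fun j => hb.measurableSet j) (fun i j hij => hb.disjoint (Subtype.coe_ne_coe.2 hij))
    (fun j => hb.radius_pos j) (by
      rintro ⟨j, y, hy, y', hy', hyR, hRy'⟩ z hz
      have hy := abs_le.1 (hb.abs_dist_sub_dist_le hy ξ)
      have hy' := abs_le.1 (hb.abs_dist_sub_dist_le hy' ξ)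
      have hz := abs_le.1 (hb.abs_dist_sub_dist_le hz ξ)
      have hj := hfar j
      have hr := hb.radius_pos j
      exact ⟨by linarith, abs_le.2 ⟨by dsimp only; linarith, by dsimp only; linarith⟩, by linarith⟩)
  rw [finrank_euclideanSpace_fin] at hshell
  rw [← tsum_subtype]
  calc ∑' j : straddling P ξ R, ENNReal.ofReal √(dist ξ (c j) / r j) *
        kernelSize ξ (c j) * ∫⁻ y in P j, ‖b y‖ₑ
      ≤ ∑' j : straddling P ξ R, M * L *
          ∫⁻ y in P j, ENNReal.ofReal (√(dist ξ y / r j) / dist ξ y ^ d) := by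
        exact ENNReal.tsum_le_tsum fun j => hb.sqrt_mul_kernelSize_mul_setLIntegral_le (hfar j)
    _ ≤ M * shellConst (volume : Measure (Rd d)) 2 * L := by
        rw [ENNReal.tsum_mul_left, mul_right_comm]
        gcongr

theorem tsum_kernelSize_mul_le_of_subset_closedBall [Countable ι]
    (hb : IsBadPart volume L P c r b) {l N : ℝ} (hl : 0 < l) (hN : 0 ≤ N) {A : Set ι}
    (hfar : ∀ j ∈ A, l ≤ 2 * dist ξ (c j)) (hsub : ∀ j ∈ A, P j ⊆ closedBall ξ (N * l)) :
    ∑' j, A.indicator (fun j => kernelSize ξ (c j) * ∫⁻ y in P j, ‖b y‖ₑ) j ≤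
      ENNReal.ofReal ((4 * N) ^ d) * volume (ball (0 : Rd d) 1) * L := by
  have hsize : ∀ j : A, kernelSize ξ (c j) ≤ ENNReal.ofReal (4 ^ d / l ^ d) := fun j => by
    have hj := hfar j j.2
    rw [kernelSize, ← div_pow, ← div_pow]
    refine ENNReal.ofReal_le_ofReal (pow_le_pow_left₀ (by positivity) ?_ d)
    rw [div_le_div_iff₀ (by linarith) hl]
    linarith
  rw [← tsum_subtype]
  calc ∑' j : A, kernelSize ξ (c j) * ∫⁻ y in P j, ‖b y‖ₑ
      ≤ ∑' j : A, ENNReal.ofReal (4 ^ d / l ^ d) * L * volume (P j) := by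
        refine ENNReal.tsum_le_tsum fun j => ?_
        rw [mul_assoc]
        exact mul_le_mul' (hsize j) (hb.setLIntegral_le j)
    _ = ENNReal.ofReal (4 ^ d / l ^ d) * L * volume (⋃ j : A, P j) := by
        rw [ENNReal.tsum_mul_left, measure_iUnion (f := fun j : A => P j)
          (fun i j hij => hb.disjoint (Subtype.coe_ne_coe.2 hij)) fun j => hb.measurableSet j]
    _ ≤ ENNReal.ofReal (4 ^ d / l ^ d) * L * volume (closedBall ξ (N * l)) := by
        gcongr
        exact iUnion_subset fun j => hsub j j.2
    _ = ENNReal.ofReal ((4 * N) ^ d) * volume (ball (0 : Rd d) 1) * L := by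
        rw [Measure.addHaar_closedBall _ _ (by positivity), finrank_euclideanSpace_fin,
          mul_right_comm, ← mul_assoc, ← ENNReal.ofReal_mul (by positivity)]
        congr 3
        rw [mul_pow, mul_pow]
        field_simp

end IsBadPart

end CellFamily

section BadPart

open Metric

variable {d : ℕ} {ι : Type*} {L : ℝ≥0∞} {P : ι → Set (Rd d)} {c : ι → Rd d} {r : ι → ℝ}
  {b : Rd d → ℝ} {ξ : Rd d} {ε : ℕ → ℝ}

theorem mul_mul_mul_le_sq_add (a b c e : ℝ≥0∞) :
    a * b * (c * e) ≤ ((a + c) * (b + e)) ^ 2 :=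
  (mul_le_mul' (mul_le_mul' le_self_add le_self_add)
    (mul_le_mul' le_add_self le_add_self)).trans_eq (sq _).symm

theorem annulus_inter_eq_empty_or_subset_annulus {i : ℕ} {j : ι}
    (h : j ∉ straddling P ξ (ε i)) (h' : j ∉ straddling P ξ (ε (i + 1))) :
    annulus ξ ε i ∩ P j = ∅ ∨ P j ⊆ annulus ξ ε i := by
  refine (eq_empty_or_nonempty _).imp_right fun ⟨z, hz, hzP⟩ y hy => ?_
  rw [mem_annulus] at hz ⊢
  constructor
  · by_contra! hlt
    exact h' ⟨y, hy, z, hzP, hlt, hz.1⟩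
  · by_contra! hlt
    exact h ⟨z, hzP, y, hy, hz.2, hlt⟩

/-- The weight with which `∫_{annulus ∩ P j} |b|` enters the estimate of the `i`-th increment of
`F.indicator b` at `ξ`: a cell inside `F` and the shell contributes through the oscillation of the
kernel, the remaining ones through its size. -/
def CZO.cellWeight (S : CZO d) (P : ι → Set (Rd d)) (c : ι → Rd d) (r : ι → ℝ)
    (F : Set (Rd d)) (ξ : Rd d) (ε : ℕ → ℝ) (i : ℕ) (j : ι) : ℝ≥0∞ :=
  S.kernelOsc (r j) ξ (c j) + {j | ¬P j ⊆ F}.indicator (fun j => kernelSize ξ (c j)) j +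
    ((straddling P ξ (ε i)).indicator (fun j => kernelSize ξ (c j)) j +
      (straddling P ξ (ε (i + 1))).indicator (fun j => kernelSize ξ (c j)) j)

namespace IsBadPart

theorem enorm_setIntegral_annulus_inter_le (hb : IsBadPart volume L P c r b) (S : CZO d) {j : ι}
    (hfar : 4 * r j < dist ξ (c j)) (F : Set (Rd d)) (ε : ℕ → ℝ) (i : ℕ) :
    ‖∫ y in annulus ξ ε i ∩ P j, S.K ξ y * F.indicator b y‖ₑ ≤
      ENNReal.ofReal S.Cst *
        (S.cellWeight P c r F ξ ε i j * ∫⁻ y in annulus ξ ε i ∩ P j, ‖b y‖ₑ) := by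
  have hr := hb.radius_pos j
  have hP := hb.measurableSet j
  have hsize : kernelSize ξ (c j) ≤ S.cellWeight P c r F ξ ε i j →
      ‖∫ y in annulus ξ ε i ∩ P j, S.K ξ y * F.indicator b y‖ₑ ≤ ENNReal.ofReal S.Cst *
        (S.cellWeight P c r F ξ ε i j * ∫⁻ y in annulus ξ ε i ∩ P j, ‖b y‖ₑ) := fun h =>
    (S.enorm_setIntegral_kernel_mul_indicator_le hr hfar ((measurableSet_annulus _ _ _).inter hP)
      (inter_subset_right.trans (hb.subset_closedBall j)) hb.measurable F).trans (by gcongr)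
  by_cases hF : P j ⊆ F
  swap
  · refine hsize (le_add_right (le_add_left ?_))
    rw [indicator_of_mem (s := {j | ¬P j ⊆ F}) hF]
  by_cases hi : j ∈ straddling P ξ (ε i)
  · refine hsize (le_add_left (le_add_right ?_))
    rw [indicator_of_mem hi]
  by_cases hi' : j ∈ straddling P ξ (ε (i + 1))
  · refine hsize (le_add_left (le_add_left ?_))
    rw [indicator_of_mem hi']
  rcases annulus_inter_eq_empty_or_subset_annulus hi hi' with hempty | hsub
  · simp [hempty]
  have hindicator : ∫ y in P j, S.K ξ y * F.indicator b y = ∫ y in P j, S.K ξ y * b y :=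
    setIntegral_congr_fun hP fun y hy => by simp only [indicator_of_mem (hF hy)]
  rw [inter_eq_right.2 hsub, hindicator]
  refine (S.enorm_setIntegral_kernel_mul_le_of_setIntegral_eq_zero hr hfar hP
    (hb.subset_closedBall j) hb.measurable hb.integrable.integrableOn
    (hb.setIntegral_eq_zero j)).trans ?_
  gcongr
  exact le_add_right le_self_add

theorem increment_indicator_le [Countable ι] (hb : IsBadPart volume L P c r b) (S : CZO d)
    (hfar : ∀ j, 4 * r j < dist ξ (c j)) {F : Set (Rd d)} (hF : MeasurableSet F)
    (hε : IsTruncSeq ε) (i : ℕ) :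
    S.increment (F.indicator b) ξ ε i ≤ ENNReal.ofReal S.Cst *
      ∑' j, S.cellWeight P c r F ξ ε i j * ∫⁻ y in annulus ξ ε i ∩ P j, ‖b y‖ₑ := by
  have hh := hb.tailIntegrable.indicator hF
  have hA := measurableSet_annulus ξ ε i
  have hint : IntegrableOn (fun y => S.K ξ y * F.indicator b y) (⋃ j, annulus ξ ε i ∩ P j) :=
    (hh.integrableOn_kernel_mul S ξ (hε.2.1 (i + 1))).mono_set
      (iUnion_subset fun j => inter_subset_left.trans sdiff_subset)
  have hdisj : Pairwise (Function.onFun Disjoint fun j => annulus ξ ε i ∩ P j) :=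
    fun j k hjk => (hb.disjoint hjk).mono inter_subset_right inter_subset_right
  have hcells : ∫ y in annulus ξ ε i, S.K ξ y * F.indicator b y =
      ∑' j, ∫ y in annulus ξ ε i ∩ P j, S.K ξ y * F.indicator b y := by
    rw [← integral_iUnion (fun j => hA.inter (hb.measurableSet j)) hdisj hint, ← inter_iUnion]
    refine setIntegral_eq_of_subset_of_forall_sdiff_eq_zero hA inter_subset_left fun y hy => ?_
    rw [indicator_apply_eq_zero.2 fun _ => hb.eq_zero_of_notMem y fun hyP => hy.2 ⟨hy.1, hyP⟩,
      mul_zero]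
  rw [CZO.increment, S.trunc_sub_trunc_eq hh ξ hε, hcells, ← ENNReal.tsum_mul_left]
  exact enorm_tsum_le_tsum_enorm.trans (ENNReal.tsum_le_tsum fun j =>
    hb.enorm_setIntegral_annulus_inter_le S (hfar j) F ε i)

-- Cauchy–Schwarz with the weights `√(|ξ - c j| / r j)` and `√(r j / |ξ - c j|)`: the former are
-- summable over a thin shell, the latter are controlled by the modulus of continuity.
theorem sq_tsum_straddling_le [Countable ι] [NeZero d] (hb : IsBadPart volume L P c r b)
    (hfar : ∀ j, 4 * r j < dist ξ (c j)) {R : ℝ} (hR : 0 < R) (A : Set (Rd d)) :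
    (∑' j, (straddling P ξ R).indicator (fun j => kernelSize ξ (c j)) j *
      ∫⁻ y in A ∩ P j, ‖b y‖ₑ) ^ 2 ≤
      ENNReal.ofReal (2 * (2 ^ d * 2 ^ d)) * shellConst (volume : Measure (Rd d)) 2 * L *
        ∑' j, ENNReal.ofReal √(r j / dist ξ (c j)) * kernelSize ξ (c j) *
          ∫⁻ y in A ∩ P j, ‖b y‖ₑ := by
  refine (sq_tsum_le_of_sq_le_mul fun j => ?_).trans
    (mul_le_mul_left (hb.tsum_straddling_le hfar hR) _)
  by_cases hj : j ∈ straddling P ξ R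
  swap
  · simp [indicator_of_notMem hj]
  have hr := hb.radius_pos j
  have hpos : 0 < dist ξ (c j) := by linarith [hfar j]
  have hsqrt :
      ENNReal.ofReal √(dist ξ (c j) / r j) * ENNReal.ofReal √(r j / dist ξ (c j)) = 1 := by
    rw [← ENNReal.ofReal_mul (by positivity), ← Real.sqrt_mul (by positivity),
      div_mul_div_cancel₀ hr.ne', div_self hpos.ne', Real.sqrt_one, ENNReal.ofReal_one]
  set m := ∫⁻ y in A ∩ P j, ‖b y‖ₑ
  have hm : m ≤ ∫⁻ y in P j, ‖b y‖ₑ := lintegral_mono_set inter_subset_right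
  simp only [indicator_of_mem hj]
  calc (kernelSize ξ (c j) * m) ^ 2
      = (ENNReal.ofReal √(dist ξ (c j) / r j) * ENNReal.ofReal √(r j / dist ξ (c j))) *
          (kernelSize ξ (c j) ^ 2 * (m * m)) := by rw [hsqrt]; ring
    _ ≤ (ENNReal.ofReal √(dist ξ (c j) / r j) * ENNReal.ofReal √(r j / dist ξ (c j))) *
          (kernelSize ξ (c j) ^ 2 * ((∫⁻ y in P j, ‖b y‖ₑ) * m)) := by gcongr
    _ = _ := by ring

theorem tsum_sq_straddling_le [Countable ι] [NeZero d] (hb : IsBadPart volume L P c r b)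
    (S : CZO d) (hfar : ∀ j, 4 * r j < dist ξ (c j)) (hε : Antitone ε) {R : ℕ → ℝ}
    (hR : ∀ i, 0 < R i) :
    ∑' i, (∑' j, (straddling P ξ (R i)).indicator (fun j => kernelSize ξ (c j)) j *
      ∫⁻ y in annulus ξ ε i ∩ P j, ‖b y‖ₑ) ^ 2 ≤
      ENNReal.ofReal (2 * (2 ^ d * 2 ^ d)) * shellConst (volume : Measure (Rd d)) 2 * L *
        (ENNReal.ofReal (2 ^ d) * S.badTail P c r b ξ) := by
  set M := ENNReal.ofReal (2 * (2 ^ d * 2 ^ d)) * shellConst (volume : Measure (Rd d)) 2 * L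
  set w : ι → ℝ≥0∞ := fun j => ENNReal.ofReal √(r j / dist ξ (c j)) * kernelSize ξ (c j)
  calc _ ≤ M * ∑' i, ∑' j, w j * ∫⁻ y in annulus ξ ε i ∩ P j, ‖b y‖ₑ := by
        rw [← ENNReal.tsum_mul_left]
        exact ENNReal.tsum_le_tsum fun i => hb.sq_tsum_straddling_le hfar (hR i) _
    _ ≤ M * ∑' j, w j * ∫⁻ y in P j, ‖b y‖ₑ := by
        gcongr
        exact tsum_tsum_mul_setLIntegral_annulus_inter_le hb.measurableSet ξ hε w _
    _ ≤ M * (ENNReal.ofReal (2 ^ d) * S.badTail P c r b ξ) := by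
        rw [CZO.badTail, ← ENNReal.tsum_mul_left (a := ENNReal.ofReal (2 ^ d))]
        refine mul_le_mul_right (ENNReal.tsum_le_tsum fun j => ?_) M
        rw [← mul_assoc]
        exact mul_le_mul_left (S.ofReal_sqrt_div_mul_kernelSize_le _ _ _) _

theorem tsum_kernelSize_not_subset_compl_dilate_le [Countable ι]
    (hb : IsBadPart volume L P c r b) {Q : Cube d} (hξ : ξ ∈ Q.set)
    (hfar : ∀ j, 4 * r j < dist ξ (c j)) (hl : ∀ j, Q.l ≤ 2 * dist ξ (c j)) :
    ∑' j, {j | ¬P j ⊆ (Q.dilate 3)ᶜ}.indicator (fun j => kernelSize ξ (c j)) j *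
      ∫⁻ y in P j, ‖b y‖ₑ ≤
      ENNReal.ofReal ((4 * (4 * √d)) ^ d) * volume (ball (0 : Rd d) 1) * L := by
  refine (tsum_congr fun j =>
    (indicator_mul_left _ _ fun j => ∫⁻ y in P j, ‖b y‖ₑ).symm).trans_le ?_
  refine hb.tsum_kernelSize_mul_le_of_subset_closedBall Q.hl (by positivity) (fun j _ => hl j)
    fun j hj z hz => ?_
  obtain ⟨y, hy, hyQ⟩ := not_subset.1 hj
  have hdist := Cube.dist_le_of_mem_dilate_three hξ (not_not.1 hyQ)
  have hy' := abs_le.1 (hb.abs_dist_sub_dist_le hy ξ)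
  have hz' := abs_le.1 (hb.abs_dist_sub_dist_le hz ξ)
  rw [mem_closedBall, dist_comm]
  linarith [hfar j]

end IsBadPart

namespace CZO

theorem exists_var_indicator_le_badTail_of_far.{u} [NeZero d] (S : CZO d) {ρ : ℝ} (hρ : 2 ≤ ρ) :
    ∃ C ≠ ∞, ∀ {ι : Type u} [Countable ι] {L : ℝ≥0∞} {P : ι → Set (Rd d)} {c : ι → Rd d}
      {r : ι → ℝ} {b : Rd d → ℝ}, IsBadPart volume L P c r b → ∀ (Q : Cube d), ∀ ξ ∈ Q.set,
      (∀ j, 4 * r j < dist ξ (c j)) → (∀ j, Q.l ≤ 2 * dist ξ (c j)) →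
      S.var ρ ((Q.dilate 3)ᶜ.indicator b) ξ ≤ C * (L + S.badTail P c r b ξ) := by
  set k := ENNReal.ofReal S.Cst
  set C₁ := ENNReal.ofReal (2 * (2 ^ d * 2 ^ d)) * shellConst (volume : Measure (Rd d)) 2
  set C₂ := ENNReal.ofReal ((4 * (4 * √d)) ^ d) * volume (ball (0 : Rd d) 1)
  set T := ENNReal.ofReal (2 ^ d)
  have hC₁ : C₁ ≠ ∞ := ENNReal.mul_ne_top ENNReal.ofReal_ne_top (shellConst_ne_top _ _)
  refine ⟨k * (1 + C₂) + (k * (C₁ + T) + k * (C₁ + T)), by finiteness,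
    fun {ι} _ {L P c r b} hb Q ξ hξ hfar hl => S.var_le fun ε hε => ?_⟩
  set G := S.badTail P c r b ξ
  set F := (Q.dilate 3)ᶜ
  set m : ℕ → ι → ℝ≥0∞ := fun i j => ∫⁻ y in annulus ξ ε i ∩ P j, ‖b y‖ₑ
  set osc : ι → ℝ≥0∞ := fun j => S.kernelOsc (r j) ξ (c j) +
    {j | ¬P j ⊆ F}.indicator (fun j => kernelSize ξ (c j)) j
  set str : ℝ → ι → ℝ≥0∞ := fun R =>
    (straddling P ξ R).indicator fun j => kernelSize ξ (c j)
  have hosc : ∑' i, k * ∑' j, osc j * m i j ≤ k * (G + C₂ * L) := by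
    rw [ENNReal.tsum_mul_left]
    refine mul_le_mul_right ((tsum_tsum_mul_setLIntegral_annulus_inter_le hb.measurableSet ξ
      hε.1.antitone osc _).trans ?_) k
    simp only [osc, add_mul, ENNReal.tsum_add]
    exact add_le_add le_rfl (hb.tsum_kernelSize_not_subset_compl_dilate_le hξ hfar hl)
  have hstr : ∀ R : ℕ → ℝ, (∀ i, 0 < R i) →
      ∑' i, (k * ∑' j, str (R i) j * m i j) ^ 2 ≤ (k * ((C₁ + T) * (L + G))) ^ 2 := fun R hR => by
    simp only [mul_pow k, ENNReal.tsum_mul_left]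
    gcongr
    exact (hb.tsum_sq_straddling_le S hfar hε.1.antitone hR).trans (mul_mul_mul_le_sq_add ..)
  have hincr : ∀ i, S.increment (F.indicator b) ξ ε i ≤ k * ∑' j, osc j * m i j +
      (k * ∑' j, str (ε i) j * m i j + k * ∑' j, str (ε (i + 1)) j * m i j) := fun i => by
    rw [← mul_add, ← mul_add, ← ENNReal.tsum_add, ← ENNReal.tsum_add]
    simp only [← add_mul]
    exact hb.increment_indicator_le S hfar (Q.measurableSet_dilate 3).compl hε i
  calc seqNorm ρ (S.increment (F.indicator b) ξ ε)
      ≤ k * (G + C₂ * L) + (k * ((C₁ + T) * (L + G)) + k * ((C₁ + T) * (L + G))) :=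
        seqNorm_le_of_le_add_add hρ hincr hosc (hstr ε hε.2.1) (hstr _ fun i => hε.2.1 (i + 1))
    _ ≤ k * ((L + G) + C₂ * (L + G)) +
          (k * ((C₁ + T) * (L + G)) + k * ((C₁ + T) * (L + G))) := by
        gcongr
        exacts [le_add_self, le_self_add]
    _ = (k * (1 + C₂) + (k * (C₁ + T) + k * (C₁ + T))) * (L + G) := by ring

end CZO

end BadPart

section BadPartOnCubes

open Metric

theorem IsBadPart.restrict {E ι : Type*} [NormedAddCommGroup E] [MeasurableSpace E] {μ : Measure E}
    [Countable ι] {L : ℝ≥0∞} {P : ι → Set E} {c : ι → E} {r : ι → ℝ} {b : E → ℝ}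
    (hb : IsBadPart μ L P c r b) (J : Set ι) :
    IsBadPart μ L (fun j : J => P j) (fun j => c j) (fun j => r j)
      ((⋃ j : J, P j).indicator b) := by
  have hmeas : MeasurableSet (⋃ j : J, P j) := .iUnion fun j => hb.measurableSet j
  have heq : ∀ j : J, EqOn ((⋃ j : J, P j).indicator b) b (P j) := fun j y hy =>
    indicator_of_mem (mem_iUnion.2 ⟨j, hy⟩) b
  exact
    { radius_pos := fun j => hb.radius_pos j
      measurableSet := fun j => hb.measurableSet j
      disjoint := fun i j hij => hb.disjoint (Subtype.coe_ne_coe.2 hij)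
      subset_closedBall := fun j => hb.subset_closedBall j
      measurable := hb.measurable.indicator hmeas
      integrable := hb.integrable.indicator hmeas
      eq_zero_of_notMem := fun y hy => indicator_of_notMem hy b
      setIntegral_eq_zero := fun j => by
        rw [setIntegral_congr_fun (hb.measurableSet j) (heq j), hb.setIntegral_eq_zero]
      setLIntegral_le := fun j => (lintegral_mono fun y =>
        enorm_indicator_le_enorm_self b y).trans (hb.setLIntegral_le j) }

variable {d : ℕ} {ι : Type*} {L : ℝ≥0∞} {P : ι → Set (Rd d)} {c : ι → Rd d} {r : ι → ℝ}
  {b : Rd d → ℝ} {x ξ : Rd d}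

theorem CZO.badTail_restrict_le (S : CZO d) (J : Set ι) {K : ℝ≥0∞}
    (h : ∀ j ∈ J, S.kernelOsc (r j) ξ (c j) ≤ K * S.kernelOsc (r j) x (c j)) :
    S.badTail (fun j : J => P j) (fun j => c j) (fun j => r j) ((⋃ j : J, P j).indicator b) ξ ≤
      K * S.badTail P c r b x := by
  calc _ ≤ ∑' j : J, K * (S.kernelOsc (r j) x (c j) * ∫⁻ y in P j, ‖b y‖ₑ) := by
        refine ENNReal.tsum_le_tsum fun j => ?_
        rw [← mul_assoc]
        exact mul_le_mul' (h j j.2) (lintegral_mono fun y => enorm_indicator_le_enorm_self b y)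
    _ ≤ K * S.badTail P c r b x := by
        rw [ENNReal.tsum_mul_left]
        gcongr
        exact ENNReal.tsum_comp_le_tsum_of_injective Subtype.val_injective
          fun j => S.kernelOsc (r j) x (c j) * ∫⁻ y in P j, ‖b y‖ₑ

theorem CZO.measurable_badTail [Countable ι] (S : CZO d) (P : ι → Set (Rd d)) (c : ι → Rd d)
    (r : ι → ℝ) (b : Rd d → ℝ) : Measurable (S.badTail P c r b) :=
  .tsum fun j => (S.measurable_kernelOsc (r j) (c j)).mul_const _

theorem IsBadPart.far_of_not_subset_dilate_three (hb : IsBadPart volume L P c r b) {Q : Cube d}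
    (hx : x ∈ Q.set) (hξ : ξ ∈ Q.set) {j : ι} (hfar : (4 + 5 * √d) * r j < dist x (c j))
    (hj : ¬P j ⊆ Q.dilate 3) :
    4 * r j < dist ξ (c j) ∧ Q.l ≤ 2 * dist ξ (c j) ∧
      dist x (c j) ≤ (1 + 2 * √d) * dist ξ (c j) := by
  obtain ⟨y, hyP, hyQ⟩ := not_subset.1 hj
  have hr := hb.radius_pos j
  have hl : Q.l ≤ dist ξ (c j) + r j := by
    linarith [Cube.le_dist_of_notMem_dilate_three hξ hyQ,
      (abs_le.1 (hb.abs_dist_sub_dist_le hyP ξ)).2]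
  have hdist : dist x (c j) ≤ √d * Q.l + dist ξ (c j) :=
    (dist_triangle x ξ (c j)).trans (by gcongr; exact Cube.dist_le hx hξ)
  have hfar' : 4 * r j < dist ξ (c j) := by
    by_contra! hle
    have hl' : √d * Q.l ≤ √d * (5 * r j) := by gcongr; linarith
    linarith
  have hl' : Q.l ≤ 2 * dist ξ (c j) := by linarith
  have hmul : √d * Q.l ≤ √d * (2 * dist ξ (c j)) := by gcongr
  exact ⟨hfar', hl', by linarith⟩

-- Only the cells that meet the complement of `3Q` matter, and those are far from all of `Q`.
theorem CZO.exists_grandSup_le_badTail.{u} [NeZero d] (S : CZO d) {ρ : ℝ}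
    (hρ : 2 ≤ ρ) :
    ∃ C ≠ ∞, ∀ {ι : Type u} [Countable ι] {L : ℝ≥0∞} {P : ι → Set (Rd d)} {c : ι → Rd d}
      {r : ι → ℝ} {b : Rd d → ℝ}, IsBadPart volume L P c r b →
      ∀ x, (∀ j, (4 + 5 * √d) * r j < dist x (c j)) →
      S.grandSup ρ b x ≤ C * (L + S.badTail P c r b x) := by
  obtain ⟨C, hC, hvar⟩ := S.exists_var_indicator_le_badTail_of_far hρ
  set D : ℝ := 1 + 2 * √d
  set K : ℝ≥0∞ := ENNReal.ofReal (⌈D⌉₊ * D ^ d)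
  refine ⟨C * (1 + K), by finiteness, fun {ι} _ {L P c r b} hb x hx =>
    S.grandSup_le fun Q hxQ ξ hξ => ?_⟩
  set J : Set ι := {j | ¬P j ⊆ Q.dilate 3}
  have hfar : ∀ j ∈ J, _ := fun j hj => hb.far_of_not_subset_dilate_three hxQ hξ (hx j) hj
  have hrestrict : (Q.dilate 3)ᶜ.indicator b =
      (Q.dilate 3)ᶜ.indicator ((⋃ j : J, P j).indicator b) := by
    refine indicator_congr fun y hy => ?_
    by_cases hyP : y ∈ ⋃ j, P j
    · obtain ⟨j, hj⟩ := mem_iUnion.1 hyP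
      exact (indicator_of_mem (mem_iUnion.2 ⟨⟨j, fun h => hy (h hj)⟩, hj⟩) b).symm
    · rw [hb.eq_zero_of_notMem y hyP, indicator_apply_eq_zero.2 fun _ =>
        hb.eq_zero_of_notMem y hyP]
  have htail := S.badTail_restrict_le (P := P) (b := b) J fun j hj => by
    have hr := hb.radius_pos j
    have hpos : 0 < dist ξ (c j) := by linarith [(hfar j hj).1]
    exact S.kernelOsc_le_mul_kernelOsc hr.le (lt_of_le_of_lt (by positivity) (hx j)) hpos
      (hfar j hj).2.2
  rw [hrestrict]
  refine (hvar (hb.restrict J) Q ξ hξ (fun j => (hfar j j.2).1)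
    fun j => (hfar j j.2).2.1).trans ?_
  rw [mul_assoc]
  gcongr
  calc L + _ ≤ L + K * S.badTail P c r b x := by gcongr
    _ ≤ (1 + K) * (L + S.badTail P c r b x) := by
        rw [add_mul, one_mul]
        exact add_le_add le_self_add (mul_le_mul_right le_add_self K)

end BadPartOnCubes

section HeightDecomposition

open Module Metric

theorem lintegral_rpow_le_mul_lintegral {α : Type*} [MeasurableSpace α] {μ : Measure α} {q : ℝ}
    (hq : 1 ≤ q) {u : α → ℝ≥0∞} {M : ℝ≥0∞} (hM : M ≠ ∞) (hu : ∀ᵐ x ∂μ, u x ≤ M) :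
    ∫⁻ x, u x ^ q ∂μ ≤ M ^ (q - 1) * ∫⁻ x, u x ∂μ := by
  rw [← lintegral_const_mul' _ _ (ENNReal.rpow_ne_top_of_nonneg (sub_nonneg.2 hq) hM)]
  refine lintegral_mono_ae (hu.mono fun x hx => ?_)
  calc u x ^ q = u x ^ (q - 1) * u x := by
        conv_lhs => rw [← sub_add_cancel q 1,
          ENNReal.rpow_add_of_nonneg _ _ (sub_nonneg.2 hq) zero_le_one, ENNReal.rpow_one]
    _ ≤ M ^ (q - 1) * u x := by gcongr

theorem lintegral_enorm_add_rpow_le {α : Type*} [MeasurableSpace α] {μ : Measure α} {q : ℝ}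
    (hq : 1 ≤ q) {g h : α → ℝ} (hg : Measurable g) :
    ∫⁻ x, ‖g x + h x‖ₑ ^ q ∂μ ≤ 2 ^ (q - 1) * ((∫⁻ x, ‖g x‖ₑ ^ q ∂μ) + ∫⁻ x, ‖h x‖ₑ ^ q ∂μ) := by
  rw [← lintegral_add_left (by fun_prop), ← lintegral_const_mul' _ _
    (ENNReal.rpow_ne_top_of_nonneg (sub_nonneg.2 hq) (by finiteness))]
  refine lintegral_mono fun x => ?_
  calc ‖g x + h x‖ₑ ^ q ≤ (‖g x‖ₑ + ‖h x‖ₑ) ^ q := by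
        gcongr
        exact enorm_add_le _ _
    _ ≤ _ := ENNReal.rpow_add_le_mul_rpow_add_rpow _ _ hq

theorem exists_calderonZygmund_decomposition_at_height {E : Type*} [NormedAddCommGroup E]
    [MeasurableSpace E] [NormedSpace ℝ E] [FiniteDimensional ℝ E] [BorelSpace E] [Nontrivial E]
    {μ : Measure E} [μ.IsAddHaarMeasure] {q : ℝ} (hq : 1 ≤ q) {f : E → ℝ} {lam : ℝ≥0∞}
    (hf : Measurable f) (hlam₀ : lam ≠ 0) (hlam : lam ≠ ∞)
    (hint : ∫⁻ y in {y | lam < ‖f y‖ₑ}, ‖f y‖ₑ ∂μ ≠ ∞) :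
    ∃ (u : Set (E × ℝ)) (Q : u → Set E) (c : u → E) (r : u → ℝ) (b : E → ℝ), Countable u ∧
      IsBadPart μ (2 * 5 ^ finrank ℝ E * lam) Q c r b ∧
      (∀ᵐ y ∂μ, ‖f y - b y‖ₑ ≤ (1 + 5 ^ finrank ℝ E) * lam) ∧
      ∫⁻ y, ‖f y - b y‖ₑ ^ q ∂μ ≤ 2 ^ (q - 1) * ((∫⁻ y in {y | ‖f y‖ₑ ≤ lam}, ‖f y‖ₑ ^ q ∂μ) +
        (5 ^ finrank ℝ E * lam) ^ (q - 1) * ∫⁻ y in {y | lam < ‖f y‖ₑ}, ‖f y‖ₑ ∂μ) ∧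
      ∑' j, ∫⁻ y in Q j, ‖b y‖ₑ ∂μ ≤ 2 * ∫⁻ y in {y | lam < ‖f y‖ₑ}, ‖f y‖ₑ ∂μ ∧
      ∀ N : ℝ, 0 ≤ N → ∑' j, μ (closedBall (c j) (N * r j)) ≤
        ENNReal.ofReal ((N * 5) ^ finrank ℝ E) *
          (lam⁻¹ * ∫⁻ y in {y | lam < ‖f y‖ₑ}, ‖f y‖ₑ ∂μ) := by
  set A : Set E := {y | lam < ‖f y‖ₑ}
  have hA : MeasurableSet A := measurableSet_lt measurable_const hf.enorm
  have hAc : {y | ‖f y‖ₑ ≤ lam} = Aᶜ := by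
    ext y
    simp only [A, mem_compl_iff, mem_ofPred_eq, not_lt]
  have hlow : ∀ y, ‖Aᶜ.indicator f y‖ₑ ≤ lam := fun y => by
    rw [enorm_indicator_eq_indicator_enorm]
    exact indicator_apply_le' (fun hy => not_lt.1 hy) fun _ => zero_le
  have hhigh : ∫⁻ y, ‖A.indicator f y‖ₑ ∂μ = ∫⁻ y in A, ‖f y‖ₑ ∂μ := by
    simpa only [ENNReal.rpow_one] using lintegral_enorm_indicator_rpow (μ := μ) hA one_pos f
  obtain ⟨u, Q, c, r, b, hu, hbad, hgood, hgood_int, hsum, hballs⟩ :=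
    exists_calderonZygmund_decomposition (hf.indicator hA) (hhigh ▸ hint) hlam₀
  rw [hhigh] at hgood_int hsum hballs
  have hsplit : ∀ y, f y - b y = Aᶜ.indicator f y + (A.indicator f y - b y) := fun y => by
    rw [← add_sub_assoc, ← Pi.add_apply, indicator_compl_add_self]
  refine ⟨u, Q, c, r, b, hu, hbad, hgood.mono fun y hy => ?_, ?_, hsum, hballs⟩
  · rw [hsplit, add_mul, one_mul]
    exact (enorm_add_le _ _).trans (add_le_add (hlow y) hy)
  · simp only [hsplit]
    rw [hAc, ← lintegral_enorm_indicator_rpow hA.compl (zero_lt_one.trans_le hq)]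
    refine (lintegral_enorm_add_rpow_le hq (hf.indicator hA.compl)).trans ?_
    gcongr
    exact (lintegral_rpow_le_mul_lintegral hq (by finiteness) hgood).trans (by gcongr)

end HeightDecomposition

section LevelSets

open Metric

variable {d : ℕ} [NeZero d] {S : CZO d} {ρ q : ℝ}

theorem IsBadPart.volume_le_badTail_inter_le {ι : Type*} [Countable ι] {L lam : ℝ≥0∞}
    {P : ι → Set (Rd d)} {c : ι → Rd d} {r : ι → ℝ} {b : Rd d → ℝ}
    (hb : IsBadPart volume L P c r b) (S : CZO d) {A : Set (Rd d)}
    (hA : ∀ x ∈ A, ∀ j, r j < dist x (c j)) (hlam₀ : lam ≠ 0) (hlam : lam ≠ ∞) :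
    volume ({x | lam ≤ S.badTail P c r b x} ∩ A) ≤
      lam⁻¹ * (S.diniConst * ∑' j, ∫⁻ y in P j, ‖b y‖ₑ) := by
  have hm := S.measurable_badTail P c r b
  rw [← ENNReal.mul_le_iff_le_inv hlam₀ hlam,
    ← Measure.restrict_apply (measurableSet_le measurable_const hm)]
  exact (mul_meas_ge_le_lintegral hm lam).trans (hb.lintegral_badTail_le S hA)

theorem CZO.exists_volume_le_forall_grandSup_badPart_le.{u} (S : CZO d) (hρ : 2 ≤ ρ) :
    ∃ C ≠ ∞, ∀ {ι : Type u} [Countable ι] {L lam I : ℝ≥0∞} {P : ι → Set (Rd d)} {c : ι → Rd d}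
      {r : ι → ℝ} {b : Rd d → ℝ}, IsBadPart volume L P c r b → lam ≠ 0 → lam ≠ ∞ →
      ∑' j, ∫⁻ y in P j, ‖b y‖ₑ ≤ 2 * I →
      (∀ N : ℝ, 0 ≤ N → ∑' j, volume (closedBall (c j) (N * r j)) ≤
        ENNReal.ofReal ((N * 5) ^ d) * (lam⁻¹ * I)) →
      ∃ U : Set (Rd d), volume U ≤ C * (lam⁻¹ * I) ∧
        ∀ x ∉ U, S.grandSup ρ b x ≤ C * (L + lam) := by
  obtain ⟨C, hC, hgrand⟩ := S.exists_grandSup_le_badTail hρ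
  have hdini := S.diniConst_ne_top
  set N : ℝ := 4 + 5 * √d
  have hN : 1 ≤ N := by linarith [Real.sqrt_nonneg d]
  set K : ℝ≥0∞ := ENNReal.ofReal ((N * 5) ^ d) + 2 * S.diniConst
  refine ⟨C + K, by finiteness, fun {ι} _ {L lam I P c r b} hb hlam₀ hlam hsum hballs => ?_⟩
  set A : Set (Rd d) := {x | ∀ j, N * r j < dist x (c j)}
  have hA : ∀ x ∈ A, ∀ j, r j < dist x (c j) := fun x hx j =>
    (le_mul_of_one_le_left (hb.radius_pos j).le hN).trans_lt (hx j)
  refine ⟨(⋃ j, closedBall (c j) (N * r j)) ∪ ({x | lam ≤ S.badTail P c r b x} ∩ A), ?_,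
    fun x hx => ?_⟩
  · calc volume _ ≤ ENNReal.ofReal ((N * 5) ^ d) * (lam⁻¹ * I) +
          lam⁻¹ * (S.diniConst * (2 * I)) := by
          refine (measure_union_le _ _).trans (add_le_add
            ((measure_iUnion_le _).trans (hballs N (by linarith)))
            ((hb.volume_le_badTail_inter_le S hA hlam₀ hlam).trans ?_))
          gcongr
      _ = K * (lam⁻¹ * I) := by ring
      _ ≤ (C + K) * (lam⁻¹ * I) := mul_le_mul_left le_add_self _
  · rw [mem_union, not_or, mem_iUnion, not_exists] at hx
    have hxA : x ∈ A := fun j => not_le.1 (hx.1 j)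
    have htail : S.badTail P c r b x ≤ lam := (not_le.1 fun hle => hx.2 ⟨hle, hxA⟩).le
    exact (hgrand hb x hxA).trans (mul_le_mul' le_self_add (by gcongr))

theorem CZO.exists_decomposition_at_height (S : CZO d) (hρ : 2 ≤ ρ) (hq : 1 ≤ q) :
    ∃ C ≠ ∞, ∀ (f : Rd d → ℝ) (lam : ℝ≥0∞), Measurable f → lam ≠ 0 → lam ≠ ∞ →
      ∫⁻ y in {y | lam < ‖f y‖ₑ}, ‖f y‖ₑ ≠ ∞ →
      ∃ (b : Rd d → ℝ) (U : Set (Rd d)), TailIntegrable b ∧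
        volume U ≤ C * (lam⁻¹ * ∫⁻ y in {y | lam < ‖f y‖ₑ}, ‖f y‖ₑ) ∧
        (∀ x ∉ U, S.grandSup ρ b x ≤ C * lam) ∧ (∀ᵐ y, ‖f y - b y‖ₑ ≤ C * lam) ∧
        ∫⁻ y, ‖f y - b y‖ₑ ^ q ≤ C * ((∫⁻ y in {y | ‖f y‖ₑ ≤ lam}, ‖f y‖ₑ ^ q) +
          lam ^ (q - 1) * ∫⁻ y in {y | lam < ‖f y‖ₑ}, ‖f y‖ₑ) := by
  obtain ⟨C, hC, hbad_le⟩ := S.exists_volume_le_forall_grandSup_badPart_le hρ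
  have hq' : 0 ≤ q - 1 := sub_nonneg.2 hq
  set M : ℝ≥0∞ := 5 ^ d
  set K : ℝ≥0∞ := C * (2 * M + 1) + (1 + M) + 2 ^ (q - 1) * (1 + M ^ (q - 1))
  have hM : 1 ≤ 2 * M + 1 := le_add_self
  refine ⟨K, by finiteness, fun f lam hf hlam₀ hlam hint => ?_⟩
  obtain ⟨u, P, c, r, b, hu, hbad, hgood, hgood_rpow, hsum, hballs⟩ :=
    exists_calderonZygmund_decomposition_at_height hq hf hlam₀ hlam hint
  rw [finrank_euclideanSpace_fin] at hbad hgood hgood_rpow hballs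
  obtain ⟨U, hU, hgrand⟩ := hbad_le hbad hlam₀ hlam hsum hballs
  set I := ∫⁻ y in {y | lam < ‖f y‖ₑ}, ‖f y‖ₑ
  set X := ∫⁻ y in {y | ‖f y‖ₑ ≤ lam}, ‖f y‖ₑ ^ q
  refine ⟨b, U, hbad.tailIntegrable, hU.trans (mul_le_mul_left ?_ _), fun x hx => ?_,
    hgood.mono fun y hy => hy.trans (mul_le_mul_left ?_ _), hgood_rpow.trans ?_⟩
  · exact (le_mul_of_one_le_right' hM).trans (le_self_add.trans le_self_add)
  · calc S.grandSup ρ b x ≤ C * (2 * M * lam + lam) := hgrand x hx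
      _ = C * (2 * M + 1) * lam := by ring
      _ ≤ K * lam := mul_le_mul_left (le_self_add.trans le_self_add) _
  · exact le_add_self.trans le_self_add
  · calc 2 ^ (q - 1) * (X + (M * lam) ^ (q - 1) * I)
        = 2 ^ (q - 1) * (1 * X + M ^ (q - 1) * (lam ^ (q - 1) * I)) := by
          rw [ENNReal.mul_rpow_of_nonneg _ _ hq', one_mul, mul_assoc (M ^ (q - 1))]
      _ ≤ 2 ^ (q - 1) * ((1 + M ^ (q - 1)) * X + (1 + M ^ (q - 1)) * (lam ^ (q - 1) * I)) := by
          gcongr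
          exacts [le_self_add, le_add_self]
      _ = 2 ^ (q - 1) * (1 + M ^ (q - 1)) * (X + lam ^ (q - 1) * I) := by ring
      _ ≤ K * (X + lam ^ (q - 1) * I) := mul_le_mul_left le_add_self _

end LevelSets

section LevelSetEstimates

theorem inv_rpow_mul_rpow_sub_one {x : ℝ≥0∞} (hx₀ : x ≠ 0) (hx : x ≠ ∞) (q : ℝ) :
    x⁻¹ ^ q * x ^ (q - 1) = x⁻¹ := by
  rw [ENNReal.inv_rpow, ← ENNReal.rpow_neg, ← ENNReal.rpow_add _ _ hx₀ hx,
    show -q + (q - 1) = -1 by ring, ENNReal.rpow_neg_one]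

theorem le_mul_of_rpow_mul_le {a b c v x : ℝ≥0∞} {q : ℝ} (hx₀ : x ≠ 0) (hx : x ≠ ∞)
    (h : x ^ q * v ≤ c * (a + x ^ (q - 1) * b)) : v ≤ c * (x⁻¹ ^ q * a + x⁻¹ * b) :=
  calc v ≤ (x ^ q)⁻¹ * (c * (a + x ^ (q - 1) * b)) :=
        (ENNReal.mul_le_iff_le_inv (by simp [hx₀, hx]) (by simp [hx₀, hx])).1 h
    _ = c * (x⁻¹ ^ q * a + x⁻¹ ^ q * x ^ (q - 1) * b) := by
        rw [ENNReal.inv_rpow]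
        ring
    _ = c * (x⁻¹ ^ q * a + x⁻¹ * b) := by rw [inv_rpow_mul_rpow_sub_one hx₀ hx]

variable {d : ℕ} [NeZero d] {S : CZO d} {ρ q : ℝ}

theorem CZO.VarBdd.exists_decomposition_volume_lt_grandSup_le (hb : S.VarBdd ρ q) (hρ : 2 ≤ ρ)
    (hq : 1 ≤ q) :
    ∃ C ≠ ∞, 1 ≤ C ∧ ∀ (f : Rd d → ℝ) (lam : ℝ≥0∞), TailIntegrable f → lam ≠ 0 → lam ≠ ∞ →
      ∫⁻ y in {y | lam < ‖f y‖ₑ}, ‖f y‖ₑ ≠ ∞ →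
      ∃ (b : Rd d → ℝ) (U : Set (Rd d)), TailIntegrable b ∧
        volume U ≤ C * (lam⁻¹ * ∫⁻ y in {y | lam < ‖f y‖ₑ}, ‖f y‖ₑ) ∧
        (∀ x ∉ U, S.grandSup ρ b x ≤ C * lam) ∧
        ∫⁻ y, ‖f y - b y‖ₑ ^ q ≤ C * ((∫⁻ y in {y | ‖f y‖ₑ ≤ lam}, ‖f y‖ₑ ^ q) +
          lam ^ (q - 1) * ∫⁻ y in {y | lam < ‖f y‖ₑ}, ‖f y‖ₑ) ∧
        ∀ κ, volume {x | (C + κ) * (C * lam) < S.grandSup ρ f x} ≤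
          C * ((lam⁻¹ * ∫⁻ y in {y | lam < ‖f y‖ₑ}, ‖f y‖ₑ) +
            volume {x | κ * (C * lam) < S.var ρ (fun y => f y - b y) x}) := by
  obtain ⟨D, hD, hdecomp⟩ := S.exists_decomposition_at_height hρ hq
  obtain ⟨B, hB, hbounded⟩ := hb.exists_grandSup_le_of_ae_le hρ hq
  set C : ℝ≥0∞ := D + (B + 1)
  have hC₁ : 1 ≤ C := le_add_self.trans le_add_self
  have hDC : D ≤ C := le_self_add
  have hBC : B + 1 ≤ C := le_add_self
  refine ⟨C, by finiteness, hC₁, fun f lam hf hlam₀ hlam hint => ?_⟩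
  obtain ⟨b, U, hb, hU, hbU, hgood, hgood_rpow⟩ := hdecomp f lam hf.measurable hlam₀ hlam hint
  set W := lam⁻¹ * ∫⁻ y in {y | lam < ‖f y‖ₑ}, ‖f y‖ₑ
  refine ⟨b, U, hb, hU.trans (by gcongr), fun x hx => (hbU x hx).trans (by gcongr),
    hgood_rpow.trans (by gcongr), fun κ => ?_⟩
  set V := {x | κ * (C * lam) < S.var ρ (fun y => f y - b y) x}
  rcases eq_or_ne (volume V) ∞ with hV | hV
  · simp [hV, ENNReal.mul_top (zero_lt_one.trans_le hC₁).ne']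
  obtain ⟨U', hU', hgU'⟩ := hbounded κ (C * lam) _ (hf.sub hb)
    (mul_ne_zero (zero_lt_one.trans_le hC₁).ne' hlam₀) (by finiteness)
    (hgood.mono fun y hy => hy.trans (by gcongr)) hV
  have hsub : {x | (C + κ) * (C * lam) < S.grandSup ρ f x} ⊆ U ∪ U' := fun x hx => by
    by_contra! hxU
    rw [mem_union, not_or] at hxU
    refine absurd (show (C + κ) * (C * lam) < S.grandSup ρ f x from hx) (not_lt.2 ?_)
    calc S.grandSup ρ f x = S.grandSup ρ (fun y => (f y - b y) + b y) x := by
          simp only [sub_add_cancel]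
      _ ≤ (B + κ) * (C * lam) + D * lam :=
          (S.grandSup_add_le (by linarith) (hf.sub hb) hb x).trans
            (add_le_add (hgU' x hxU.2) (hbU x hxU.1))
      _ ≤ (B + κ) * (C * lam) + C * lam := by gcongr
      _ = (B + 1 + κ) * (C * lam) := by ring
      _ ≤ (C + κ) * (C * lam) := by gcongr
  calc volume {x | (C + κ) * (C * lam) < S.grandSup ρ f x} ≤ D * W + B * volume V :=
        (measure_mono hsub).trans ((measure_union_le _ _).trans (add_le_add hU hU'))
    _ ≤ C * W + C * volume V := by
        gcongr
        exact le_self_add.trans hBC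
    _ = C * (W + volume V) := (mul_add _ _ _).symm

theorem CZO.VarBdd.exists_mul_volume_lt_var_le (hb : S.VarBdd ρ q) (hρ : 0 ≤ ρ) (hq : 0 < q) :
    ∃ A ≠ ∞, ∀ (g : Rd d → ℝ) (L : ℝ≥0∞), TailIntegrable g →
      L ^ q * volume {x | L < S.var ρ g x} ≤ A * ∫⁻ y, ‖g y‖ₑ ^ q := by
  obtain ⟨A, hA, hvar⟩ := hb.exists_lintegral_var_rpow_le
  refine ⟨A, hA, fun g L hg => ?_⟩
  calc L ^ q * volume {x | L < S.var ρ g x}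
      ≤ L ^ q * volume {x | L ^ q ≤ S.var ρ g x ^ q} := by
        gcongr
        exact fun hx => ENNReal.rpow_le_rpow hx.le hq.le
    _ ≤ ∫⁻ x, S.var ρ g x ^ q :=
        mul_meas_ge_le_lintegral ((S.measurable_var hρ hg).pow_const q) _
    _ ≤ A * ∫⁻ y, ‖g y‖ₑ ^ q := hvar g hg.measurable

theorem CZO.VarBdd.exists_volume_lt_grandSup_le_setLIntegral (hb : S.VarBdd ρ q) (hρ : 2 ≤ ρ)
    (hq : 1 ≤ q) :
    ∃ C ≠ ∞, C ≠ 0 ∧ ∀ (f : Rd d → ℝ) (lam : ℝ≥0∞), TailIntegrable f → lam ≠ 0 → lam ≠ ∞ →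
      volume {x | C * lam < S.grandSup ρ f x} ≤
        C * (lam⁻¹ ^ q * (∫⁻ y in {y | ‖f y‖ₑ ≤ lam}, ‖f y‖ₑ ^ q) +
          lam⁻¹ * ∫⁻ y in {y | lam < ‖f y‖ₑ}, ‖f y‖ₑ) := by
  obtain ⟨C, hC, hC₁, hdecomp⟩ := hb.exists_decomposition_volume_lt_grandSup_le hρ hq
  obtain ⟨A, hA, hweak⟩ := hb.exists_mul_volume_lt_var_le (by linarith) (by linarith)
  have hC₀ : C ≠ 0 := (zero_lt_one.trans_le hC₁).ne'
  refine ⟨(C + 1) * C + C * (1 + A * C), by finiteness, by simp [hC₀],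
    fun f lam hf hlam₀ hlam => ?_⟩
  set K := C * (1 + A * C)
  set X := ∫⁻ y in {y | ‖f y‖ₑ ≤ lam}, ‖f y‖ₑ ^ q
  set I := ∫⁻ y in {y | lam < ‖f y‖ₑ}, ‖f y‖ₑ
  rcases eq_or_ne I ∞ with hI | hI
  · simp [hI, ENNReal.mul_top, hlam, hC₀]
  obtain ⟨b, -, hbt, -, -, hgood, hlevel⟩ := hdecomp f lam hf hlam₀ hlam hI
  have hV : volume {x | 1 * (C * lam) < S.var ρ (fun y => f y - b y) x} ≤
      A * C * (lam⁻¹ ^ q * X + lam⁻¹ * I) := by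
    set V := volume {x | 1 * (C * lam) < S.var ρ (fun y => f y - b y) x}
    refine le_mul_of_rpow_mul_le hlam₀ hlam ?_
    calc lam ^ q * V ≤ (1 * (C * lam)) ^ q * V := by
          gcongr
          rw [one_mul]
          exact le_mul_of_one_le_left' hC₁
      _ ≤ A * ∫⁻ y, ‖f y - b y‖ₑ ^ q := hweak _ _ (hf.sub hbt)
      _ ≤ A * C * (X + lam ^ (q - 1) * I) := by
          rw [mul_assoc]
          gcongr
  calc volume {x | ((C + 1) * C + K) * lam < S.grandSup ρ f x}
      ≤ volume {x | (C + 1) * (C * lam) < S.grandSup ρ f x} := by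
        simp only [← mul_assoc]
        gcongr
        exact le_self_add
    _ ≤ C * (lam⁻¹ * I + A * C * (lam⁻¹ ^ q * X + lam⁻¹ * I)) :=
        (hlevel 1).trans (by gcongr)
    _ ≤ C * ((lam⁻¹ ^ q * X + lam⁻¹ * I) + A * C * (lam⁻¹ ^ q * X + lam⁻¹ * I)) := by
        gcongr
        exact le_add_self
    _ = K * (lam⁻¹ ^ q * X + lam⁻¹ * I) := by ring
    _ ≤ ((C + 1) * C + K) * (lam⁻¹ ^ q * X + lam⁻¹ * I) := by
        gcongr
        exact le_add_self

theorem CZO.VarBdd.exists_volume_lt_grandSup_le_volume_lt_var (hb : S.VarBdd ρ q) (hρ : 2 ≤ ρ)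
    (hq : 1 ≤ q) :
    ∃ C ≠ ∞, C ≠ 0 ∧ ∀ (f : Rd d → ℝ) (lam : ℝ≥0∞), TailIntegrable f → lam ≠ 0 → lam ≠ ∞ →
      volume {x | C * lam < S.grandSup ρ f x} ≤
        C * (volume {x | lam < S.var ρ f x} + lam⁻¹ * ∫⁻ y in {y | lam < ‖f y‖ₑ}, ‖f y‖ₑ) := by
  obtain ⟨C, hC, hC₁, hdecomp⟩ := hb.exists_decomposition_volume_lt_grandSup_le hρ hq
  have hC₀ : C ≠ 0 := (zero_lt_one.trans_le hC₁).ne'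
  refine ⟨(C + 2) * C + C * (1 + C), by finiteness, by simp [hC₀],
    fun f lam hf hlam₀ hlam => ?_⟩
  set K := C * (1 + C)
  set I := ∫⁻ y in {y | lam < ‖f y‖ₑ}, ‖f y‖ₑ
  set V := {x | lam < S.var ρ f x}
  rcases eq_or_ne I ∞ with hI | hI
  · simp [hI, ENNReal.mul_top, hlam, hC₀]
  obtain ⟨b, U, hbt, hU, hbU, -, hlevel⟩ := hdecomp f lam hf hlam₀ hlam hI
  have hsub : {x | 2 * (C * lam) < S.var ρ (fun y => f y - b y) x} ⊆ V ∪ U := fun x hx => by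
    by_contra! hxU
    rw [mem_union, not_or] at hxU
    refine absurd (show 2 * (C * lam) < S.var ρ (fun y => f y - b y) x from hx) (not_lt.2 ?_)
    calc S.var ρ (fun y => f y - b y) x ≤ S.var ρ f x + S.var ρ b x :=
          S.var_sub_le (by linarith) hf hbt x
      _ ≤ C * lam + C * lam :=
          add_le_add ((not_lt.1 hxU.1).trans (le_mul_of_one_le_left' hC₁))
            ((S.var_le_grandSup (by linarith) b x).trans (hbU x hxU.2))
      _ = 2 * (C * lam) := (two_mul _).symm
  calc volume {x | ((C + 2) * C + K) * lam < S.grandSup ρ f x}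
      ≤ volume {x | (C + 2) * (C * lam) < S.grandSup ρ f x} := by
        simp only [← mul_assoc]
        gcongr
        exact le_self_add
    _ ≤ C * (lam⁻¹ * I + (volume V + C * (lam⁻¹ * I))) := by
        refine (hlevel 2).trans ?_
        gcongr
        exact (measure_mono hsub).trans ((measure_union_le _ _).trans (by gcongr))
    _ ≤ C * ((volume V + lam⁻¹ * I) + C * (volume V + lam⁻¹ * I)) := by
        rw [← add_assoc, add_comm (lam⁻¹ * I)]
        gcongr
        exact le_add_self
    _ = K * (volume V + lam⁻¹ * I) := by ring
    _ ≤ ((C + 2) * C + K) * (volume V + lam⁻¹ * I) := by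
        gcongr
        exact le_add_self

end LevelSetEstimates

section Interpolation

variable {α : Type*} [MeasurableSpace α] {μ : Measure α} {F u v : α → ℝ≥0∞} {C : ℝ≥0∞} {p q : ℝ}

theorem measurable_ofReal_rpow_mul_setLIntegral_lt (u w : α → ℝ≥0∞) (r : ℝ) :
    Measurable fun t : ℝ => ENNReal.ofReal (t ^ r) *
      ∫⁻ x in {x | ENNReal.ofReal t < u x}, w x ∂μ := by
  have hanti : Antitone fun t : ℝ => ∫⁻ x in {x | ENNReal.ofReal t < u x}, w x ∂μ :=
    fun s t hst => lintegral_mono_set fun x (hx : ENNReal.ofReal t < u x) =>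
      (ENNReal.ofReal_le_ofReal hst).trans_lt hx
  have := hanti.measurable
  fun_prop

theorem ofReal_rpow_mul_inv_rpow {t : ℝ} (ht : 0 < t) (r s : ℝ) :
    ENNReal.ofReal (t ^ r) * (ENNReal.ofReal t)⁻¹ ^ s = ENNReal.ofReal (t ^ (r - s)) := by
  rw [ENNReal.inv_rpow, ENNReal.ofReal_rpow_of_pos ht, ← ENNReal.ofReal_inv_of_pos (by positivity),
    ← ENNReal.ofReal_mul (by positivity), Real.rpow_sub ht, div_eq_mul_inv]

theorem mul_rpow_sub_one (hp : 1 < p) (x : ℝ≥0∞) : x * x ^ (p - 1) = x ^ p := by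
  nth_rw 1 [← ENNReal.rpow_one x]
  rw [← ENNReal.rpow_add_of_nonneg _ _ zero_le_one (by linarith), add_sub_cancel]

theorem rpow_mul_rpow_neg_sub_le (hp : 0 < p) (hpq : p < q) (x : ℝ≥0∞) :
    x ^ q * x ^ (-(q - p)) ≤ x ^ p := by
  rcases eq_or_ne x 0 with rfl | hx₀
  · simp [ENNReal.zero_rpow_of_pos (hp.trans hpq)]
  rcases eq_or_ne x ∞ with rfl | hx
  · simp [ENNReal.top_rpow_of_pos hp]
  rw [← ENNReal.rpow_add _ _ hx₀ hx, show q + -(q - p) = p by ring]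

theorem lintegral_rpow_le_of_forall_meas_lt_le [SFinite μ] (hp : 1 < p) (hC₀ : C ≠ 0) (hC : C ≠ ∞)
    (hu : Measurable u) {m : ℝ → ℝ≥0∞}
    (h : ∀ t : ℝ, 0 < t → μ {x | C * ENNReal.ofReal t < F x} ≤
      C * (m t + (ENNReal.ofReal t)⁻¹ * ∫⁻ x in {x | ENNReal.ofReal t < u x}, u x ∂μ)) :
    ∫⁻ x, F x ^ p ∂μ ≤ C ^ p * ENNReal.ofReal p * (C *
      ((∫⁻ x, u x ^ p ∂μ) / ENNReal.ofReal (p - 1) +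
        ∫⁻ t in Ioi (0 : ℝ), ENNReal.ofReal (t ^ (p - 1)) * m t)) := by
  refine (lintegral_rpow_le_lintegral_meas_lt (by linarith) hC₀ hC F).trans ?_
  gcongr
  set I : ℝ → ℝ≥0∞ := fun t => ∫⁻ x in {x | ENNReal.ofReal t < u x}, u x ∂μ
  have hlayer : ∫⁻ t in Ioi (0 : ℝ), ENNReal.ofReal (t ^ (p - 1 - 1)) * I t =
      (∫⁻ x, u x ^ p ∂μ) / ENNReal.ofReal (p - 1) := by
    rw [lintegral_rpow_mul_setLIntegral_lt (by linarith) hu hu]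
    simp only [mul_rpow_sub_one hp]
  calc ∫⁻ t in Ioi (0 : ℝ), ENNReal.ofReal (t ^ (p - 1)) * μ {x | C * ENNReal.ofReal t < F x}
      ≤ ∫⁻ t in Ioi (0 : ℝ), C * (ENNReal.ofReal (t ^ (p - 1 - 1)) * I t +
          ENNReal.ofReal (t ^ (p - 1)) * m t) := by
        refine setLIntegral_mono' measurableSet_Ioi fun t ht => ?_
        rw [← ofReal_rpow_mul_inv_rpow ht (p - 1) 1, ENNReal.rpow_one]
        exact (mul_le_mul_right (h t ht) _).trans_eq (by ring)
    _ = C * ((∫⁻ x, u x ^ p ∂μ) / ENNReal.ofReal (p - 1) +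
          ∫⁻ t in Ioi (0 : ℝ), ENNReal.ofReal (t ^ (p - 1)) * m t) := by
        rw [lintegral_const_mul' _ _ hC,
          lintegral_add_left (measurable_ofReal_rpow_mul_setLIntegral_lt u u _), hlayer]

theorem lintegral_rpow_le_of_forall_meas_lt_le_setLIntegral [SFinite μ] (hp : 1 < p) (hpq : p < q)
    (hC₀ : C ≠ 0) (hC : C ≠ ∞) (hu : Measurable u)
    (h : ∀ t : ℝ, 0 < t → μ {x | C * ENNReal.ofReal t < F x} ≤
      C * ((ENNReal.ofReal t)⁻¹ ^ q * (∫⁻ x in {x | u x ≤ ENNReal.ofReal t}, u x ^ q ∂μ) +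
        (ENNReal.ofReal t)⁻¹ * ∫⁻ x in {x | ENNReal.ofReal t < u x}, u x ∂μ)) :
    ∫⁻ x, F x ^ p ∂μ ≤ C ^ p * ENNReal.ofReal p * (C * ((ENNReal.ofReal (p - 1))⁻¹ +
      (ENNReal.ofReal (q - p))⁻¹)) * ∫⁻ x, u x ^ p ∂μ := by
  refine (lintegral_rpow_le_of_forall_meas_lt_le hp hC₀ hC hu h).trans ?_
  rw [mul_assoc _ (C * _), mul_assoc C, add_mul, div_eq_mul_inv,
    mul_comm (ENNReal.ofReal (p - 1))⁻¹]
  gcongr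
  calc ∫⁻ t in Ioi (0 : ℝ), ENNReal.ofReal (t ^ (p - 1)) * ((ENNReal.ofReal t)⁻¹ ^ q *
        ∫⁻ x in {x | u x ≤ ENNReal.ofReal t}, u x ^ q ∂μ)
      = ∫⁻ t in Ioi (0 : ℝ), ENNReal.ofReal (t ^ (-(q - p) - 1)) *
          ∫⁻ x in {x | u x ≤ ENNReal.ofReal t}, u x ^ q ∂μ := by
        refine setLIntegral_congr_fun measurableSet_Ioi fun t ht => ?_
        rw [← mul_assoc, ofReal_rpow_mul_inv_rpow ht, show -(q - p) - 1 = p - 1 - q by ring]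
    _ = (∫⁻ x, u x ^ q * u x ^ (-(q - p)) ∂μ) / ENNReal.ofReal (q - p) :=
        lintegral_rpow_mul_setLIntegral_le (by linarith) hu (hu.pow_const q)
    _ ≤ (ENNReal.ofReal (q - p))⁻¹ * ∫⁻ x, u x ^ p ∂μ := by
        rw [div_eq_mul_inv, mul_comm]
        gcongr with x
        exact rpow_mul_rpow_neg_sub_le (by linarith) hpq _

theorem lintegral_rpow_le_of_forall_meas_lt_le_meas_lt [SFinite μ] (hp : 1 < p)
    (hC₀ : C ≠ 0) (hC : C ≠ ∞) (hu : Measurable u) (hv : Measurable v)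
    (h : ∀ t : ℝ, 0 < t → μ {x | C * ENNReal.ofReal t < F x} ≤
      C * (μ {x | ENNReal.ofReal t < v x} +
        (ENNReal.ofReal t)⁻¹ * ∫⁻ x in {x | ENNReal.ofReal t < u x}, u x ∂μ)) :
    ∫⁻ x, F x ^ p ∂μ ≤ C ^ p * ENNReal.ofReal p * (C *
      ((∫⁻ x, u x ^ p ∂μ) / ENNReal.ofReal (p - 1) + (∫⁻ x, v x ^ p ∂μ) / ENNReal.ofReal p)) := by
  have hlayer := lintegral_rpow_mul_setLIntegral_lt (μ := μ) (by linarith : 0 < p) hv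
    (measurable_const (a := 1))
  simp only [setLIntegral_one, one_mul] at hlayer
  rw [← hlayer]
  exact lintegral_rpow_le_of_forall_meas_lt_le hp hC₀ hC hu h

end Interpolation

section GrandMaximalBounds

variable {d : ℕ} [NeZero d] {S : CZO d} {ρ p q : ℝ}

theorem CZO.VarBdd.exists_lintegral_grandSup_rpow_le_of_lt (hb : S.VarBdd ρ q) (hρ : 2 ≤ ρ)
    (hp : 1 < p) (hpq : p < q) :
    ∃ C ≠ ∞, ∀ f : Rd d → ℝ, TailIntegrable f →
      ∫⁻ x, S.grandSup ρ f x ^ p ≤ C * ∫⁻ x, ‖f x‖ₑ ^ p := by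
  obtain ⟨C, hC, hC₀, hlevel⟩ :=
    hb.exists_volume_lt_grandSup_le_setLIntegral hρ (hp.trans hpq).le
  have hp₀ : ENNReal.ofReal (p - 1) ≠ 0 := by simpa using hp
  have hpq₀ : ENNReal.ofReal (q - p) ≠ 0 := by simpa using hpq
  refine ⟨C ^ p * ENNReal.ofReal p *
    (C * ((ENNReal.ofReal (p - 1))⁻¹ + (ENNReal.ofReal (q - p))⁻¹)), by finiteness, fun f hf => ?_⟩
  exact lintegral_rpow_le_of_forall_meas_lt_le_setLIntegral hp hpq hC₀ hC hf.measurable.enorm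
    fun t ht => hlevel f _ hf (by simpa using ht) ENNReal.ofReal_ne_top

theorem CZO.VarBdd.exists_lintegral_grandSup_rpow_le_self (hb : S.VarBdd ρ q) (hρ : 2 ≤ ρ)
    (hq : 1 < q) :
    ∃ C ≠ ∞, ∀ f : Rd d → ℝ, TailIntegrable f →
      ∫⁻ x, S.grandSup ρ f x ^ q ≤ C * ∫⁻ x, ‖f x‖ₑ ^ q := by
  obtain ⟨C, hC, hC₀, hlevel⟩ := hb.exists_volume_lt_grandSup_le_volume_lt_var hρ hq.le
  obtain ⟨A, hA, hvar⟩ := hb.exists_lintegral_var_rpow_le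
  have hq₀ : ENNReal.ofReal (q - 1) ≠ 0 := by simpa using hq
  have hq₁ : ENNReal.ofReal q ≠ 0 := by simpa using zero_lt_one.trans hq
  refine ⟨C ^ q * ENNReal.ofReal q * (C * ((ENNReal.ofReal (q - 1))⁻¹ + A / ENNReal.ofReal q)),
    by finiteness, fun f hf => ?_⟩
  calc ∫⁻ x, S.grandSup ρ f x ^ q
      ≤ C ^ q * ENNReal.ofReal q * (C * ((∫⁻ x, ‖f x‖ₑ ^ q) / ENNReal.ofReal (q - 1) +
          (∫⁻ x, S.var ρ f x ^ q) / ENNReal.ofReal q)) :=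
        lintegral_rpow_le_of_forall_meas_lt_le_meas_lt hq hC₀ hC hf.measurable.enorm
          (S.measurable_var (by linarith) hf)
          fun t ht => hlevel f _ hf (by simpa using ht) ENNReal.ofReal_ne_top
    _ ≤ C ^ q * ENNReal.ofReal q * (C * ((∫⁻ x, ‖f x‖ₑ ^ q) / ENNReal.ofReal (q - 1) +
          (A * ∫⁻ x, ‖f x‖ₑ ^ q) / ENNReal.ofReal q)) := by
        gcongr
        exact hvar f hf.measurable
    _ = _ := by
        simp only [div_eq_mul_inv]
        ring

theorem CZO.VarBdd.exists_lintegral_grandSup_rpow_le (hb : S.VarBdd ρ q) (hρ : 2 ≤ ρ)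
    (hp : 1 < p) (hpq : p ≤ q) :
    ∃ C ≠ ∞, C ≠ 0 ∧ ∀ f : Rd d → ℝ, Measurable f →
      ∫⁻ x, S.grandSup ρ f x ^ p ≤ C * ∫⁻ x, ‖f x‖ₑ ^ p := by
  obtain ⟨C, hC, hbound⟩ : ∃ C ≠ ∞, ∀ f : Rd d → ℝ, TailIntegrable f →
      ∫⁻ x, S.grandSup ρ f x ^ p ≤ C * ∫⁻ x, ‖f x‖ₑ ^ p := by
    rcases hpq.lt_or_eq with hlt | rfl
    · exact hb.exists_lintegral_grandSup_rpow_le_of_lt hρ hp hlt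
    · exact hb.exists_lintegral_grandSup_rpow_le_self hρ hp
  refine ⟨C + 1, by finiteness, by simp, fun f hf => ?_⟩
  rcases eq_or_ne (∫⁻ x, ‖f x‖ₑ ^ p) ∞ with hint | hint
  · simp [hint]
  · exact (hbound f (.of_lintegral_rpow_ne_top hp hf hint)).trans (by gcongr; exact le_self_add)

theorem CZO.VarBdd.exists_mul_volume_lt_grandSup_le (hb : S.VarBdd ρ q) (hρ : 2 ≤ ρ) (hq : 1 ≤ q) :
    ∃ C ≠ ∞, C ≠ 0 ∧ ∀ (f : Rd d → ℝ) (L : ℝ≥0∞), Measurable f →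
      L * volume {x | L < S.grandSup ρ f x} ≤ C * ∫⁻ x, ‖f x‖ₑ := by
  obtain ⟨C, hC, hC₀, hlevel⟩ := hb.exists_volume_lt_grandSup_le_setLIntegral hρ hq
  refine ⟨C * C * 2, by finiteness, by simp [hC₀], fun f L hf => ?_⟩
  rcases eq_or_ne (∫⁻ x, ‖f x‖ₑ) ∞ with hint | hint
  · simp [hint, hC₀]
  rcases eq_or_ne L 0 with rfl | hL₀
  · simp
  rcases eq_or_ne L ∞ with rfl | hL
  · simp
  obtain ⟨lam, rfl⟩ : ∃ lam, L = C * lam := ⟨C⁻¹ * L, by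
    rw [← mul_assoc, ENNReal.mul_inv_cancel hC₀ hC, one_mul]⟩
  have hlam₀ : lam ≠ 0 := right_ne_zero_of_mul hL₀
  have hlam : lam ≠ ∞ := fun h => hL (by simp [h, hC₀])
  have hsmall : ∫⁻ y in {y | ‖f y‖ₑ ≤ lam}, ‖f y‖ₑ ^ q ≤ lam ^ (q - 1) * ∫⁻ y, ‖f y‖ₑ :=
    (lintegral_rpow_le_mul_lintegral hq hlam
      (ae_restrict_mem (measurableSet_le hf.enorm measurable_const))).trans
      (by gcongr; exact Measure.restrict_le_self)
  calc C * lam * volume {x | C * lam < S.grandSup ρ f x}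
      ≤ C * lam * (C * (lam⁻¹ ^ q * (lam ^ (q - 1) * ∫⁻ y, ‖f y‖ₑ) + lam⁻¹ * ∫⁻ y, ‖f y‖ₑ)) := by
        refine mul_le_mul_right ((hlevel f lam (.of_integrable hf hint) hlam₀ hlam).trans ?_) _
        gcongr
        exact Measure.restrict_le_self
    _ = C * C * (lam * lam⁻¹) * 2 * ∫⁻ y, ‖f y‖ₑ := by
        rw [← mul_assoc (lam⁻¹ ^ q), inv_rpow_mul_rpow_sub_one hlam₀ hlam]
        ring
    _ = C * C * 2 * ∫⁻ y, ‖f y‖ₑ := by rw [ENNReal.mul_inv_cancel hlam₀ hlam, mul_one]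

end GrandMaximalBounds

/-- The global grand maximal truncated operator `M_{V_ρ(T_*)}` is bounded
on `L^p(ℝ^d)` for every `p ∈ (1,q]` and is of weak type `(1,1)`. -/
theorem grandMax_bounded
    (d : ℕ) (hd : 0 < d) (S : CZO d) (ρ q : ℝ) (hρ : 2 < ρ) (hq : 1 < q)
    (hbdd : S.VarBdd ρ q) :
    (∀ p : ℝ, 1 < p → p ≤ q → ∃ C : ℝ, 0 < C ∧ ∀ f : Rd d → ℝ, Measurable f →
        ∫⁻ x, S.grandMax ρ f x ^ p ∂volume ≤
          ENNReal.ofReal C * ∫⁻ x, ENNReal.ofReal |f x| ^ p ∂volume) ∧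
    (∃ C : ℝ, 0 < C ∧ ∀ f : Rd d → ℝ, Measurable f → ∀ t : ℝ, 0 < t →
        ENNReal.ofReal t * volume {x | ENNReal.ofReal t < S.grandMax ρ f x} ≤
          ENNReal.ofReal C * ∫⁻ x, ENNReal.ofReal |f x| ∂volume) := by
  have : NeZero d := ⟨hd.ne'⟩
  simp only [← Real.enorm_eq_ofReal_abs]
  refine ⟨fun p hp hpq => ?_, ?_⟩
  · obtain ⟨C, hC, hC₀, hstrong⟩ := hbdd.exists_lintegral_grandSup_rpow_le hρ.le hp hpq
    refine ⟨C.toReal, ENNReal.toReal_pos hC₀ hC, fun f hf => ?_⟩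
    rw [ENNReal.ofReal_toReal hC]
    refine le_trans ?_ (hstrong f hf)
    gcongr with x
    exact S.grandMax_le_grandSup ρ f x
  · obtain ⟨C, hC, hC₀, hweak⟩ := hbdd.exists_mul_volume_lt_grandSup_le hρ.le hq.le
    refine ⟨C.toReal, ENNReal.toReal_pos hC₀ hC, fun f hf t _ => ?_⟩
    rw [ENNReal.ofReal_toReal hC]
    refine le_trans ?_ (hweak f (ENNReal.ofReal t) hf)
    gcongr with x
    exact S.grandMax_le_grandSup ρ f x
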